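/- arXiv:1504.01148 — 2 statements merged into one kernel-verified Lean document; each statement's English description precedes it below -/
import Mathlib

section
/- Let (R, m) be a commutative Noetherian local ring, M a finitely generated R-module of Krull dimension n, and I an ideal of R such that dim(M/IM) = d. If cd(I,M) = n − d, then there is an isomorphism of R-modules H^d_m(H^{n−d}_I(M)) ≅ H^n_m(M), and the dimension of the support of H^{n−d}_I(M) equals d. -/
universe u

open CategoryTheory

/-- The cohomological dimension of `M` with respect to `I`:
`cd(I,M) = sup { i ∈ ℕ | H^i_I(M) ≠ 0 }`, as an element of `ℕ∞`. -/
noncomputable def cohomologicalDimension {R : Type u} [CommRing R] (I : Ideal R)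
    (M : ModuleCat.{u} R) : ℕ∞ :=
  sSup {c : ℕ∞ | ∃ i : ℕ, c = i ∧ Nontrivial ((localCohomology I i).obj M)}

section LeftDerived

variable {C : Type*} [Category* C] [Abelian C]
  {D : Type*} [Category* D] [Abelian D]
  {F G H : C ⥤ D} [F.Additive] [G.Additive] [H.Additive]

/-- The short complex of chain complexes obtained by evaluating two composable natural
transformations with zero composition on a chain complex. -/
noncomputable def evalShortComplex (α : F ⟶ G) (β : G ⟶ H) (w : α ≫ β = 0)
    (K : ChainComplex C ℕ) : ShortComplex (ChainComplex D ℕ) :=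
  ShortComplex.mk ((NatTrans.mapHomologicalComplex α _).app K)
    ((NatTrans.mapHomologicalComplex β _).app K) (by
      ext i
      exact NatTrans.congr_app w (K.X i))

/-- Functoriality of `evalShortComplex` in the chain complex. -/
noncomputable def evalShortComplexMap (α : F ⟶ G) (β : G ⟶ H) (w : α ≫ β = 0)
    {K L : ChainComplex C ℕ} (φ : K ⟶ L) :
    evalShortComplex α β w K ⟶ evalShortComplex α β w L where
  τ₁ := (F.mapHomologicalComplex _).map φ
  τ₂ := (G.mapHomologicalComplex _).map φ
  τ₃ := (H.mapHomologicalComplex _).map φ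
  comm₁₂ := (NatTrans.mapHomologicalComplex α _).naturality φ
  comm₂₃ := (NatTrans.mapHomologicalComplex β _).naturality φ

/-- The connecting morphism of `evalShortComplex`. -/
noncomputable def evalDelta (α : F ⟶ G) (β : G ⟶ H) (w : α ≫ β = 0)
    {K : ChainComplex C ℕ} (hK : (evalShortComplex α β w K).ShortExact) (n : ℕ) :
    (HomologicalComplex.homologyFunctor D _ (n + 1)).obj
        ((H.mapHomologicalComplex (ComplexShape.down ℕ)).obj K) ⟶
      (HomologicalComplex.homologyFunctor D _ n).obj
        ((F.mapHomologicalComplex (ComplexShape.down ℕ)).obj K) :=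
  hK.δ (n + 1) n (by simp)

lemma evalDelta_naturality (α : F ⟶ G) (β : G ⟶ H) (w : α ≫ β = 0)
    {K L : ChainComplex C ℕ} (hK : (evalShortComplex α β w K).ShortExact)
    (hL : (evalShortComplex α β w L).ShortExact) (φ : K ⟶ L) (n : ℕ) :
    (H.mapHomologicalComplex _ ⋙ HomologicalComplex.homologyFunctor _ _ (n + 1)).map φ ≫
        evalDelta α β w hL n =
      evalDelta α β w hK n ≫
        (F.mapHomologicalComplex _ ⋙ HomologicalComplex.homologyFunctor _ _ n).map φ :=
  (HomologicalComplex.HomologySequence.δ_naturality (evalShortComplexMap α β w φ)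
    hK hL (n + 1) n (by simp)).symm

lemma evalDelta_comp (α : F ⟶ G) (β : G ⟶ H) (w : α ≫ β = 0)
    {K : ChainComplex C ℕ} (hK : (evalShortComplex α β w K).ShortExact) (n : ℕ) :
    evalDelta α β w hK n ≫ (HomologicalComplex.homologyFunctor D (ComplexShape.down ℕ) n).map
        ((NatTrans.mapHomologicalComplex α _).app K) = 0 :=
  hK.δ_comp (n + 1) n (by simp)

lemma comp_evalDelta (α : F ⟶ G) (β : G ⟶ H) (w : α ≫ β = 0)
    {K : ChainComplex C ℕ} (hK : (evalShortComplex α β w K).ShortExact) (n : ℕ) :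
    (HomologicalComplex.homologyFunctor D (ComplexShape.down ℕ) (n + 1)).map
        ((NatTrans.mapHomologicalComplex β _).app K) ≫ evalDelta α β w hK n = 0 :=
  hK.comp_δ (n + 1) n (by simp)

lemma eval_comp (α : F ⟶ G) (β : G ⟶ H) (w : α ≫ β = 0) (K : ChainComplex C ℕ) (n : ℕ) :
    (HomologicalComplex.homologyFunctor D (ComplexShape.down ℕ) n).map
        ((NatTrans.mapHomologicalComplex α _).app K) ≫
      (HomologicalComplex.homologyFunctor D (ComplexShape.down ℕ) n).map
        ((NatTrans.mapHomologicalComplex β _).app K) = 0 := by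
  rw [← Functor.map_comp]
  exact (congrArg _ (evalShortComplex α β w K).zero).trans (Functor.map_zero _ _ _)

lemma eval_exact_delta_left (α : F ⟶ G) (β : G ⟶ H) (w : α ≫ β = 0)
    {K : ChainComplex C ℕ} (hK : (evalShortComplex α β w K).ShortExact) (n : ℕ) :
    (ShortComplex.mk _ _ (evalDelta_comp α β w hK n)).Exact :=
  hK.homology_exact₁ (n + 1) n (by simp)

lemma eval_exact_delta_right (α : F ⟶ G) (β : G ⟶ H) (w : α ≫ β = 0)
    {K : ChainComplex C ℕ} (hK : (evalShortComplex α β w K).ShortExact) (n : ℕ) :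
    (ShortComplex.mk _ _ (comp_evalDelta α β w hK n)).Exact :=
  hK.homology_exact₃ (n + 1) n (by simp)

lemma eval_exact_mid (α : F ⟶ G) (β : G ⟶ H) (w : α ≫ β = 0)
    {K : ChainComplex C ℕ} (hK : (evalShortComplex α β w K).ShortExact) (n : ℕ) :
    (ShortComplex.mk _ _ (eval_comp α β w K n)).Exact :=
  hK.homology_exact₂ n

/-- Two composable natural transformations form a short exact sequence on projective objects. -/
def ShortExactOnProjectives (α : F ⟶ G) (β : G ⟶ H) (w : α ≫ β = 0) : Prop :=
  ∀ P : C, Projective P →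
    (ShortComplex.mk (α.app P) (β.app P) (NatTrans.congr_app w P)).ShortExact

lemma ShortExactOnProjectives.evalShortComplex {α : F ⟶ G} {β : G ⟶ H} {w : α ≫ β = 0}
    (hw : ShortExactOnProjectives α β w) {X : C} (P : ProjectiveResolution X) :
    (evalShortComplex α β w P.complex).ShortExact :=
  HomologicalComplex.shortExact_of_degreewise_shortExact _ fun i =>
    hw (P.complex.X i) (P.projective i)

variable [EnoughProjectives C]

/-- The connecting natural transformation between left derived functors. -/
noncomputable def leftDerivedDelta {α : F ⟶ G} {β : G ⟶ H} {w : α ≫ β = 0}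
    (hw : ShortExactOnProjectives α β w) (n : ℕ) :
    H.leftDerived (n + 1) ⟶ F.leftDerived n where
  app X := ((projectiveResolution X).isoLeftDerivedObj H (n + 1)).hom ≫
    evalDelta α β w (hw.evalShortComplex (projectiveResolution X)) n ≫
      ((projectiveResolution X).isoLeftDerivedObj F n).inv
  naturality X Y f := by
    let φ := ProjectiveResolution.lift f (projectiveResolution X) (projectiveResolution Y)
    have comm := ProjectiveResolution.lift_commutes_zero f (projectiveResolution X)
      (projectiveResolution Y)
    rw [ProjectiveResolution.isoLeftDerivedObj_hom_naturality_assoc f _ _ φ comm]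
    simp only [Category.assoc]
    rw [ProjectiveResolution.isoLeftDerivedObj_inv_naturality f _ _ φ comm]
    congr 1
    simp only [← Category.assoc]
    exact congrArg (· ≫ _) (evalDelta_naturality α β w (hw.evalShortComplex _)
      (hw.evalShortComplex _) φ n)

lemma leftDerived_comp_eq_zero (α : F ⟶ G) (β : G ⟶ H) (w : α ≫ β = 0) (n : ℕ) (X : C) :
    (NatTrans.leftDerived α n).app X ≫ (NatTrans.leftDerived β n).app X = 0 := by
  rw [ProjectiveResolution.leftDerived_app_eq _ (projectiveResolution X),
    ProjectiveResolution.leftDerived_app_eq _ (projectiveResolution X)]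
  simp only [Category.assoc, Iso.inv_hom_id_assoc]
  rw [reassoc_of% eval_comp α β w]
  simp

lemma leftDerived_comp_delta {α : F ⟶ G} {β : G ⟶ H} {w : α ≫ β = 0}
    (hw : ShortExactOnProjectives α β w) (n : ℕ) (X : C) :
    (NatTrans.leftDerived β (n + 1)).app X ≫ (leftDerivedDelta hw n).app X = 0 := by
  rw [ProjectiveResolution.leftDerived_app_eq _ (projectiveResolution X)]
  simp only [leftDerivedDelta, Category.assoc, Iso.inv_hom_id_assoc]
  rw [reassoc_of% comp_evalDelta α β w]
  simp

lemma leftDerived_delta_comp {α : F ⟶ G} {β : G ⟶ H} {w : α ≫ β = 0}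
    (hw : ShortExactOnProjectives α β w) (n : ℕ) (X : C) :
    (leftDerivedDelta hw n).app X ≫ (NatTrans.leftDerived α n).app X = 0 := by
  rw [ProjectiveResolution.leftDerived_app_eq _ (projectiveResolution X)]
  simp only [leftDerivedDelta, Category.assoc, Iso.inv_hom_id_assoc]
  rw [reassoc_of% evalDelta_comp α β w]
  simp

lemma leftDerived_exact_mid {α : F ⟶ G} {β : G ⟶ H} {w : α ≫ β = 0}
    (hw : ShortExactOnProjectives α β w) (n : ℕ) (X : C) :
    (ShortComplex.mk _ _ (leftDerived_comp_eq_zero α β w n X)).Exact := by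
  let P := projectiveResolution X
  refine ShortComplex.exact_of_iso ?_ (eval_exact_mid α β w (hw.evalShortComplex P) n)
  refine ShortComplex.isoMk (P.isoLeftDerivedObj F n).symm (P.isoLeftDerivedObj G n).symm
    (P.isoLeftDerivedObj H n).symm ?_ ?_
  · simp [ProjectiveResolution.leftDerived_app_eq _ P]
  · simp [ProjectiveResolution.leftDerived_app_eq _ P]

lemma leftDerived_exact_right {α : F ⟶ G} {β : G ⟶ H} {w : α ≫ β = 0}
    (hw : ShortExactOnProjectives α β w) (n : ℕ) (X : C) :
    (ShortComplex.mk _ _ (leftDerived_comp_delta hw n X)).Exact := by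
  let P := projectiveResolution X
  refine ShortComplex.exact_of_iso ?_ (eval_exact_delta_right α β w (hw.evalShortComplex P) n)
  refine ShortComplex.isoMk (P.isoLeftDerivedObj G (n + 1)).symm
    (P.isoLeftDerivedObj H (n + 1)).symm (P.isoLeftDerivedObj F n).symm ?_ ?_
  · simp [ProjectiveResolution.leftDerived_app_eq _ P]
  · simp [leftDerivedDelta, P]

lemma leftDerived_exact_left {α : F ⟶ G} {β : G ⟶ H} {w : α ≫ β = 0}
    (hw : ShortExactOnProjectives α β w) (n : ℕ) (X : C) :
    (ShortComplex.mk _ _ (leftDerived_delta_comp hw n X)).Exact := by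
  let P := projectiveResolution X
  refine ShortComplex.exact_of_iso ?_ (eval_exact_delta_left α β w (hw.evalShortComplex P) n)
  refine ShortComplex.isoMk (P.isoLeftDerivedObj H (n + 1)).symm
    (P.isoLeftDerivedObj F n).symm (P.isoLeftDerivedObj G n).symm ?_ ?_
  · simp [leftDerivedDelta, P]
  · simp [ProjectiveResolution.leftDerived_app_eq _ P]

/-- A functor preserving homology has no higher left derived functors. -/
lemma isZero_leftDerived_succ_of_preservesHomology (F : C ⥤ D) [F.Additive]
    [F.PreservesHomology] (n : ℕ) (X : C) :
    Limits.IsZero ((F.leftDerived (n + 1)).obj X) := by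
  let P := projectiveResolution X
  refine Limits.IsZero.of_iso ?_ (P.isoLeftDerivedObj F (n + 1))
  have := ((HomologicalComplex.exactAt_iff _ _).1 (P.complex_exactAt_succ n)).map F
  exact (HomologicalComplex.exactAt_iff_isZero_homology _ _).1
    ((HomologicalComplex.exactAt_iff _ _).2 this)

end LeftDerived

section FilteredColimits

open Limits

lemma preservesColimitsOfShape_forget_moduleCat {R : Type u} [CommRing R] {J : Type}
    [SmallCategory J] [IsFiltered J] : PreservesColimitsOfShape J (forget (ModuleCat.{u} R)) := by
  have : PreservesFilteredColimitsOfSize.{0, 0} (forget (ModuleCat.{u} R)) :=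
    preservesFilteredColimitsOfSize_shrink.{0, u, 0, u} _
  infer_instance

/-- A filtered colimit of exact sequences of modules is exact. -/
lemma exact_of_filtered_colimit {R : Type u} [CommRing R] {J : Type} [SmallCategory J]
    [IsFiltered J] {F G H : J ⥤ ModuleCat.{u} R} (α : F ⟶ G) (β : G ⟶ H)
    {cF : Cocone F} {cG : Cocone G} {cH : Cocone H} (hF : IsColimit cF) (hG : IsColimit cG)
    (hH : IsColimit cH) (a : cF.pt ⟶ cG.pt) (b : cG.pt ⟶ cH.pt)
    (ha : ∀ j, cF.ι.app j ≫ a = α.app j ≫ cG.ι.app j)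
    (hb : ∀ j, cG.ι.app j ≫ b = β.app j ≫ cH.ι.app j)
    (hex : ∀ j, Function.Exact (α.app j) (β.app j)) : Function.Exact a b := by
  have : PreservesColimitsOfShape J (forget (ModuleCat.{u} R)) :=
    preservesColimitsOfShape_forget_moduleCat
  have ha' : ∀ j (x : F.obj j), a (cF.ι.app j x) = cG.ι.app j (α.app j x) := fun j x =>
    ConcreteCategory.congr_hom (ha j) x
  have hb' : ∀ j (x : G.obj j), b (cG.ι.app j x) = cH.ι.app j (β.app j x) := fun j x =>
    ConcreteCategory.congr_hom (hb j) x
  have hG' : ∀ {j k} (f : j ⟶ k) (x : G.obj j), cG.ι.app k (G.map f x) = cG.ι.app j x :=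
    fun f x => ConcreteCategory.congr_hom (cG.w f) x
  intro y
  constructor
  · intro hy
    obtain ⟨j, x, rfl⟩ := Concrete.isColimit_exists_rep G hG y
    rw [hb'] at hy
    obtain ⟨k, f, g, hfg⟩ := Concrete.isColimit_exists_of_rep_eq H hH
      (β.app j x) (0 : H.obj j) (by rw [hy, map_zero])
    rw [map_zero] at hfg
    have h1 : β.app k (G.map f x) = 0 := by
      rw [← hfg]
      exact ConcreteCategory.congr_hom (β.naturality f) x
    obtain ⟨z, hz⟩ := (hex k _).1 h1
    exact ⟨cF.ι.app k z, by rw [ha', hz, hG']⟩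
  · rintro ⟨x, rfl⟩
    obtain ⟨j, z, rfl⟩ := Concrete.isColimit_exists_rep F hF x
    rw [ha', hb', (hex j).apply_apply_eq_zero, map_zero]

end FilteredColimits

section ExtSequences

variable {R : Type u} [CommRing R]

lemma linearYoneda_shortExact {S : ShortComplex (ModuleCat.{u} R)} (hS : S.ShortExact)
    (P : ModuleCat.{u} R) (hP : Projective P) :
    (ShortComplex.mk (((linearYoneda R (ModuleCat.{u} R)).map S.f).app (Opposite.op P))
      (((linearYoneda R (ModuleCat.{u} R)).map S.g).app (Opposite.op P)) (by
        ext (x : P ⟶ S.X₁)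
        change ((x ≫ S.f) ≫ S.g : P ⟶ S.X₃) = 0
        simp)).ShortExact := by
  have := hS.mono_f
  have := hS.epi_g
  refine ShortComplex.ShortExact.mk' ?_ ?_ ?_
  · rw [ShortComplex.moduleCat_exact_iff]
    intro (x : P ⟶ S.X₂) (hx : x ≫ S.g = 0)
    exact ⟨hS.exact.lift x hx, hS.exact.lift_f x hx⟩
  · rw [ModuleCat.mono_iff_injective]
    intro (x : P ⟶ S.X₁) (y : P ⟶ S.X₁) (h : x ≫ S.f = y ≫ S.f)
    exact (cancel_mono S.f).1 h
  · rw [ModuleCat.epi_iff_surjective]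
    intro (x : P ⟶ S.X₃)
    exact ⟨Projective.factorThru x S.g, Projective.factorThru_comp x S.g⟩

lemma linearYoneda_rightOp_comp_eq_zero (S : ShortComplex (ModuleCat.{u} R)) :
    NatTrans.rightOp ((linearYoneda R (ModuleCat.{u} R)).map S.g) ≫
      NatTrans.rightOp ((linearYoneda R (ModuleCat.{u} R)).map S.f) = 0 := by
  ext P
  apply Quiver.Hom.unop_inj
  ext (x : P ⟶ S.X₁)
  change ((x ≫ S.f) ≫ S.g : P ⟶ S.X₃) = 0
  simp

lemma linearYoneda_shortExactOnProjectives {S : ShortComplex (ModuleCat.{u} R)}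
    (hS : S.ShortExact) : ShortExactOnProjectives
      (NatTrans.rightOp ((linearYoneda R (ModuleCat.{u} R)).map S.g))
      (NatTrans.rightOp ((linearYoneda R (ModuleCat.{u} R)).map S.f))
      (linearYoneda_rightOp_comp_eq_zero S) :=
  fun P hP => (linearYoneda_shortExact hS P hP).op

/-- The connecting homomorphism for `Ext` in the second variable. -/
noncomputable def extDelta {S : ShortComplex (ModuleCat.{u} R)} (hS : S.ShortExact) (i : ℕ) :
    (Ext R (ModuleCat.{u} R) i).flip.obj S.X₃ ⟶ (Ext R (ModuleCat.{u} R) (i + 1)).flip.obj S.X₁ :=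
  NatTrans.leftOp (leftDerivedDelta (linearYoneda_shortExactOnProjectives hS) i)

lemma ext_exact_mid {S : ShortComplex (ModuleCat.{u} R)} (hS : S.ShortExact) (i : ℕ)
    (A : (ModuleCat.{u} R)ᵒᵖ) :
    Function.Exact (((Ext R (ModuleCat.{u} R) i).flip.map S.f).app A)
      (((Ext R (ModuleCat.{u} R) i).flip.map S.g).app A) :=
  (ShortComplex.ShortExact.moduleCat_exact_iff_function_exact _).1
    (leftDerived_exact_mid (linearYoneda_shortExactOnProjectives hS) i A.unop).unop

lemma ext_exact_right {S : ShortComplex (ModuleCat.{u} R)} (hS : S.ShortExact) (i : ℕ)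
    (A : (ModuleCat.{u} R)ᵒᵖ) :
    Function.Exact (((Ext R (ModuleCat.{u} R) i).flip.map S.g).app A)
      ((extDelta hS i).app A) :=
  (ShortComplex.ShortExact.moduleCat_exact_iff_function_exact _).1
    (leftDerived_exact_left (linearYoneda_shortExactOnProjectives hS) i A.unop).unop

lemma ext_exact_left {S : ShortComplex (ModuleCat.{u} R)} (hS : S.ShortExact) (i : ℕ)
    (A : (ModuleCat.{u} R)ᵒᵖ) :
    Function.Exact ((extDelta hS i).app A)
      (((Ext R (ModuleCat.{u} R) (i + 1)).flip.map S.f).app A) :=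
  (ShortComplex.ShortExact.moduleCat_exact_iff_function_exact _).1
    (leftDerived_exact_right (linearYoneda_shortExactOnProjectives hS) i A.unop).unop

lemma isZero_ext_succ_of_injective (A : (ModuleCat.{u} R)ᵒᵖ) (E : ModuleCat.{u} R)
    [hE : Injective E] (i : ℕ) :
    Limits.IsZero (((Ext R (ModuleCat.{u} R) (i + 1)).obj A).obj E) := by
  let Y := (linearYoneda R (ModuleCat.{u} R)).obj E
  have : Y.rightOp.PreservesHomology := by
    refine Functor.preservesHomology_of_map_exact _ fun S hS => ?_
    rw [← ShortComplex.exact_unop_iff]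
    refine (ShortComplex.moduleCat_exact_iff _).2 ?_
    intro (x : S.X₂ ⟶ E) (hx : S.f ≫ x = 0)
    exact ⟨hS.descToInjective x hx, hS.comp_descToInjective x hx⟩
  exact (isZero_leftDerived_succ_of_preservesHomology Y.rightOp i A.unop).unop

end ExtSequences

section LocalCohomologySequence

open Limits localCohomology

variable {R : Type u} [CommRing R] (I : Ideal R)

/-- The direct system `t ↦ Ext^i(R/I^t, M)` computing local cohomology. -/
noncomputable def localCohomologySystem (i : ℕ) (M : ModuleCat.{u} R) :
    (ℕᵒᵖ)ᵒᵖ ⥤ ModuleCat.{u} R :=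
  diagram (idealPowersDiagram I) i ⋙ (evaluation _ _).obj M

/-- The cocone exhibiting local cohomology as a colimit. -/
noncomputable def localCohomologyCocone (i : ℕ) (M : ModuleCat.{u} R) :
    Cocone (localCohomologySystem I i M) :=
  ((evaluation _ _).obj M).mapCocone (colimit.cocone (diagram (idealPowersDiagram I) i))

/-- The cocone `localCohomologyCocone` is a colimit cocone. -/
noncomputable def localCohomologyIsColimit (i : ℕ) (M : ModuleCat.{u} R) :
    IsColimit (localCohomologyCocone I i M) :=
  isColimitOfPreserves _ (colimit.isColimit _)

/-- Functoriality of `localCohomologySystem`. -/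
noncomputable def localCohomologySystemMap (i : ℕ) {M N : ModuleCat.{u} R} (f : M ⟶ N) :
    localCohomologySystem I i M ⟶ localCohomologySystem I i N :=
  Functor.whiskerLeft _ ((evaluation _ _).map f)

lemma localCohomologyCocone_map (i : ℕ) {M N : ModuleCat.{u} R} (f : M ⟶ N) (j : (ℕᵒᵖ)ᵒᵖ) :
    (localCohomologyCocone I i M).ι.app j ≫ (localCohomology I i).map f =
      (localCohomologySystemMap I i f).app j ≫ (localCohomologyCocone I i N).ι.app j :=
  (((colimit.cocone (diagram (idealPowersDiagram I) i)).ι.app j).naturality f).symm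

/-- The connecting homomorphisms of the `Ext` groups, as a map of direct systems. -/
noncomputable def localCohomologySystemDelta {S : ShortComplex (ModuleCat.{u} R)}
    (hS : S.ShortExact) (i : ℕ) :
    localCohomologySystem I i S.X₃ ⟶ localCohomologySystem I (i + 1) S.X₁ where
  app j := (extDelta hS i).app ((ringModIdeals (idealPowersDiagram I)).op.obj j)
  naturality _ _ f := (extDelta hS i).naturality ((ringModIdeals (idealPowersDiagram I)).op.map f)

/-- The connecting homomorphism of local cohomology. -/
noncomputable def localCohomologyDelta {S : ShortComplex (ModuleCat.{u} R)}
    (hS : S.ShortExact) (i : ℕ) :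
    (localCohomology I i).obj S.X₃ ⟶ (localCohomology I (i + 1)).obj S.X₁ :=
  (localCohomologyIsColimit I i S.X₃).map (localCohomologyCocone I (i + 1) S.X₁)
    (localCohomologySystemDelta I hS i)

lemma localCohomologyCocone_delta {S : ShortComplex (ModuleCat.{u} R)}
    (hS : S.ShortExact) (i : ℕ) (j : (ℕᵒᵖ)ᵒᵖ) :
    (localCohomologyCocone I i S.X₃).ι.app j ≫ localCohomologyDelta I hS i =
      (localCohomologySystemDelta I hS i).app j ≫ (localCohomologyCocone I (i + 1) S.X₁).ι.app j :=
  (localCohomologyIsColimit I i S.X₃).ι_map _ _ _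

lemma localCohomology_exact_mid {S : ShortComplex (ModuleCat.{u} R)} (hS : S.ShortExact) (i : ℕ) :
    Function.Exact ((localCohomology I i).map S.f) ((localCohomology I i).map S.g) :=
  exact_of_filtered_colimit (localCohomologySystemMap I i S.f) (localCohomologySystemMap I i S.g)
    (localCohomologyIsColimit I i _) (localCohomologyIsColimit I i _)
    (localCohomologyIsColimit I i _) _ _ (localCohomologyCocone_map I i S.f)
    (localCohomologyCocone_map I i S.g) fun _ => ext_exact_mid hS i _

lemma localCohomology_exact_right {S : ShortComplex (ModuleCat.{u} R)} (hS : S.ShortExact)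
    (i : ℕ) : Function.Exact ((localCohomology I i).map S.g) (localCohomologyDelta I hS i) :=
  exact_of_filtered_colimit (localCohomologySystemMap I i S.g) (localCohomologySystemDelta I hS i)
    (localCohomologyIsColimit I i _) (localCohomologyIsColimit I i _)
    (localCohomologyIsColimit I _ _) _ _ (localCohomologyCocone_map I i S.g)
    (localCohomologyCocone_delta I hS i) fun _ => ext_exact_right hS i _

lemma localCohomology_exact_left {S : ShortComplex (ModuleCat.{u} R)} (hS : S.ShortExact)
    (i : ℕ) : Function.Exact (localCohomologyDelta I hS i) ((localCohomology I (i + 1)).map S.f) :=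
  exact_of_filtered_colimit (localCohomologySystemDelta I hS i)
    (localCohomologySystemMap I (i + 1) S.f)
    (localCohomologyIsColimit I i _) (localCohomologyIsColimit I _ _)
    (localCohomologyIsColimit I _ _) _ _ (localCohomologyCocone_delta I hS i)
    (localCohomologyCocone_map I (i + 1) S.f) fun _ => ext_exact_left hS i _

lemma localCohomologyCocone_jointly_surjective (i : ℕ) (M : ModuleCat.{u} R)
    (x : (localCohomology I i).obj M) :
    ∃ (j : (ℕᵒᵖ)ᵒᵖ) (y : (localCohomologySystem I i M).obj j),
      (localCohomologyCocone I i M).ι.app j y = x := by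
  have : PreservesColimitsOfShape (ℕᵒᵖ)ᵒᵖ (forget (ModuleCat.{u} R)) :=
    preservesColimitsOfShape_forget_moduleCat
  exact Concrete.isColimit_exists_rep _ (localCohomologyIsColimit I i M) x

lemma subsingleton_localCohomology_succ_of_injective (i : ℕ) (E : ModuleCat.{u} R) [Injective E] :
    Subsingleton ((localCohomology I (i + 1)).obj E) := by
  refine subsingleton_of_forall_eq 0 fun x => ?_
  obtain ⟨j, y, rfl⟩ := localCohomologyCocone_jointly_surjective I (i + 1) E x
  have := ModuleCat.subsingleton_of_isZero (isZero_ext_succ_of_injective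
    ((ringModIdeals (idealPowersDiagram I)).op.obj j) E i)
  have hy : y = 0 := Subsingleton.elim (α := (((Ext R (ModuleCat.{u} R) (i + 1)).obj
    ((ringModIdeals (idealPowersDiagram I)).op.obj j)).obj E)) y 0
  rw [hy, map_zero]
  rfl

end LocalCohomologySequence

section ZerothDerived

variable {C : Type*} [Category* C] [Abelian C] [HasProjectiveResolutions C]
  {D : Type*} [Category* D] [Abelian D]
  {F G : C ⥤ D} [F.Additive] [G.Additive]

lemma leftDerived_zero_comp_fromLeftDerivedZero (α : F ⟶ G) (X : C) :
    (NatTrans.leftDerived α 0).app X ≫ G.fromLeftDerivedZero.app X =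
      F.fromLeftDerivedZero.app X ≫ α.app X := by
  let P := projectiveResolution X
  rw [P.fromLeftDerivedZero_eq F, P.fromLeftDerivedZero_eq G, P.leftDerived_app_eq α 0]
  simp only [Category.assoc, Iso.inv_hom_id_assoc]
  congr 1
  have h := HomologicalComplex.homologyι_naturality
    ((NatTrans.mapHomologicalComplex α (ComplexShape.down ℕ)).app P.complex) 0
  have h2 : HomologicalComplex.opcyclesMap
      ((NatTrans.mapHomologicalComplex α (ComplexShape.down ℕ)).app P.complex) 0 ≫
      P.fromLeftDerivedZero' G = P.fromLeftDerivedZero' F ≫ α.app X := by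
    rw [← cancel_epi (HomologicalComplex.pOpcycles _ _),
      HomologicalComplex.p_opcyclesMap_assoc,
      ProjectiveResolution.pOpcycles_comp_fromLeftDerivedZero',
      ProjectiveResolution.pOpcycles_comp_fromLeftDerivedZero'_assoc]
    exact (α.naturality (P.π.f 0)).symm
  exact (reassoc_of% h) _ |>.trans ((congrArg _ h2).trans (Category.assoc _ _ _).symm)
end ZerothDerived

section ZerothLocalCohomology

open Limits localCohomology

variable {R : Type u} [CommRing R]

instance preservesFiniteColimits_linearYoneda_rightOp (M : ModuleCat.{u} R) :
    PreservesFiniteColimits ((linearYoneda R (ModuleCat.{u} R)).obj M).rightOp := by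
  have : PreservesFiniteLimits ((linearYoneda R (ModuleCat.{u} R)).obj M) := by
    have h : PreservesLimitsOfSize.{0, 0} ((linearYoneda R (ModuleCat.{u} R)).obj M ⋙
        forget (ModuleCat.{u} R)) :=
      inferInstanceAs (PreservesLimitsOfSize.{0, 0} (yoneda.obj M))
    have : PreservesLimitsOfSize.{0, 0} ((linearYoneda R (ModuleCat.{u} R)).obj M) :=
      preservesLimits_of_reflects_of_preserves _ (forget (ModuleCat.{u} R))
    exact PreservesLimitsOfSize.preservesFiniteLimits _
  exact preservesFiniteColimits_rightOp _

/-- The isomorphism between `Hom` and `Ext^0`. -/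
noncomputable def homIsoExtZero (M : ModuleCat.{u} R) :
    (linearYoneda R (ModuleCat.{u} R)).obj M ≅ (Ext R (ModuleCat.{u} R) 0).flip.obj M where
  hom := NatTrans.leftOp ((linearYoneda R (ModuleCat.{u} R)).obj M).rightOp.fromLeftDerivedZero
  inv := NatTrans.leftOp
    ((linearYoneda R (ModuleCat.{u} R)).obj M).rightOp.leftDerivedZeroIsoSelf.inv
  hom_inv_id := by
    ext1
    ext1 A
    exact congrArg Quiver.Hom.unop (Functor.leftDerivedZeroIsoSelf_inv_hom_id_app
      ((linearYoneda R (ModuleCat.{u} R)).obj M).rightOp A.unop)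
  inv_hom_id := by
    ext1
    ext1 A
    exact congrArg Quiver.Hom.unop (Functor.leftDerivedZeroIsoSelf_hom_inv_id_app
      ((linearYoneda R (ModuleCat.{u} R)).obj M).rightOp A.unop)

lemma homIsoExtZero_naturality {M N : ModuleCat.{u} R} (f : M ⟶ N) :
    (homIsoExtZero M).hom ≫ (Ext R (ModuleCat.{u} R) 0).flip.map f =
      (linearYoneda R (ModuleCat.{u} R)).map f ≫ (homIsoExtZero N).hom := by
  ext1
  ext1 A
  exact congrArg Quiver.Hom.unop (leftDerived_zero_comp_fromLeftDerivedZero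
    (NatTrans.rightOp ((linearYoneda R (ModuleCat.{u} R)).map f)) A.unop)

variable (I : Ideal R)

/-- Evaluation at `1` of homomorphisms `R/I^t ⟶ M`. -/
noncomputable def evalOneCocone (M : ModuleCat.{u} R) :
    Cocone ((ringModIdeals (idealPowersDiagram I)).op ⋙
      (linearYoneda R (ModuleCat.{u} R)).obj M) where
  pt := M
  ι :=
    { app j := ModuleCat.ofHom
        { toFun (f : (ringModIdeals (idealPowersDiagram I)).obj j.unop ⟶ M) :=
            f.hom (Ideal.Quotient.mk _ 1 : R ⧸ (idealPowersDiagram I).obj j.unop)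
          map_add' _ _ := rfl
          map_smul' _ _ := rfl }
      naturality _ _ _ := by
        ext f
        rfl }

/-- The systems of modules `Hom(R/I^t, M)` and `Ext^0(R/I^t, M)` are isomorphic. -/
noncomputable def homSystemIso (M : ModuleCat.{u} R) :
    (ringModIdeals (idealPowersDiagram I)).op ⋙ (linearYoneda R (ModuleCat.{u} R)).obj M ≅
      localCohomologySystem I 0 M :=
  Functor.isoWhiskerLeft (ringModIdeals (idealPowersDiagram I)).op (homIsoExtZero M)

/-- The inclusion of the zeroth local cohomology module. -/
noncomputable def localCohomologyZeroι (M : ModuleCat.{u} R) :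
    (localCohomology I 0).obj M ⟶ M :=
  (localCohomologyIsColimit I 0 M).desc
    ((Cocone.precompose (homSystemIso I M).inv).obj (evalOneCocone I M))

lemma homSystemIso_ι_localCohomologyZeroι (M : ModuleCat.{u} R) (j : (ℕᵒᵖ)ᵒᵖ) :
    (homSystemIso I M).hom.app j ≫ (localCohomologyCocone I 0 M).ι.app j ≫
      localCohomologyZeroι I M = (evalOneCocone I M).ι.app j := by
  refine (congrArg (fun t => (homSystemIso I M).hom.app j ≫ t)
    ((localCohomologyIsColimit I 0 M).fac _ j)).trans ?_
  exact (homSystemIso I M).hom_inv_id_app_assoc j _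

lemma exists_homSystem_eq (M : ModuleCat.{u} R) (x : (localCohomology I 0).obj M) :
    ∃ (j : (ℕᵒᵖ)ᵒᵖ) (f : (ringModIdeals (idealPowersDiagram I)).obj j.unop ⟶ M),
      (localCohomologyCocone I 0 M).ι.app j ((homSystemIso I M).hom.app j f) = x := by
  obtain ⟨j, y, rfl⟩ := localCohomologyCocone_jointly_surjective I 0 M x
  exact ⟨j, (homSystemIso I M).inv.app j y, congrArg _
    (ConcreteCategory.congr_hom ((homSystemIso I M).inv_hom_id_app j) y)⟩

lemma localCohomologyZeroι_apply (M : ModuleCat.{u} R) (j : (ℕᵒᵖ)ᵒᵖ)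
    (f : (ringModIdeals (idealPowersDiagram I)).obj j.unop ⟶ M) :
    localCohomologyZeroι I M
      ((localCohomologyCocone I 0 M).ι.app j ((homSystemIso I M).hom.app j f)) =
      f.hom (Ideal.Quotient.mk _ 1 : R ⧸ (idealPowersDiagram I).obj j.unop) :=
  ConcreteCategory.congr_hom (homSystemIso_ι_localCohomologyZeroι I M j) f

lemma localCohomologyZeroι_injective (M : ModuleCat.{u} R) :
    Function.Injective (localCohomologyZeroι I M) := by
  rw [injective_iff_map_eq_zero]
  intro x hx
  obtain ⟨j, f, rfl⟩ := exists_homSystem_eq I M x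
  rw [localCohomologyZeroι_apply] at hx
  have : f = 0 := by
    ext y
    obtain ⟨r, rfl⟩ := Ideal.Quotient.mk_surjective
      (y : R ⧸ (idealPowersDiagram I).obj j.unop)
    have h : (Ideal.Quotient.mk ((idealPowersDiagram I).obj j.unop) r) =
      r • Ideal.Quotient.mk ((idealPowersDiagram I).obj j.unop) 1 := by
      rw [← Ideal.Quotient.mk_eq_mk, ← Ideal.Quotient.mk_eq_mk, ← Submodule.Quotient.mk_smul,
        smul_eq_mul, mul_one]
    rw [h]
    refine (f.hom.map_smul r _).trans ?_
    rw [hx, smul_zero]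
    rfl
  rw [this]
  exact (congrArg _ (map_zero ((homSystemIso I M).hom.app j).hom)).trans (map_zero _)

lemma mem_range_localCohomologyZeroι (M : ModuleCat.{u} R) (m : M) :
    m ∈ Set.range (localCohomologyZeroι I M) ↔ ∃ t : ℕ, ∀ a ∈ I ^ t, a • m = 0 := by
  constructor
  · rintro ⟨x, rfl⟩
    obtain ⟨j, f, rfl⟩ := exists_homSystem_eq I M x
    rw [localCohomologyZeroι_apply]
    refine ⟨j.unop.unop, fun a ha => ?_⟩
    have h : a • (Ideal.Quotient.mk ((idealPowersDiagram I).obj j.unop) 1) = 0 := by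
      rw [← Ideal.Quotient.mk_eq_mk, ← Submodule.Quotient.mk_smul, smul_eq_mul, mul_one,
        Ideal.Quotient.mk_eq_mk, Ideal.Quotient.eq_zero_iff_mem]
      exact ha
    refine (f.hom.map_smul a _).symm.trans ?_
    exact (congrArg f.hom h).trans (map_zero f.hom)
  · rintro ⟨t, ht⟩
    let g : R ⧸ I ^ t →ₗ[R] M := (I ^ t).liftQ (LinearMap.toSpanSingleton R M m) fun a ha => ht a ha
    refine ⟨_, (localCohomologyZeroι_apply I M (Opposite.op (Opposite.op t))
      (ModuleCat.ofHom g)).trans ?_⟩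
    exact one_smul R m

lemma localCohomologyZeroι_naturality {M N : ModuleCat.{u} R} (f : M ⟶ N)
    (x : (localCohomology I 0).obj M) :
    localCohomologyZeroι I N ((localCohomology I 0).map f x) = f (localCohomologyZeroι I M x) := by
  obtain ⟨j, g, rfl⟩ := exists_homSystem_eq I M x
  rw [localCohomologyZeroι_apply]
  have h1 := ConcreteCategory.congr_hom (localCohomologyCocone_map I 0 f j)
    ((homSystemIso I M).hom.app j g)
  have h2 := ConcreteCategory.congr_hom (NatTrans.congr_app (homIsoExtZero_naturality f)
    ((ringModIdeals (idealPowersDiagram I)).op.obj j)) g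
  refine (congrArg (localCohomologyZeroι I N) (h1.trans
    (congrArg ((localCohomologyCocone I 0 N).ι.app j) h2))).trans ?_
  exact localCohomologyZeroι_apply I N j (g ≫ f)

end ZerothLocalCohomology

section LocCoh

variable {R : Type u} [CommRing R] (I : Ideal R) (i : ℕ)

/-- Local cohomology of an unbundled module. -/
def LocCoh (M : Type u) [AddCommGroup M] [Module R M] : Type u :=
  (localCohomology I i).obj (ModuleCat.of R M)

namespace LocCoh

variable (M N P : Type u) [AddCommGroup M] [Module R M] [AddCommGroup N] [Module R N]
  [AddCommGroup P] [Module R P]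

noncomputable instance : AddCommGroup (LocCoh I i M) :=
  inferInstanceAs (AddCommGroup ((localCohomology I i).obj (ModuleCat.of R M)))

noncomputable instance : Module R (LocCoh I i M) :=
  inferInstanceAs (Module R ((localCohomology I i).obj (ModuleCat.of R M)))

variable {M N P}

/-- Functoriality of local cohomology. -/
noncomputable def map (f : M →ₗ[R] N) : LocCoh I i M →ₗ[R] LocCoh I i N :=
  ((localCohomology I i).map (ModuleCat.ofHom f)).hom

lemma map_id : map I i (LinearMap.id : M →ₗ[R] M) = LinearMap.id := by
  have h := (localCohomology I i).map_id (ModuleCat.of R M)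
  exact congrArg ModuleCat.Hom.hom h

lemma map_comp (f : M →ₗ[R] N) (g : N →ₗ[R] P) :
    map I i (g ∘ₗ f) = map I i g ∘ₗ map I i f := by
  have h := (localCohomology I i).map_comp (ModuleCat.ofHom f) (ModuleCat.ofHom g)
  exact congrArg ModuleCat.Hom.hom h

lemma map_map (f : M →ₗ[R] N) (g : N →ₗ[R] P) (x : LocCoh I i M) :
    map I i g (map I i f x) = map I i (g ∘ₗ f) x := by
  rw [map_comp]
  rfl

/-- A short exact sequence of unbundled modules as a short complex. -/
noncomputable def shortComplex {f : M →ₗ[R] N} {g : N →ₗ[R] P} (hfg : Function.Exact f g) :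
    ShortComplex (ModuleCat.{u} R) :=
  ShortComplex.mk (ModuleCat.ofHom f) (ModuleCat.ofHom g) (by
    ext x
    exact hfg.apply_apply_eq_zero x)

lemma shortExact {f : M →ₗ[R] N} {g : N →ₗ[R] P} (hf : Function.Injective f)
    (hg : Function.Surjective g) (hfg : Function.Exact f g) : (shortComplex hfg).ShortExact :=
  ShortComplex.ShortExact.mk' ((ShortComplex.ShortExact.moduleCat_exact_iff_function_exact _).2 hfg)
    ((ModuleCat.mono_iff_injective _).2 hf) ((ModuleCat.epi_iff_surjective _).2 hg)

/-- The connecting homomorphism. -/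
noncomputable def delta {f : M →ₗ[R] N} {g : N →ₗ[R] P} (hf : Function.Injective f)
    (hg : Function.Surjective g) (hfg : Function.Exact f g) :
    LocCoh I i P →ₗ[R] LocCoh I (i + 1) M :=
  (localCohomologyDelta I (shortExact hf hg hfg) i).hom

lemma exact_mid {f : M →ₗ[R] N} {g : N →ₗ[R] P} (hf : Function.Injective f)
    (hg : Function.Surjective g) (hfg : Function.Exact f g) :
    Function.Exact (map I i f) (map I i g) :=
  localCohomology_exact_mid I (shortExact hf hg hfg) i

lemma exact_right {f : M →ₗ[R] N} {g : N →ₗ[R] P} (hf : Function.Injective f)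
    (hg : Function.Surjective g) (hfg : Function.Exact f g) :
    Function.Exact (map I i g) (delta I i hf hg hfg) :=
  localCohomology_exact_right I (shortExact hf hg hfg) i

lemma exact_left {f : M →ₗ[R] N} {g : N →ₗ[R] P} (hf : Function.Injective f)
    (hg : Function.Surjective g) (hfg : Function.Exact f g) :
    Function.Exact (delta I i hf hg hfg) (map I (i + 1) f) :=
  localCohomology_exact_left I (shortExact hf hg hfg) i

instance subsingleton_succ_of_injective (E : Type u) [AddCommGroup E] [Module R E]
    [Module.Injective R E] : Subsingleton (LocCoh I (i + 1) E) := by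
  have := Module.injective_object_of_injective_module R E
  exact subsingleton_localCohomology_succ_of_injective I i (ModuleCat.of R E)

variable (M) in
/-- The inclusion `H^0_I(M) → M`. -/
noncomputable def zeroι : LocCoh I 0 M →ₗ[R] M :=
  (localCohomologyZeroι I (ModuleCat.of R M)).hom

variable (M) in
lemma zeroι_injective : Function.Injective (zeroι I M) :=
  localCohomologyZeroι_injective I (ModuleCat.of R M)

lemma mem_range_zeroι {m : M} :
    m ∈ LinearMap.range (zeroι I M) ↔ ∃ t : ℕ, ∀ a ∈ I ^ t, a • m = 0 :=
  mem_range_localCohomologyZeroι I (ModuleCat.of R M) m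

lemma zeroι_map (f : M →ₗ[R] N) (x : LocCoh I 0 M) :
    zeroι I N (map I 0 f x) = f (zeroι I M x) :=
  localCohomologyZeroι_naturality I (ModuleCat.ofHom f) x

variable (M) in
/-- Local cohomology only depends on the radical of the ideal. -/
noncomputable def equivOfRadicalEq [IsNoetherianRing R] {I J : Ideal R}
    (h : I.radical = J.radical) : LocCoh I i M ≃ₗ[R] LocCoh J i M :=
  ((localCohomology.isoOfSameRadical h i).app (ModuleCat.of R M)).toLinearEquiv

lemma map_zero_injective {f : M →ₗ[R] N} (hf : Function.Injective f) :
    Function.Injective (map I 0 f) := by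
  intro x y hxy
  apply zeroι_injective I M
  apply hf
  rw [← zeroι_map, ← zeroι_map, hxy]

end LocCoh

variable (R) in
/-- Every module embeds in an injective module with the same universe. -/
lemma exists_injective_shortExact (M : Type u) [AddCommGroup M] [Module R M] :
    ∃ (E C : Type u) (_ : AddCommGroup E) (_ : Module R E) (_ : AddCommGroup C) (_ : Module R C)
      (f : M →ₗ[R] E) (g : E →ₗ[R] C), Module.Injective R E ∧ Function.Injective f ∧
      Function.Surjective g ∧ Function.Exact f g := by
  let E := Injective.under (ModuleCat.of R M)
  let f : M →ₗ[R] E := (Injective.ι (ModuleCat.of R M)).hom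
  have : Injective (ModuleCat.of R E) :=
    inferInstanceAs (Injective (Injective.under (ModuleCat.of R M)))
  exact ⟨E, E ⧸ LinearMap.range f, inferInstance, inferInstance, inferInstance, inferInstance, f,
    Submodule.mkQ _, Module.injective_module_of_injective_object R E,
    (ModuleCat.mono_iff_injective (Injective.ι (ModuleCat.of R M))).1 inferInstance,
    Submodule.mkQ_surjective _, LinearMap.exact_map_mkQ_range f⟩

end LocCoh

section Lifting

variable {R : Type*} [CommRing R] {K X Y : Type*} [AddCommGroup K] [Module R K]
  [AddCommGroup X] [Module R X] [AddCommGroup Y] [Module R Y]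

lemma LinearMap.exists_comp_eq_of_surjective (p : K →ₗ[R] X) (q : K →ₗ[R] Y)
    (hp : Function.Surjective p) (h : ∀ z, p z = 0 → q z = 0) :
    ∃ φ : X →ₗ[R] Y, ∀ z, φ (p z) = q z := by
  refine ⟨(LinearMap.ker p).liftQ q h ∘ₗ (p.quotKerEquivOfSurjective hp).symm.toLinearMap,
    fun z => ?_⟩
  have : (p.quotKerEquivOfSurjective hp).symm (p z) = Submodule.Quotient.mk z := by
    rw [LinearEquiv.symm_apply_eq]
    rfl
  rw [LinearMap.comp_apply, LinearEquiv.coe_coe, this]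
  exact Submodule.liftQ_apply _ _ _

lemma LinearMap.exists_comp_eq_of_injective (j : X →ₗ[R] Y) (q : K →ₗ[R] Y)
    (hj : Function.Injective j) (h : ∀ z, q z ∈ LinearMap.range j) :
    ∃ φ : K →ₗ[R] X, ∀ z, j (φ z) = q z := by
  refine ⟨(LinearEquiv.ofInjective j hj).symm.toLinearMap ∘ₗ q.codRestrict _ h, fun z => ?_⟩
  have := LinearEquiv.apply_symm_apply (LinearEquiv.ofInjective j hj) (q.codRestrict _ h z)
  exact congrArg Subtype.val this

end Lifting

section LocQuot

variable {R : Type u} [CommRing R] (x : R)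

/-- The cokernel `N_x / N` of the localization map `N → N_x`. -/
abbrev LocQuot (N : Type u) [AddCommGroup N] [Module R N] : Type u :=
  LocalizedModule (Submonoid.powers x) N ⧸
    LinearMap.range (LocalizedModule.mkLinearMap (Submonoid.powers x) N)

namespace LocQuot

variable {A B C : Type u} [AddCommGroup A] [Module R A] [AddCommGroup B] [Module R B]
  [AddCommGroup C] [Module R C]

/-- The class of `n / x ^ k`. -/
noncomputable def frac (k : ℕ) (n : A) : LocQuot x A :=
  Submodule.Quotient.mk (LocalizedModule.mk n ⟨x ^ k, k, rfl⟩)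

lemma exists_eq_frac (z : LocQuot x A) : ∃ k n, z = frac x k n := by
  obtain ⟨w, rfl⟩ := Submodule.Quotient.mk_surjective _ z
  induction w using LocalizedModule.induction_on with
  | _ n s =>
    obtain ⟨_, k, rfl⟩ := s
    exact ⟨k, n, rfl⟩

lemma frac_eq_zero_iff {k : ℕ} {n : A} :
    frac x k n = 0 ↔ ∃ (l : ℕ) (n' : A), x ^ l • n = x ^ (l + k) • n' := by
  rw [frac, Submodule.Quotient.mk_eq_zero, LinearMap.mem_range]
  simp only [LocalizedModule.mkLinearMap_apply, LocalizedModule.mk_eq]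
  constructor
  · rintro ⟨n', ⟨_, l, rfl⟩, h⟩
    refine ⟨l, n', ?_⟩
    simp only [Submonoid.smul_def, one_smul, smul_smul] at h
    rw [pow_add]
    exact h.symm
  · rintro ⟨l, n', h⟩
    refine ⟨n', ⟨x ^ l, l, rfl⟩, ?_⟩
    simp only [Submonoid.smul_def, one_smul, smul_smul]
    rw [h, pow_add]

lemma subsingleton_iff : Subsingleton (LocQuot x A) ↔
    ∀ (k : ℕ) (n : A), ∃ (l : ℕ) (n' : A), x ^ l • n = x ^ (l + k) • n' := by
  constructor
  · intro h k n
    exact (frac_eq_zero_iff x).1 (Subsingleton.elim _ _)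
  · intro h
    refine subsingleton_of_forall_eq 0 fun z => ?_
    obtain ⟨k, n, rfl⟩ := exists_eq_frac x z
    exact (frac_eq_zero_iff x).2 (h k n)

lemma frac_add (k : ℕ) (m n : A) : frac x k (m + n) = frac x k m + frac x k n := by
  rw [frac, frac, frac, ← Submodule.Quotient.mk_add, LocalizedModule.mk_add_mk]
  congr 1
  rw [LocalizedModule.mk_eq]
  exact ⟨1, by simp [Submonoid.smul_def, smul_smul, smul_add]⟩

lemma frac_pow_smul (k l : ℕ) (n : A) : frac x (l + k) (x ^ l • n) = frac x k n := by
  rw [frac, frac]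
  congr 1
  rw [LocalizedModule.mk_eq]
  exact ⟨1, by simp [Submonoid.smul_def, smul_smul, pow_add, mul_comm]⟩

lemma frac_pow_smul_self (k : ℕ) (n : A) : frac x k (x ^ k • n) = 0 :=
  (frac_eq_zero_iff x).2 ⟨0, n, by simp⟩

/-- Functoriality of `LocQuot`. -/
noncomputable def map (f : A →ₗ[R] B) : LocQuot x A →ₗ[R] LocQuot x B :=
  Submodule.mapQ _ _ (IsLocalizedModule.map (Submonoid.powers x)
    (LocalizedModule.mkLinearMap (Submonoid.powers x) A)
    (LocalizedModule.mkLinearMap (Submonoid.powers x) B) f) (by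
      rintro _ ⟨a, rfl⟩
      exact ⟨f a, (IsLocalizedModule.map_apply (Submonoid.powers x) _ _ f a).symm⟩)

lemma map_frac (f : A →ₗ[R] B) (k : ℕ) (a : A) : map x f (frac x k a) = frac x k (f a) := by
  rw [map, frac, Submodule.mapQ_apply, frac]
  congr 1
  exact IsLocalizedModule.map_LocalizedModules _ _ _ _

/-- Isomorphic modules have isomorphic `LocQuot`. -/
noncomputable def mapEquiv (e : A ≃ₗ[R] B) : LocQuot x A ≃ₗ[R] LocQuot x B :=
  LinearEquiv.ofLinearMap (map x e.toLinearMap) (map x e.symm.toLinearMap)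
    (by
      ext z
      obtain ⟨k, n, hz⟩ := exists_eq_frac x (Submodule.Quotient.mk z)
      simp [hz, map_frac])
    (by
      ext z
      obtain ⟨k, n, hz⟩ := exists_eq_frac x (Submodule.Quotient.mk z)
      simp [hz, map_frac])

lemma map_surjective {f : A →ₗ[R] B} (hf : Function.Surjective f) :
    Function.Surjective (map x f) := by
  intro z
  obtain ⟨k, n, rfl⟩ := exists_eq_frac x z
  obtain ⟨a, rfl⟩ := hf n
  exact ⟨frac x k a, map_frac x f k a⟩

lemma map_injective_of_exact {f : A →ₗ[R] B} {g : B →ₗ[R] C} (hfg : Function.Exact f g)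
    (hg : Function.Surjective g) [Subsingleton (LocQuot x A)] :
    Function.Injective (map x g) := by
  rw [injective_iff_map_eq_zero]
  intro z hz
  obtain ⟨k, b, rfl⟩ := exists_eq_frac x z
  rw [map_frac, frac_eq_zero_iff] at hz
  obtain ⟨l, c, hc⟩ := hz
  obtain ⟨b', rfl⟩ := hg c
  obtain ⟨a, ha⟩ := (hfg (x ^ l • b - x ^ (l + k) • b')).1 (by simp [hc])
  rw [eq_sub_iff_add_eq] at ha
  rw [← frac_pow_smul x k l, ← ha, frac_add, frac_pow_smul_self, ← map_frac,
    Subsingleton.elim (frac x (l + k) a) 0]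
  simp

/-- If `LocQuot x A` vanishes then `LocQuot x B` is isomorphic to `LocQuot x (B / A)`. -/
noncomputable def equivOfExact {f : A →ₗ[R] B} {g : B →ₗ[R] C} (hfg : Function.Exact f g)
    (hg : Function.Surjective g) [Subsingleton (LocQuot x A)] : LocQuot x B ≃ₗ[R] LocQuot x C :=
  LinearEquiv.ofBijective (map x g) ⟨map_injective_of_exact x hfg hg, map_surjective x hg⟩

end LocQuot

/-- A form of the snake lemma for the functors of `x`-power torsion and `LocQuot x`. -/
lemma exists_exact_of_torsion {A B D H B₁ D₁ W : Type u}
    [AddCommGroup A] [Module R A] [AddCommGroup B] [Module R B] [AddCommGroup D] [Module R D]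
    [AddCommGroup H] [Module R H] [AddCommGroup B₁] [Module R B₁] [AddCommGroup D₁] [Module R D₁]
    [AddCommGroup W] [Module R W] {f : A →ₗ[R] B} {g : B →ₗ[R] D} {h : D →ₗ[R] H}
    {g₁ : B₁ →ₗ[R] D₁} {h₁ : D₁ →ₗ[R] W} {jB : B₁ →ₗ[R] B} {jD : D₁ →ₗ[R] D}
    (hf : Function.Injective f) (hfg : Function.Exact f g) (hgh : Function.Exact g h)
    (hh : Function.Surjective h) (hgh₁ : Function.Exact g₁ h₁) (hh₁ : Function.Surjective h₁)
    (hjD : Function.Injective jD)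
    (hrB : ∀ b, b ∈ LinearMap.range jB ↔ ∃ k : ℕ, x ^ k • b = 0)
    (hrD : ∀ b, b ∈ LinearMap.range jD ↔ ∃ k : ℕ, x ^ k • b = 0)
    (hj : ∀ b, jD (g₁ b) = g (jB b)) (hB : Subsingleton (LocQuot x B)) :
    ∃ (φ : LocQuot x A →ₗ[R] W) (ψ : W →ₗ[R] H), Function.Injective φ ∧ Function.Exact φ ψ ∧
      ∀ y, y ∈ LinearMap.range ψ ↔ ∃ k : ℕ, x ^ k • y = 0 := by
  rw [LocQuot.subsingleton_iff] at hB
  obtain ⟨ψ, hψ⟩ := LinearMap.exists_comp_eq_of_surjective h₁ (h ∘ₗ jD) hh₁ (by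
    intro d hd
    obtain ⟨b, rfl⟩ := (hgh₁ d).1 hd
    simp [hj, hgh.apply_apply_eq_zero])
  let B' : Submodule R B :=
    { carrier := {b | ∃ k : ℕ, ∃ a, f a = x ^ k • b}
      add_mem' := by
        rintro b c ⟨k, a, ha⟩ ⟨l, a', ha'⟩
        refine ⟨k + l, x ^ l • a + x ^ k • a', ?_⟩
        simp only [map_add, map_smul, ha, ha', smul_add, smul_smul, pow_add]
        ring_nf
      zero_mem' := ⟨0, 0, by simp⟩
      smul_mem' := by
        rintro r b ⟨k, a, ha⟩
        refine ⟨k, r • a, ?_⟩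
        rw [map_smul, ha, smul_comm] }
  obtain ⟨s, hs⟩ := LinearMap.exists_comp_eq_of_injective jD (g ∘ₗ B'.subtype) hjD (by
    rintro ⟨b, k, a, ha⟩
    rw [hrD]
    refine ⟨k, ?_⟩
    simp [← map_smul, ← ha, hfg.apply_apply_eq_zero])
  let S := Submonoid.powers x
  let fx := IsLocalizedModule.map S (LocalizedModule.mkLinearMap S A)
    (LocalizedModule.mkLinearMap S B) f
  have hfx : ∀ (a : A) (k : ℕ), fx (LocalizedModule.mk a (⟨x ^ k, k, rfl⟩ : S)) =
      LocalizedModule.mk (f a) (⟨x ^ k, k, rfl⟩ : S) := fun a k =>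
    IsLocalizedModule.map_LocalizedModules _ _ _ _
  have hfx_inj : Function.Injective fx := IsLocalizedModule.map_injective _ _ _ _ hf
  have mk_eq_zero : ∀ (b : B) (k : ℕ), x ^ k • b = 0 →
      (LocalizedModule.mk b 1 : LocalizedModule S B) = 0 := by
    intro b k hb
    rw [← LocalizedModule.zero_mk (1 : S), LocalizedModule.mk_eq]
    exact ⟨⟨x ^ k, k, rfl⟩, by simp [Submonoid.smul_def, hb]⟩
  obtain ⟨p, hp⟩ := LinearMap.exists_comp_eq_of_injective fx
    (LocalizedModule.mkLinearMap S B ∘ₗ B'.subtype) hfx_inj (by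
    rintro ⟨b, k, a, ha⟩
    refine ⟨LocalizedModule.mk a ⟨x ^ k, k, rfl⟩, ?_⟩
    rw [hfx, ha]
    simp only [LinearMap.comp_apply, LocalizedModule.mkLinearMap_apply, Submodule.subtype_apply]
    rw [LocalizedModule.mk_eq]
    exact ⟨1, by simp [Submonoid.smul_def]⟩)
  let π : B' →ₗ[R] LocQuot x A := (Submodule.mkQ _) ∘ₗ p
  have hπ : Function.Surjective π := by
    intro z
    obtain ⟨k, a, rfl⟩ := LocQuot.exists_eq_frac x z
    obtain ⟨l, b, hb⟩ := hB k (f a)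
    refine ⟨⟨b, l + k, x ^ l • a, by rw [map_smul, hb]⟩, ?_⟩
    simp only [π, LinearMap.comp_apply, Submodule.mkQ_apply, LocQuot.frac]
    congr 1
    apply hfx_inj
    rw [hp, hfx]
    simp only [LinearMap.comp_apply, LocalizedModule.mkLinearMap_apply, Submodule.subtype_apply]
    rw [LocalizedModule.mk_eq]
    refine ⟨⟨x ^ l, l, rfl⟩, ?_⟩
    simp [Submonoid.smul_def, hb, pow_add, smul_smul]
  have hker : ∀ b, π b = 0 ↔ h₁ (s b) = 0 := by
    intro b
    simp only [π, LinearMap.comp_apply, Submodule.mkQ_apply, Submodule.Quotient.mk_eq_zero,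
      LinearMap.mem_range, LocalizedModule.mkLinearMap_apply]
    rw [hgh₁ (s b)]
    constructor
    · rintro ⟨a, ha⟩
      have h1 := hp b
      rw [← ha] at h1
      have h2 := hfx a 0
      have e1 : (⟨x ^ 0, 0, rfl⟩ : S) = 1 := Subtype.ext (pow_zero x)
      rw [e1] at h2
      rw [h2] at h1
      simp only [LinearMap.comp_apply, LocalizedModule.mkLinearMap_apply,
        Submodule.subtype_apply] at h1
      rw [LocalizedModule.mk_eq] at h1
      obtain ⟨⟨_, k, rfl⟩, h3⟩ := h1
      simp only [Submonoid.smul_def, one_smul] at h3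
      obtain ⟨b₁, hb₁⟩ := (hrB (b - f a)).2 ⟨k, by rw [smul_sub, h3, sub_self]⟩
      refine ⟨b₁, hjD ?_⟩
      rw [hj, hb₁, map_sub, hfg.apply_apply_eq_zero, sub_zero, hs]
      rfl
    · rintro ⟨b₁, hb₁⟩
      have h1 : g (b - jB b₁) = 0 := by
        rw [map_sub, ← hj, hb₁, hs]
        simp
      obtain ⟨a, ha⟩ := (hfg _).1 h1
      refine ⟨a, hfx_inj ?_⟩
      have h2 := hfx a 0
      have e1 : (⟨x ^ 0, 0, rfl⟩ : S) = 1 := Subtype.ext (pow_zero x)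
      rw [e1] at h2
      rw [hp, h2, ha]
      simp only [LinearMap.comp_apply, LocalizedModule.mkLinearMap_apply,
        Submodule.subtype_apply]
      obtain ⟨k, hk⟩ := (hrB (jB b₁)).1 ⟨b₁, rfl⟩
      have h4 := mk_eq_zero _ k hk
      have h5 := (LocalizedModule.mkLinearMap S B).map_sub b (jB b₁)
      simp only [LocalizedModule.mkLinearMap_apply] at h5
      rw [h5, h4, sub_zero]
  obtain ⟨φ, hφ⟩ := LinearMap.exists_comp_eq_of_surjective π (h₁ ∘ₗ s) hπ fun z hz => (hker z).1 hz
  refine ⟨φ, ψ, ?_, ?_, ?_⟩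
  · rw [injective_iff_map_eq_zero]
    intro z hz
    obtain ⟨b, rfl⟩ := hπ z
    rw [hφ] at hz
    exact (hker b).2 hz
  · intro w
    obtain ⟨d, rfl⟩ := hh₁ w
    rw [hψ]
    constructor
    · intro hd
      obtain ⟨b, hb⟩ := (hgh (jD d)).1 hd
      obtain ⟨k, hk⟩ := (hrD (jD d)).1 ⟨d, rfl⟩
      obtain ⟨a, ha⟩ := (hfg (x ^ k • b)).1 (by rw [map_smul, hb, hk])
      refine ⟨π ⟨b, k, a, ha⟩, ?_⟩
      rw [hφ]
      refine congrArg h₁ (hjD ?_)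
      rw [hs]
      exact hb
    · rintro ⟨z, hz⟩
      obtain ⟨b, rfl⟩ := hπ z
      rw [hφ, LinearMap.comp_apply, ← sub_eq_zero, ← map_sub] at hz
      obtain ⟨b₁, hb₁⟩ := (hgh₁ _).1 hz
      have : jD d = jD (s b) - jD (g₁ b₁) := by rw [hb₁, map_sub]; abel
      rw [LinearMap.comp_apply, this, map_sub, hs, hj]
      simp [hgh.apply_apply_eq_zero]
  · intro y
    constructor
    · rintro ⟨w, rfl⟩
      obtain ⟨d, rfl⟩ := hh₁ w
      obtain ⟨k, hk⟩ := (hrD (jD d)).1 ⟨d, rfl⟩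
      exact ⟨k, by rw [hψ, LinearMap.comp_apply, ← map_smul, hk, map_zero]⟩
    · rintro ⟨k, hk⟩
      obtain ⟨d, rfl⟩ := hh y
      obtain ⟨b, hb⟩ := (hgh (x ^ k • d)).1 (by rw [map_smul, hk])
      obtain ⟨l, b', hb'⟩ := hB k b
      obtain ⟨d₁, hd₁⟩ := (hrD (d - g b')).2 ⟨l + k, by
        rw [smul_sub, ← map_smul, ← hb', map_smul, hb, smul_smul, pow_add, sub_self]⟩
      refine ⟨h₁ d₁, ?_⟩
      rw [hψ, LinearMap.comp_apply, hd₁, map_sub, hgh.apply_apply_eq_zero, sub_zero]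

end LocQuot

section Noetherian

variable {R : Type u} [CommRing R] (I : Ideal R) (x : R)

lemma exists_pow_mul_eq_zero_stable [IsNoetherianRing R] :
    ∃ N : ℕ, ∀ (m : ℕ) (a : R), x ^ m * a = 0 → x ^ N * a = 0 := by
  let K : ℕ →o Ideal R :=
    { toFun n := LinearMap.ker (LinearMap.mulLeft R (x ^ n))
      monotone' := by
        intro m n hmn a ha
        simp only [LinearMap.mem_ker, LinearMap.mulLeft_apply] at ha ⊢
        rw [← Nat.sub_add_cancel hmn, pow_add, mul_assoc, ha, mul_zero] }
  obtain ⟨N, hN⟩ := monotone_stabilizes_iff_noetherian.2 ‹_› K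
  refine ⟨N, fun m a ha => ?_⟩
  have h1 : a ∈ K (N + m) := by
    change x ^ (N + m) * a = 0
    rw [pow_add, mul_assoc, ha, mul_zero]
  rw [← hN _ (Nat.le_add_right N m)] at h1
  exact h1

lemma exists_pow_smul_eq_of_injective [IsNoetherianRing R] (E : Type u) [AddCommGroup E] [Module R E]
    [hE : Module.Injective R E] (k t : ℕ) (e : E) (he : ∀ a ∈ I ^ t, a • e = 0) :
    ∃ (N L : ℕ) (f : E), (∀ a ∈ I ^ L, a • f = 0) ∧ x ^ N • e = x ^ (N + k) • f := by
  obtain ⟨N, hN⟩ := exists_pow_mul_eq_zero_stable x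
  obtain ⟨c, hc⟩ := I.exists_pow_inf_eq_pow_smul (Ideal.span {x ^ (N + k)})
  have key : ∀ a, a * x ^ (N + k) ∈ I ^ (c + t) → (x ^ N * a) • e = 0 := by
    intro a ha
    have h1 : a * x ^ (N + k) ∈ I ^ (c + t) • (⊤ : Submodule R R) ⊓ Ideal.span {x ^ (N + k)} :=
      ⟨by simpa using ha, Ideal.mem_span_singleton'.2 ⟨a, rfl⟩⟩
    rw [hc _ (Nat.le_add_right c t), Nat.add_sub_cancel_left] at h1
    have h2 : a * x ^ (N + k) ∈ I ^ t • (Ideal.span {x ^ (N + k)} : Submodule R R) :=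
      Submodule.smul_mono le_rfl inf_le_right h1
    obtain ⟨b, hb, hab⟩ := Submodule.mem_smul_span_singleton.1 h2
    have h3 : x ^ N * (a - b) = 0 := hN (N + k) _ (by
      rw [smul_eq_mul] at hab
      rw [mul_sub, mul_comm, ← hab]
      ring)
    rw [mul_sub, sub_eq_zero] at h3
    rw [h3, mul_smul, he b hb, smul_zero]
  let J₀ : Ideal R := Ideal.span {x ^ (N + k)} ⊔ I ^ (c + t)
  let p : R × (I ^ (c + t) : Ideal R) →ₗ[R] J₀ :=
    (((LinearMap.mulLeft R (x ^ (N + k))).coprod (I ^ (c + t)).subtype).codRestrict J₀ (by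
      rintro ⟨a, b, hb⟩
      refine Submodule.add_mem_sup (Ideal.mem_span_singleton'.2 ⟨a, ?_⟩) hb
      simp [mul_comm]))
  have hp : Function.Surjective p := by
    rintro ⟨y, hy⟩
    obtain ⟨y₁, h₁, y₂, h₂, rfl⟩ := Submodule.mem_sup.1 hy
    obtain ⟨a, rfl⟩ := Ideal.mem_span_singleton'.1 h₁
    exact ⟨(a, ⟨y₂, h₂⟩), Subtype.ext (by simp [p, mul_comm])⟩
  obtain ⟨g, hg⟩ := LinearMap.exists_comp_eq_of_surjective p
    ((LinearMap.toSpanSingleton R E (x ^ N • e)) ∘ₗ LinearMap.fst R R (I ^ (c + t) : Ideal R)) hp (by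
      rintro ⟨a, b, hb⟩ h
      have h1 : x ^ (N + k) * a + b = 0 := congrArg Subtype.val h
      have h2 := key a (by
        rw [mul_comm, eq_neg_of_add_eq_zero_left h1]
        exact (I ^ (c + t)).neg_mem hb)
      simp only [LinearMap.comp_apply, LinearMap.fst_apply, LinearMap.toSpanSingleton_apply]
      rw [smul_smul, mul_comm, h2])
  obtain ⟨g', hg'⟩ := (Module.Baer.iff_injective.2 hE) J₀ g
  have hval : ∀ (a : R) (b : (I ^ (c + t) : Ideal R)), (x ^ (N + k) * a + b) • g' 1 =
      a • x ^ N • e := by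
    intro a b
    rw [← map_smul, smul_eq_mul, mul_one]
    have h1 := hg' (x ^ (N + k) * a + b) (p (a, b)).2
    rw [h1]
    exact hg (a, b)
  refine ⟨N, c + t, g' 1, fun a ha => ?_, ?_⟩
  · simpa using hval 0 ⟨a, ha⟩
  · simpa using (hval 1 0).symm

namespace LocCoh

lemma subsingleton_locQuot_zero_of_injective [IsNoetherianRing R] (E : Type u) [AddCommGroup E] [Module R E]
    [Module.Injective R E] : Subsingleton (LocQuot x (LocCoh I 0 E)) := by
  rw [LocQuot.subsingleton_iff]
  intro k b
  obtain ⟨t, ht⟩ := (mem_range_zeroι I).1 ⟨b, rfl⟩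
  obtain ⟨N, L, f, hf, h⟩ := exists_pow_smul_eq_of_injective I x E k t _ ht
  obtain ⟨b', rfl⟩ := (mem_range_zeroι I).2 ⟨L, hf⟩
  refine ⟨N, b', zeroι_injective I E ?_⟩
  rw [map_smul, map_smul, h]

variable (M : Type u) [AddCommGroup M] [Module R M]

lemma exists_zero_sup_span : ∃ j : LocCoh (I ⊔ Ideal.span {x}) 0 M →ₗ[R] LocCoh I 0 M,
    (∀ z, zeroι I M (j z) = zeroι (I ⊔ Ideal.span {x}) M z) ∧
    ∀ b, b ∈ LinearMap.range j ↔ ∃ k : ℕ, x ^ k • b = 0 := by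
  obtain ⟨j, hj⟩ := LinearMap.exists_comp_eq_of_injective (zeroι I M)
    (zeroι (I ⊔ Ideal.span {x}) M) (zeroι_injective I M) (by
      intro z
      obtain ⟨t, ht⟩ := (mem_range_zeroι (I ⊔ Ideal.span {x})).1 ⟨z, rfl⟩
      exact (mem_range_zeroι I).2 ⟨t, fun a ha => ht a (Ideal.pow_right_mono le_sup_left t ha)⟩)
  refine ⟨j, hj, fun b => ⟨?_, ?_⟩⟩
  · rintro ⟨z, rfl⟩
    obtain ⟨t, ht⟩ := (mem_range_zeroι (I ⊔ Ideal.span {x})).1 ⟨z, rfl⟩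
    refine ⟨t, zeroι_injective I M ?_⟩
    rw [map_smul, hj, map_zero]
    exact ht _ (Ideal.pow_mem_pow (Ideal.mem_sup_right (Ideal.mem_span_singleton_self x)) t)
  · rintro ⟨k, hk⟩
    obtain ⟨t, ht⟩ := (mem_range_zeroι I).1 ⟨b, rfl⟩
    obtain ⟨z, hz⟩ := (mem_range_zeroι (I ⊔ Ideal.span {x}) (m := zeroι I M b)).2 ⟨t + k, by
      intro a ha
      have h1 := Ideal.sup_pow_add_le_pow_sup_pow ha
      rw [Ideal.span_singleton_pow] at h1
      obtain ⟨y₁, h₁, y₂, h₂, rfl⟩ := Submodule.mem_sup.1 h1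
      obtain ⟨c, rfl⟩ := Ideal.mem_span_singleton'.1 h₂
      rw [add_smul, ht _ h₁, mul_smul, ← map_smul, hk, map_zero, smul_zero, zero_add]⟩
    exact ⟨z, zeroι_injective I M (by rw [hj, hz])⟩

variable {M} {E C : Type u} [AddCommGroup E] [Module R E] [AddCommGroup C] [Module R C]

lemma delta_surjective (i : ℕ) [Module.Injective R E] {f : M →ₗ[R] E} {g : E →ₗ[R] C}
    (hf : Function.Injective f) (hg : Function.Surjective g) (hfg : Function.Exact f g) :
    Function.Surjective (delta I i hf hg hfg) := fun y =>
  (exact_left I i hf hg hfg y).1 (Subsingleton.elim _ _)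

/-- Dimension shifting. -/
noncomputable def shiftEquiv (i : ℕ) [Module.Injective R E] {f : M →ₗ[R] E} {g : E →ₗ[R] C}
    (hf : Function.Injective f) (hg : Function.Surjective g) (hfg : Function.Exact f g) :
    LocCoh I (i + 1) C ≃ₗ[R] LocCoh I (i + 2) M :=
  LinearEquiv.ofBijective (delta I (i + 1) hf hg hfg) ⟨by
    rw [injective_iff_map_eq_zero]
    intro z hz
    obtain ⟨y, rfl⟩ := (exact_right I (i + 1) hf hg hfg z).1 hz
    rw [Subsingleton.elim y 0, map_zero], delta_surjective I (i + 1) hf hg hfg⟩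

lemma exists_exact_of_equiv {A A' W W' H H' : Type u} [AddCommGroup A] [Module R A]
    [AddCommGroup A'] [Module R A'] [AddCommGroup W] [Module R W]
    [AddCommGroup W'] [Module R W'] [AddCommGroup H] [Module R H]
    [AddCommGroup H'] [Module R H'] (eA : A ≃ₗ[R] A') (eW : W ≃ₗ[R] W') (eH : H ≃ₗ[R] H')
    (h : ∃ (φ : A →ₗ[R] W) (ψ : W →ₗ[R] H), Function.Injective φ ∧ Function.Exact φ ψ ∧
      ∀ y, y ∈ LinearMap.range ψ ↔ ∃ k : ℕ, x ^ k • y = 0) :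
    ∃ (φ : A' →ₗ[R] W') (ψ : W' →ₗ[R] H'), Function.Injective φ ∧ Function.Exact φ ψ ∧
      ∀ y, y ∈ LinearMap.range ψ ↔ ∃ k : ℕ, x ^ k • y = 0 := by
  obtain ⟨φ, ψ, h1, h2, h3⟩ := h
  refine ⟨eW.toLinearMap ∘ₗ φ ∘ₗ eA.symm.toLinearMap, eH.toLinearMap ∘ₗ ψ ∘ₗ eW.symm.toLinearMap,
    ?_, ?_, ?_⟩
  · exact eW.injective.comp (h1.comp eA.symm.injective)
  · intro w
    have := h2 (eW.symm w)
    simp only [LinearMap.comp_apply, LinearEquiv.coe_coe, map_eq_zero_iff _ eH.injective, this]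
    constructor
    · rintro ⟨a, ha⟩
      exact ⟨eA a, by simp [ha]⟩
    · rintro ⟨a, ha⟩
      exact ⟨eA.symm a, by simp [← ha]⟩
  · intro y
    obtain ⟨y, rfl⟩ := eH.surjective y
    have : (∃ k : ℕ, x ^ k • eH y = 0) ↔ ∃ k : ℕ, x ^ k • y = 0 := by
      simp only [← map_smul, map_eq_zero_iff _ eH.injective]
    rw [this, ← h3]
    constructor
    · rintro ⟨w, hw⟩
      exact ⟨eW.symm w, eH.injective hw⟩
    · rintro ⟨w, hw⟩
      exact ⟨eW w, by simp [hw]⟩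

/-- Comparison of local cohomology with respect to `I` and with respect to `I + (x)`. -/
theorem exists_exact_sup_span [IsNoetherianRing R] (i : ℕ) : ∀ (M : Type u) [AddCommGroup M] [Module R M],
    ∃ (φ : LocQuot x (LocCoh I i M) →ₗ[R] LocCoh (I ⊔ Ideal.span {x}) (i + 1) M)
      (ψ : LocCoh (I ⊔ Ideal.span {x}) (i + 1) M →ₗ[R] LocCoh I (i + 1) M),
      Function.Injective φ ∧ Function.Exact φ ψ ∧
      ∀ y, y ∈ LinearMap.range ψ ↔ ∃ k : ℕ, x ^ k • y = 0 := by
  induction i with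
  | zero =>
    intro M _ _
    obtain ⟨E, C, _, _, _, _, f, g, hE, hf, hg, hfg⟩ := exists_injective_shortExact R M
    obtain ⟨jE, hjE, hrE⟩ := exists_zero_sup_span I x E
    obtain ⟨jC, hjC, hrC⟩ := exists_zero_sup_span I x C
    refine exists_exact_of_torsion x (map_zero_injective I hf) (exact_mid I 0 hf hg hfg)
      (exact_right I 0 hf hg hfg) (delta_surjective I 0 hf hg hfg)
      (exact_right (I ⊔ Ideal.span {x}) 0 hf hg hfg)
      (delta_surjective (I ⊔ Ideal.span {x}) 0 hf hg hfg) (jB := jE) (jD := jC) ?_ hrE hrC ?_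
      (subsingleton_locQuot_zero_of_injective I x E)
    · intro a b hab
      apply zeroι_injective (I ⊔ Ideal.span {x}) C
      rw [← hjC, ← hjC, hab]
    · intro b
      apply zeroι_injective I C
      rw [hjC, zeroι_map, zeroι_map, hjE]
  | succ i ih =>
    intro M _ _
    obtain ⟨E, C, _, _, _, _, f, g, hE, hf, hg, hfg⟩ := exists_injective_shortExact R M
    refine exists_exact_of_equiv x ?_ (shiftEquiv (I ⊔ Ideal.span {x}) i hf hg hfg)
      (shiftEquiv I i hf hg hfg) (ih C)
    cases i with
    | zero =>
      have := subsingleton_locQuot_zero_of_injective I x E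
      exact LocQuot.equivOfExact x (exact_right I 0 hf hg hfg) (delta_surjective I 0 hf hg hfg)
    | succ i => exact LocQuot.mapEquiv x (shiftEquiv I i hf hg hfg)

end LocCoh

end Noetherian

section Torsion

variable {R : Type u} [CommRing R]

/-- Every element of `N` is annihilated by a power of `x`. -/
def IsPowTorsion (x : R) (N : Type u) [AddCommGroup N] [Module R N] : Prop :=
  ∀ n : N, ∃ k : ℕ, x ^ k • n = 0

namespace IsPowTorsion

variable {x : R} {A B C : Type u} [AddCommGroup A] [Module R A] [AddCommGroup B] [Module R B]
  [AddCommGroup C] [Module R C]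

lemma of_injective {f : A →ₗ[R] B} (hf : Function.Injective f) (h : IsPowTorsion x B) :
    IsPowTorsion x A := fun a => by
  obtain ⟨k, hk⟩ := h (f a)
  exact ⟨k, hf (by rw [map_smul, hk, map_zero])⟩

lemma of_exact {f : A →ₗ[R] B} {g : B →ₗ[R] C} (hfg : Function.Exact f g) (hA : IsPowTorsion x A)
    (hC : ∀ c ∈ LinearMap.range g, ∃ k : ℕ, x ^ k • c = 0) : IsPowTorsion x B := fun b => by
  obtain ⟨k, hk⟩ := hC (g b) ⟨b, rfl⟩
  obtain ⟨a, ha⟩ := (hfg (x ^ k • b)).1 (by rw [map_smul, hk])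
  obtain ⟨l, hl⟩ := hA a
  exact ⟨l + k, by rw [pow_add, mul_smul, ← ha, ← map_smul, hl, map_zero]⟩

lemma subsingleton_locQuot (h : IsPowTorsion x A) : Subsingleton (LocQuot x A) := by
  rw [LocQuot.subsingleton_iff]
  intro k n
  obtain ⟨l, hl⟩ := h n
  exact ⟨l, 0, by rw [hl, smul_zero]⟩

lemma locQuot (h : IsPowTorsion x A) (y : R) : IsPowTorsion x (LocQuot y A) := by
  intro z
  obtain ⟨k, n, rfl⟩ := LocQuot.exists_eq_frac y z
  obtain ⟨l, hl⟩ := h n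
  refine ⟨l, ?_⟩
  rw [LocQuot.frac, ← Submodule.Quotient.mk_smul, LocalizedModule.smul'_mk, hl,
    LocalizedModule.zero_mk, Submodule.Quotient.mk_zero]

variable (x A) in
lemma locQuot_self : IsPowTorsion x (LocQuot x A) := by
  intro z
  obtain ⟨k, n, rfl⟩ := LocQuot.exists_eq_frac x z
  refine ⟨k, ?_⟩
  have := LocQuot.frac_pow_smul_self x k n
  rwa [LocQuot.frac, ← LocalizedModule.smul'_mk, Submodule.Quotient.mk_smul] at this

end IsPowTorsion

end Torsion

namespace LocCoh

variable {R : Type u} [CommRing R]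

section Bot

variable (M : Type u) [AddCommGroup M] [Module R M]

lemma zeroι_bot_surjective : Function.Surjective (zeroι (⊥ : Ideal R) M) := by
  intro m
  refine (mem_range_zeroι ⊥).2 ⟨1, fun a ha => ?_⟩
  rw [pow_one, Ideal.mem_bot] at ha
  rw [ha, zero_smul]

/-- `H^0_0(M) = M`. -/
noncomputable def zeroBotEquiv : LocCoh (⊥ : Ideal R) 0 M ≃ₗ[R] M :=
  LinearEquiv.ofBijective (zeroι ⊥ M) ⟨zeroι_injective ⊥ M, zeroι_bot_surjective M⟩

lemma subsingleton_bot_succ (i : ℕ) : ∀ (M : Type u) [AddCommGroup M] [Module R M],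
    Subsingleton (LocCoh (⊥ : Ideal R) (i + 1) M) := by
  induction i with
  | zero =>
    intro M _ _
    obtain ⟨E, C, _, _, _, _, f, g, hE, hf, hg, hfg⟩ := exists_injective_shortExact R M
    refine subsingleton_of_forall_eq 0 fun y => ?_
    obtain ⟨z, rfl⟩ := delta_surjective ⊥ 0 hf hg hfg y
    refine (exact_right ⊥ 0 hf hg hfg z).2 ?_
    obtain ⟨e, he⟩ := hg (zeroι ⊥ C z)
    obtain ⟨w, rfl⟩ := zeroι_bot_surjective (R := R) E e
    exact ⟨w, zeroι_injective ⊥ C (by rw [zeroι_map, he])⟩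
  | succ i ih =>
    intro M _ _
    obtain ⟨E, C, _, _, _, _, f, g, hE, hf, hg, hfg⟩ := exists_injective_shortExact R M
    have := ih C
    exact (shiftEquiv ⊥ i hf hg hfg).symm.toEquiv.subsingleton

end Bot

variable {M : Type u} [AddCommGroup M] [Module R M] (I : Ideal R)

lemma isPowTorsion_sup_span [IsNoetherianRing R] {y : R} (hM : IsPowTorsion y M)
    (h : ∀ i, IsPowTorsion y (LocCoh I i M)) (x : R) (i : ℕ) :
    IsPowTorsion y (LocCoh (I ⊔ Ideal.span {x}) i M) := by
  cases i with
  | zero => exact hM.of_injective (zeroι_injective _ M)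
  | succ i =>
    obtain ⟨φ, ψ, -, h2, -⟩ := exists_exact_sup_span I x i M
    exact IsPowTorsion.of_exact h2 ((h i).locQuot x) fun c _ => h (i + 1) c

/-- Induction over ideals by adding generators. -/
lemma ideal_sup_span_induction [IsNoetherianRing R] {P : Ideal R → Prop} (I J : Ideal R)
    (hI : P I) (h : ∀ (K : Ideal R) (x : R), x ∈ J → P K → P (K ⊔ Ideal.span {x})) :
    P (I ⊔ J) := by
  obtain ⟨s, hs⟩ := (isNoetherianRing_iff_ideal_fg R).1 ‹_› J
  suffices ∀ t : Finset R, (t : Set R) ⊆ J → P (I ⊔ Ideal.span (t : Set R)) by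
    have := this s (by rw [← hs]; exact Ideal.subset_span)
    rwa [← hs]
  classical
  intro t
  induction t using Finset.induction_on with
  | empty => intro _; simpa using hI
  | insert a t ha ih =>
    intro hsub
    rw [Finset.coe_insert, Set.insert_subset_iff] at hsub
    have := h _ a hsub.1 (ih hsub.2)
    rwa [Finset.coe_insert, Ideal.span_insert, sup_comm (Ideal.span {a}), ← sup_assoc]

lemma isPowTorsion [IsNoetherianRing R] {y : R} (hM : IsPowTorsion y M) (i : ℕ) :
    IsPowTorsion y (LocCoh I i M) := by
  have : ∀ i, IsPowTorsion y (LocCoh (⊥ ⊔ I) i M) := by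
    refine ideal_sup_span_induction (P := fun K => ∀ i, IsPowTorsion y (LocCoh K i M)) ⊥ I ?_
      fun K x _ hK => isPowTorsion_sup_span K hM hK x
    intro i
    cases i with
    | zero => exact hM.of_injective (zeroι_injective _ M)
    | succ i =>
      have := subsingleton_bot_succ (R := R) i M
      exact fun n => ⟨0, Subsingleton.elim _ _⟩
  rw [bot_sup_eq] at this
  exact this i

variable (M) in
lemma isPowTorsion_of_mem [IsNoetherianRing R] {x : R} (hx : x ∈ I) (i : ℕ) :
    IsPowTorsion x (LocCoh I i M) := by
  cases i with
  | zero =>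
    intro z
    obtain ⟨t, ht⟩ := (mem_range_zeroι I).1 ⟨z, rfl⟩
    exact ⟨t, zeroι_injective I M (by rw [map_smul, ht _ (Ideal.pow_mem_pow hx t), map_zero])⟩
  | succ i =>
    obtain ⟨φ, ψ, -, h2, h3⟩ := exists_exact_sup_span I x i M
    have h := IsPowTorsion.of_exact h2 (IsPowTorsion.locQuot_self x _) fun c hc => (h3 c).1 hc
    rwa [sup_eq_left.2 ((Ideal.span_singleton_le_iff_mem I).2 hx)] at h

lemma nonempty_equiv_sup_span_of_isPowTorsion [IsNoetherianRing R] {x : R}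
    (hM : IsPowTorsion x M) (i : ℕ) :
    Nonempty (LocCoh (I ⊔ Ideal.span {x}) i M ≃ₗ[R] LocCoh I i M) := by
  cases i with
  | zero =>
    obtain ⟨j, hj, hr⟩ := exists_zero_sup_span I x M
    refine ⟨LinearEquiv.ofBijective j ⟨fun a b hab => ?_, fun b => ?_⟩⟩
    · apply zeroι_injective (I ⊔ Ideal.span {x}) M
      rw [← hj, ← hj, hab]
    · exact (hr b).2 (isPowTorsion I hM 0 b)
  | succ i =>
    obtain ⟨φ, ψ, h1, h2, h3⟩ := exists_exact_sup_span I x i M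
    have := (isPowTorsion I hM i).subsingleton_locQuot
    refine ⟨LinearEquiv.ofBijective ψ ⟨?_, fun b => (h3 b).2 (isPowTorsion I hM (i + 1) b)⟩⟩
    rw [injective_iff_map_eq_zero]
    intro z hz
    obtain ⟨y, rfl⟩ := (h2 z).1 hz
    rw [Subsingleton.elim y 0, map_zero]

lemma nonempty_equiv_sup_of_isPowTorsion [IsNoetherianRing R] (J : Ideal R)
    (hM : ∀ y ∈ J, IsPowTorsion y M) (i : ℕ) :
    Nonempty (LocCoh (I ⊔ J) i M ≃ₗ[R] LocCoh I i M) := by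
  refine ideal_sup_span_induction (P := fun K => Nonempty (LocCoh K i M ≃ₗ[R] LocCoh I i M)) I J
    ⟨LinearEquiv.refl R _⟩ ?_
  rintro K x hx ⟨e⟩
  obtain ⟨e'⟩ := nonempty_equiv_sup_span_of_isPowTorsion K (hM x hx) i
  exact ⟨e'.trans e⟩

end LocCoh

section LocQuotList

variable {R : Type u} [CommRing R]

/-- Iterated application of `LocQuot`. -/
noncomputable def locQuotList : List R → ModuleCat.{u} R → ModuleCat.{u} R
  | [], N => N
  | x :: xs, N => ModuleCat.of R (LocQuot x (locQuotList xs N))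

/-- Functoriality of `locQuotList`. -/
noncomputable def locQuotListMap {M N : ModuleCat.{u} R} (f : M →ₗ[R] N) :
    ∀ xs : List R, locQuotList xs M →ₗ[R] locQuotList xs N
  | [] => f
  | x :: xs => LocQuot.map x (locQuotListMap f xs)

lemma exists_locQuotListMap_span_singleton (N : ModuleCat.{u} R) (xs : List R) :
    ∀ z : locQuotList xs N, ∃ (n : N)
      (w : locQuotList xs (ModuleCat.of R (Submodule.span R {n}))),
      locQuotListMap (M := ModuleCat.of R (Submodule.span R {n})) (Submodule.span R {n}).subtype
        xs w = z := by
  induction xs with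
  | nil => exact fun z => ⟨z, ⟨z, Submodule.mem_span_singleton_self _⟩, rfl⟩
  | cons x xs ih =>
    intro z
    obtain ⟨k, m, rfl⟩ := LocQuot.exists_eq_frac x z
    obtain ⟨n, w, rfl⟩ := ih m
    exact ⟨n, LocQuot.frac x k w, LocQuot.map_frac x _ k w⟩

theorem LocCoh.sup_ofList [IsNoetherianRing R] (I : Ideal R) (M : Type u) [AddCommGroup M]
    [Module R M] (c : ℕ) (h : ∀ i, c < i → Subsingleton (LocCoh I i M)) (xs : List R) :
    (∀ i, c + xs.length < i → Subsingleton (LocCoh (I ⊔ Ideal.ofList xs) i M)) ∧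
    Nonempty (LocCoh (I ⊔ Ideal.ofList xs) (c + xs.length) M ≃ₗ[R]
      locQuotList xs (ModuleCat.of R (LocCoh I c M))) := by
  induction xs with
  | nil =>
    rw [Ideal.ofList_nil, sup_bot_eq]
    exact ⟨h, ⟨LinearEquiv.refl R _⟩⟩
  | cons x xs ih =>
    obtain ⟨h1, ⟨e⟩⟩ := ih
    rw [Ideal.ofList_cons, sup_comm (Ideal.span {x}), ← sup_assoc]
    constructor
    · rintro (_ | i) hi
      · exact absurd hi (by simp)
      · obtain ⟨φ, ψ, -, h2, -⟩ := LocCoh.exists_exact_sup_span (I ⊔ Ideal.ofList xs) x i M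
        rw [List.length_cons] at hi
        have := h1 i (by omega)
        have := h1 (i + 1) (by omega)
        have := (IsPowTorsion.subsingleton_locQuot (x := x)
          (A := LocCoh (I ⊔ Ideal.ofList xs) i M) fun n => ⟨0, Subsingleton.elim _ _⟩)
        refine subsingleton_of_forall_eq 0 fun w => ?_
        obtain ⟨y, rfl⟩ := (h2 w).1 (Subsingleton.elim _ _)
        rw [Subsingleton.elim y 0, map_zero]
    · obtain ⟨φ, ψ, h2, h3, -⟩ :=
        LocCoh.exists_exact_sup_span (I ⊔ Ideal.ofList xs) x (c + xs.length) M
      have := h1 (c + xs.length + 1) (by omega)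
      refine ⟨(LinearEquiv.ofBijective φ ⟨h2, fun w => ?_⟩).symm.trans (LocQuot.mapEquiv x e)⟩
      exact (h3 w).1 (Subsingleton.elim _ _)

theorem LocCoh.ofList [IsNoetherianRing R] (M : Type u) [AddCommGroup M]
    [Module R M] (xs : List R) :
    (∀ i, xs.length < i → Subsingleton (LocCoh (Ideal.ofList xs) i M)) ∧
    Nonempty (LocCoh (Ideal.ofList xs) xs.length M ≃ₗ[R] locQuotList xs (ModuleCat.of R M)) := by
  have h0 : ∀ i, 0 < i → Subsingleton (LocCoh (⊥ : Ideal R) i M) := by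
    rintro (_ | i) hi
    · exact absurd hi (lt_irrefl 0)
    · exact LocCoh.subsingleton_bot_succ i M
  have hequiv : ∀ (xs : List R) {A B : ModuleCat.{u} R}, (A ≃ₗ[R] B) →
      Nonempty (locQuotList xs A ≃ₗ[R] locQuotList xs B) := by
    intro xs A B e
    induction xs with
    | nil => exact ⟨e⟩
    | cons x xs ih => exact ih.map fun e' => LocQuot.mapEquiv x e'
  obtain ⟨h1, ⟨e⟩⟩ := LocCoh.sup_ofList ⊥ M 0 h0 xs
  rw [bot_sup_eq, zero_add] at h1
  rw [bot_sup_eq, zero_add] at e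
  exact ⟨h1, (hequiv xs (LocCoh.zeroBotEquiv M)).map fun e' => e.trans e'⟩

end LocQuotList

section ScalarAction

/-- Homology commutes with endomorphisms of the identity functor. -/
lemma homologyMap_eq_app {D : Type*} [Category* D] [Abelian D] (τ : 𝟭 D ⟶ 𝟭 D)
    {ι : Type*} {c : ComplexShape ι} {K : HomologicalComplex D c} (φ : K ⟶ K)
    (h : ∀ i, φ.f i = τ.app (K.X i)) (n : ι) :
    HomologicalComplex.homologyMap φ n = τ.app (K.homology n) := by
  have h1 : HomologicalComplex.cyclesMap φ n = τ.app (K.cycles n) := by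
    rw [← cancel_mono (K.iCycles n), HomologicalComplex.cyclesMap_i, h]
    exact τ.naturality (K.iCycles n)
  rw [← cancel_epi (K.homologyπ n), HomologicalComplex.homologyπ_naturality, h1]
  exact (τ.naturality (K.homologyπ n)).symm

lemma conj_iso_eq_app {D : Type*} [Category* D] (τ : 𝟭 D ⟶ 𝟭 D) {A B : D} (e : A ≅ B)
    {f : B ⟶ B} (hf : f = τ.app B) : e.hom ≫ f ≫ e.inv = τ.app A := by
  rw [← Category.assoc, Iso.comp_inv_eq, hf]
  exact τ.naturality e.hom

variable {R : Type u} [CommRing R]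

/-- Multiplication by `r` as an endomorphism of the identity functor of `(ModuleCat R)ᵒᵖ`. -/
def smulOpNatTrans (r : R) : 𝟭 (ModuleCat.{u} R)ᵒᵖ ⟶ 𝟭 (ModuleCat.{u} R)ᵒᵖ where
  app X := (r • 𝟙 X.unop).op
  naturality X Y f := by
    apply Quiver.Hom.unop_inj
    simp

lemma ext_map_smul (r : R) (i : ℕ) (A : (ModuleCat.{u} R)ᵒᵖ) (M : ModuleCat.{u} R) :
    ((Ext R (ModuleCat.{u} R) i).flip.map (r • 𝟙 M)).app A = r • 𝟙 _ := by
  let α := NatTrans.rightOp ((linearYoneda R (ModuleCat.{u} R)).map (r • 𝟙 M))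
  have key : (NatTrans.leftDerived α i).app A.unop = (smulOpNatTrans r).app _ := by
    let P := projectiveResolution A.unop
    rw [ProjectiveResolution.leftDerived_app_eq α P i]
    have := homologyMap_eq_app (smulOpNatTrans r)
      ((NatTrans.mapHomologicalComplex α (ComplexShape.down ℕ)).app P.complex) (fun j => by
        apply Quiver.Hom.unop_inj
        ext (x : P.complex.X j ⟶ M)
        change x ≫ (r • 𝟙 M) = r • x
        simp) i
    exact conj_iso_eq_app (smulOpNatTrans r) (P.isoLeftDerivedObj _ i) this
  exact congrArg Quiver.Hom.unop key

end ScalarAction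

namespace LocCoh
variable {R : Type u} [CommRing R] (I : Ideal R) (i : ℕ) (M : Type u) [AddCommGroup M] [Module R M]

lemma map_smul_id (r : R) (z : LocCoh I i M) :
    map I i (r • (LinearMap.id : M →ₗ[R] M)) z = r • z := by
  obtain ⟨j, y, rfl⟩ := localCohomologyCocone_jointly_surjective I i (ModuleCat.of R M) z
  have h1 := ConcreteCategory.congr_hom
    (localCohomologyCocone_map I i (r • 𝟙 (ModuleCat.of R M)) j) y
  have h2 := ConcreteCategory.congr_hom (ext_map_smul r i
    ((localCohomology.ringModIdeals (localCohomology.idealPowersDiagram I)).op.obj j)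
    (ModuleCat.of R M)) y
  refine h1.trans ((congrArg ((localCohomologyCocone I i (ModuleCat.of R M)).ι.app j) h2).trans ?_)
  exact map_smul ((localCohomologyCocone I i (ModuleCat.of R M)).ι.app j).hom r y

end LocCoh

section Parameters

variable {R : Type u} [CommRing R]

/-- Systems of parameters exist. -/
lemma exists_list_radical_eq_maximalIdeal [IsNoetherianRing R] [IsLocalRing R] {J : Ideal R}
    {d : ℕ} (hd : ringKrullDim (R ⧸ J) = d) :
    ∃ xs : List R, xs.length = d ∧
      (Ideal.ofList xs ⊔ J).radical = IsLocalRing.maximalIdeal R := by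
  have : Nontrivial (R ⧸ J) := by
    rw [← not_subsingleton_iff_nontrivial]
    intro h
    rw [ringKrullDim_eq_bot_of_subsingleton] at hd
    exact WithBot.bot_ne_coe hd
  have : IsLocalRing (R ⧸ J) := .of_surjective' (Ideal.Quotient.mk J) Ideal.Quotient.mk_surjective
  obtain ⟨s, hs, hcard⟩ := Ideal.exists_finset_card_eq_height_of_isNoetherianRing
    (IsLocalRing.maximalIdeal (R ⧸ J))
  have hrad : (Ideal.span (s : Set (R ⧸ J))).radical = IsLocalRing.maximalIdeal (R ⧸ J) := by
    rw [← Ideal.sInf_minimalPrimes]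
    refine le_antisymm (sInf_le hs) (le_sInf fun q hq => ?_)
    exact hs.2 hq.1 (IsLocalRing.le_maximalIdeal hq.1.1.ne_top)
  let xs := s.toList.map (Function.surjInv (Ideal.Quotient.mk_surjective (I := J)))
  refine ⟨xs, ?_, ?_⟩
  · rw [← IsLocalRing.maximalIdeal_height_eq_ringKrullDim, ← hcard] at hd
    rw [List.length_map, Finset.length_toList]
    exact_mod_cast hd
  · have hmap : (Ideal.ofList xs).map (Ideal.Quotient.mk J) = Ideal.span (s : Set (R ⧸ J)) := by
      rw [Ideal.map_ofList, List.map_map]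
      have : (Ideal.Quotient.mk J : R → R ⧸ J) ∘
          Function.surjInv (Ideal.Quotient.mk_surjective (I := J)) = id :=
        funext (Function.surjInv_eq _)
      rw [this, List.map_id, Ideal.ofList]
      congr 1
      ext x
      simp
    have h1 : Ideal.ofList xs ⊔ J = (Ideal.span (s : Set (R ⧸ J))).comap (Ideal.Quotient.mk J) := by
      rw [← hmap, Ideal.comap_map_of_surjective _ Ideal.Quotient.mk_surjective,
        ← RingHom.ker_eq_comap_bot, Ideal.mk_ker]
    rw [h1, ← Ideal.comap_radical, hrad]
    exact IsLocalRing.eq_maximalIdeal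
      (Ideal.comap_isMaximal_of_surjective _ Ideal.Quotient.mk_surjective)

end Parameters

namespace LocCoh

variable {R : Type u} [CommRing R] (M : Type u) [AddCommGroup M] [Module R M]

lemma subsingleton_of_subsingleton (I : Ideal R) (i : ℕ) [Subsingleton M] :
    Subsingleton (LocCoh I i M) := by
  refine subsingleton_of_forall_eq 0 fun z => ?_
  have h : (LinearMap.id : M →ₗ[R] M) = (0 : R) • LinearMap.id := by
    ext x
    exact Subsingleton.elim _ _
  calc z = map I i (LinearMap.id : M →ₗ[R] M) z := by rw [map_id, LinearMap.id_apply]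
    _ = 0 := by rw [h, map_smul_id, zero_smul]

variable {M} in
lemma nonempty_equiv_of_radical_sup_eq [IsNoetherianRing R] {I J K : Ideal R}
    (h : (I ⊔ J).radical = K.radical) (hM : ∀ y ∈ J, IsPowTorsion y M) (i : ℕ) :
    Nonempty (LocCoh K i M ≃ₗ[R] LocCoh I i M) :=
  (nonempty_equiv_sup_of_isPowTorsion I J hM i).map fun e => (equivOfRadicalEq i M h).symm.trans e

lemma isPowTorsion_of_mem_annihilator {M} [AddCommGroup M] [Module R M] {y : R}
    (hy : y ∈ Module.annihilator R M) : IsPowTorsion y M :=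
  fun m => ⟨1, by rw [pow_one]; exact Module.mem_annihilator.1 hy m⟩

variable [IsNoetherianRing R] [IsLocalRing R]

open IsLocalRing

/-- Grothendieck vanishing for the maximal ideal. -/
lemma subsingleton_of_supportDim_lt [Module.Finite R M] {i : ℕ}
    (hi : Module.supportDim R M < i) : Subsingleton (LocCoh (maximalIdeal R) i M) := by
  rcases subsingleton_or_nontrivial M with h | h
  · exact subsingleton_of_subsingleton M _ i
  have h0 := Module.supportDim_ne_bot_of_nontrivial R M
  obtain ⟨d, hd⟩ : ∃ d : ℕ, Module.supportDim R M = d := by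
    obtain ⟨e, he⟩ := WithBot.ne_bot_iff_exists.1 h0
    rw [← he] at hi ⊢
    have : e ≠ ⊤ := by
      rintro rfl
      exact absurd hi (not_lt.2 (WithBot.coe_le_coe.2 le_top))
    lift e to ℕ using this
    exact ⟨e, rfl⟩
  have hd' := hd
  rw [Module.supportDim_eq_ringKrullDim_quotient_annihilator] at hd'
  obtain ⟨xs, hlen, hrad⟩ := exists_list_radical_eq_maximalIdeal hd'
  obtain ⟨e⟩ := nonempty_equiv_of_radical_sup_eq (M := M)
    (hrad.trans (Ideal.IsPrime.radical inferInstance).symm)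
    (fun y hy => isPowTorsion_of_mem_annihilator hy) i
  have := (LocCoh.ofList M xs).1 i (by
    rw [hlen]
    rw [hd] at hi
    exact_mod_cast hi)
  exact e.toEquiv.subsingleton

end LocCoh

section Artinian

variable {R : Type u} [CommRing R]

/-- A family of submodules of an Artinian module, decreasing in both indices, stabilizes uniformly
in the second index. -/
lemma exists_uniform_stable {K : Type*} [AddCommGroup K] [Module R K] [IsArtinian R K]
    (F : ℕ → ℕ → Submodule R K) (h1 : ∀ j, Antitone fun i => F i j) (h2 : ∀ i, Antitone (F i)) :
    ∃ k, ∀ i, k ≤ i → ∀ j, F i j = F k j := by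
  obtain ⟨a, ha⟩ := IsArtinian.monotone_stabilizes (R := R) (M := K)
    ⟨fun i => OrderDual.toDual (F i i), fun i j hij => (h2 j hij).trans (h1 i hij)⟩
  have h : ∀ j, ∃ n, ∀ m, n ≤ m → F n j = F m j := fun j =>
    IsArtinian.monotone_stabilizes (R := R) (M := K) ⟨fun i => OrderDual.toDual (F i j), h1 j⟩
  choose b hb using h
  let k := max a ((Finset.range a).sup b)
  have haa : ∀ i j, a ≤ i → a ≤ j → F i j = F a a := by
    intro i j hi hj
    refine le_antisymm ((h1 j hi).trans (h2 a hj)) ?_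
    have : F a a = F (max i j) (max i j) := ha (max i j) (hi.trans (le_max_left _ _))
    rw [this]
    exact (h1 _ (le_max_left i j)).trans (h2 i (le_max_right i j))
  refine ⟨k, fun i hi j => ?_⟩
  have hak : a ≤ k := le_max_left _ _
  rcases le_or_gt a j with hj | hj
  · rw [haa i j (hak.trans hi) hj, haa k j hak hj]
  · have hbk : b j ≤ k := (Finset.le_sup (f := b) (Finset.mem_range.2 hj)).trans (le_max_right _ _)
    rw [← hb j i (hbk.trans hi), ← hb j k hbk]

/-- Melkersson's criterion: an `r`-power torsion module is Artinian as soon as the kernel of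
multiplication by `r` is. -/
theorem IsPowTorsion.isArtinian {N : Type u} [AddCommGroup N] [Module R N] {r : R}
    (hN : IsPowTorsion r N) [hK : IsArtinian R (LinearMap.ker (r • (LinearMap.id : N →ₗ[R] N)))] :
    IsArtinian R N := by
  rw [← monotone_stabilizes_iff_artinian]
  intro L
  let L' : ℕ → Submodule R N := fun i => OrderDual.ofDual (L i)
  have hL : Antitone L' := fun i j hij => L.monotone hij
  let F : ℕ → ℕ → Submodule R (LinearMap.ker (r • (LinearMap.id : N →ₗ[R] N))) := fun i j =>
    ((L' i).map (r ^ j • (LinearMap.id : N →ₗ[R] N))).comap (Submodule.subtype _)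
  obtain ⟨k, hk⟩ := exists_uniform_stable F
    (fun j a b hab => Submodule.comap_mono (Submodule.map_mono (hL hab))) (by
      rintro i a b hab ⟨x, hx⟩ ⟨y, hy, rfl : r ^ b • y = x⟩
      refine ⟨r ^ (b - a) • y, (L' i).smul_mem _ hy, ?_⟩
      change r ^ a • r ^ (b - a) • y = r ^ b • y
      rw [smul_smul, ← pow_add, Nat.add_sub_cancel' hab])
  refine ⟨k, fun i hi => ?_⟩
  change L' k = L' i
  refine le_antisymm (fun x hx => ?_) (hL hi)
  obtain ⟨t, ht⟩ := hN x
  induction t generalizing x with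
  | zero =>
    rw [pow_zero, one_smul] at ht
    rw [ht]
    exact zero_mem _
  | succ t ih =>
    have hker : r ^ t • x ∈ LinearMap.ker (r • (LinearMap.id : N →ₗ[R] N)) := by
      change r • r ^ t • x = 0
      rw [smul_smul, ← pow_succ', ht]
    have hmem : (⟨r ^ t • x, hker⟩ : LinearMap.ker (r • (LinearMap.id : N →ₗ[R] N))) ∈ F k t :=
      ⟨x, hx, rfl⟩
    rw [← hk i hi t] at hmem
    obtain ⟨y, hy, hxy : r ^ t • y = r ^ t • x⟩ := hmem
    have := ih (x - y) (sub_mem hx (hL hi hy)) (by rw [smul_sub, hxy, sub_self])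
    simpa using add_mem this hy

lemma IsPowTorsion.mem_radical_annihilator {N : Type u} [AddCommGroup N] [Module R N]
    [Module.Finite R N] {y : R} (hN : IsPowTorsion y N) : y ∈ (Module.annihilator R N).radical := by
  rw [Ideal.radical_eq_sInf, Ideal.mem_sInf]
  rintro p ⟨hp, hprime⟩
  obtain ⟨n, hn⟩ := Module.mem_support_iff_exists_annihilator.1
    ((Module.mem_support_iff_of_finite (p := ⟨p, hprime⟩)).2 hp)
  obtain ⟨k, hk⟩ := hN n
  exact hprime.mem_of_pow_mem k (hn ((Submodule.mem_annihilator_span_singleton _ _).2 hk))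

open IsLocalRing

variable [IsLocalRing R]

lemma maximalIdeal_mem_minimalPrimes_annihilator {N : Type u} [AddCommGroup N] [Module R N]
    [Module.Finite R N] [Nontrivial N] (hN : ∀ y ∈ maximalIdeal R, IsPowTorsion y N) :
    maximalIdeal R ∈ (Module.annihilator R N).minimalPrimes := by
  refine ⟨⟨inferInstance, le_maximalIdeal fun h => ?_⟩, fun q hq _ y hy => ?_⟩
  · exact not_subsingleton N (Module.annihilator_eq_top_iff.1 h)
  · exact hq.1.radical_le_iff.2 hq.2 (hN y hy).mem_radical_annihilator

lemma isArtinian_of_isPowTorsion_maximalIdeal [IsNoetherianRing R] {N : Type u} [AddCommGroup N]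
    [Module R N] [Module.Finite R N] (hN : ∀ y ∈ maximalIdeal R, IsPowTorsion y N) :
    IsArtinian R N := by
  rcases subsingleton_or_nontrivial N with h | h
  · infer_instance
  have := quotient_artinian_of_mem_minimalPrimes_of_isLocalRing _
    (maximalIdeal_mem_minimalPrimes_annihilator hN)
  let _ : Module (R ⧸ Module.annihilator R N) N := Module.quotientAnnihilator
  have : IsScalarTower R (R ⧸ Module.annihilator R N) N :=
    (Module.isTorsionBySet_annihilator R N).isScalarTower
  have : Module.Finite (R ⧸ Module.annihilator R N) N :=
    Module.Finite.of_restrictScalars_finite R _ _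
  exact isArtinian_of_surjective_algebraMap (R := R ⧸ Module.annihilator R N)
    Ideal.Quotient.mk_surjective

lemma supportDim_le_zero_of_maximalIdeal_mem_minimalPrimes {N : Type u} [AddCommGroup N] [Module R N]
    [Module.Finite R N] (hN : maximalIdeal R ∈ (Module.annihilator R N).minimalPrimes) :
    Module.supportDim R N ≤ 0 := by
  refine Order.krullDim_nonpos_iff_forall_isMax.2 ?_
  rintro ⟨p, hp⟩ ⟨q, hq⟩ hpq
  change q.asIdeal ≤ p.asIdeal
  exact (le_maximalIdeal q.2.ne_top).trans
    (hN.2 ⟨p.2, Module.mem_support_iff_of_finite.1 hp⟩ (le_maximalIdeal p.2.ne_top))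

/-- Prime avoidance for modules without nonzero elements annihilated by the maximal ideal. -/
lemma exists_isSMulRegular_notMem [IsNoetherianRing R] {N : Type u} [AddCommGroup N] [Module R N]
    [Module.Finite R N] (hN : ∀ x : N, (∀ a ∈ maximalIdeal R, a • x = 0) → x = 0)
    {S : Set (Ideal R)} (hS : S.Finite) (hprime : ∀ p ∈ S, p.IsPrime) (hm : maximalIdeal R ∉ S) :
    ∃ r ∈ maximalIdeal R, IsSMulRegular N r ∧ ∀ p ∈ S, r ∉ p := by
  by_contra! hcon
  have hsub : (maximalIdeal R : Set R) ⊆ ⋃ p ∈ associatedPrimes R N ∪ S, (p : Set R) := by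
    intro r hr
    rw [Set.biUnion_union, biUnion_associatedPrimes_eq_compl_regular R N]
    by_cases hreg : IsSMulRegular N r
    · obtain ⟨p, hp, hrp⟩ := hcon r hr hreg
      exact Or.inr (Set.mem_biUnion hp hrp)
    · exact Or.inl hreg
  have hprime' : ∀ p ∈ associatedPrimes R N ∪ S, p.IsPrime :=
    fun p hp => hp.elim (fun h => h.isPrime) (hprime p)
  obtain ⟨p, hp, hle⟩ := (Ideal.subset_union_prime_finite
    ((associatedPrimes.finite R N).union hS) (f := fun p => p) ⊥ ⊥
    fun p hp _ _ => hprime' p hp).1 hsub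
  have hpm : p = maximalIdeal R := le_antisymm (le_maximalIdeal (hprime' p hp).ne_top) hle
  subst hpm
  rcases hp with hp | hp
  · obtain ⟨-, x, hx⟩ := (isAssociatedPrime_iff).1 hp
    have hx0 : x = 0 := hN x fun a ha => by
      rw [hx, Submodule.mem_colon_singleton] at ha
      simpa using ha
    rw [hx0] at hx
    exact (maximalIdeal.isMaximal R).ne_top (hx.trans (by ext; simp))
  · exact hm hp

end Artinian

lemma withBot_enat_lt_of_add_one_lt {x : WithBot ℕ∞} {n : ℕ} (h : x + 1 < (n + 1 : ℕ)) :
    x < n := by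
  induction x with
  | bot => exact WithBot.bot_lt_coe _
  | coe x =>
    induction x with
    | top => exact absurd h (not_lt.2 le_top)
    | coe x =>
      have h' : x + 1 < n + 1 := by exact_mod_cast h
      exact_mod_cast Nat.lt_of_add_lt_add_right h'

lemma withBot_enat_eq_of_add_one_eq {x : WithBot ℕ∞} {n : ℕ} (h : x + 1 = (n + 1 : ℕ)) :
    x = n := by
  induction x with
  | bot => exact absurd h WithBot.bot_ne_coe
  | coe x =>
    induction x with
    | top => exact absurd (WithBot.coe_injective h) (ENat.top_ne_natCast (n + 1))
    | coe x =>
      have h' : x + 1 = n + 1 := by exact_mod_cast h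
      exact_mod_cast Nat.add_right_cancel h'

namespace LocCoh

open IsLocalRing

open scoped Pointwise

variable {R : Type u} [CommRing R] {M : Type u} [AddCommGroup M] [Module R M]

lemma isPowTorsion_range_zeroι (I : Ideal R) {y : R} (hy : y ∈ I) :
    IsPowTorsion y (LinearMap.range (zeroι I M)) := by
  rintro ⟨m, hm⟩
  obtain ⟨t, ht⟩ := (mem_range_zeroι I).1 hm
  exact ⟨t, Subtype.ext (ht _ (Ideal.pow_mem_pow hy t))⟩

lemma mem_range_zeroι_of_forall [IsNoetherianRing R] (I : Ideal R) {m : M}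
    (h : ∀ y ∈ I, ∃ k : ℕ, y ^ k • m = 0) : m ∈ LinearMap.range (zeroι I M) := by
  have hle : I ≤ (Submodule.span R {m}).annihilator.radical := fun y hy => by
    obtain ⟨k, hk⟩ := h y hy
    exact ⟨k, (Submodule.mem_annihilator_span_singleton _ _).2 hk⟩
  obtain ⟨t, ht⟩ := Ideal.exists_pow_le_of_le_radical_of_fg hle (IsNoetherian.noetherian I)
  exact (mem_range_zeroι I).2 ⟨t, fun a ha =>
    (Submodule.mem_annihilator_span_singleton _ _).1 (ht ha)⟩

lemma subsingleton_succ_of_isPowTorsion [IsNoetherianRing R] {I : Ideal R}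
    (h : ∀ y ∈ I, IsPowTorsion y M) (i : ℕ) : Subsingleton (LocCoh I (i + 1) M) := by
  obtain ⟨e⟩ := nonempty_equiv_of_radical_sup_eq (I := ⊥) (J := I) (K := I) (by rw [bot_sup_eq]) h
    (i + 1)
  have := subsingleton_bot_succ (R := R) i M
  exact e.toEquiv.subsingleton

variable (M) in
/-- Dividing out `Γ_I(M)` does not change higher local cohomology. -/
noncomputable def quotientZeroEquiv [IsNoetherianRing R] (I : Ideal R) (i : ℕ) :
    LocCoh I (i + 1) M ≃ₗ[R] LocCoh I (i + 1) (M ⧸ LinearMap.range (zeroι I M)) := by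
  let f := (LinearMap.range (zeroι I M)).subtype
  let g := (LinearMap.range (zeroι I M)).mkQ
  have hf : Function.Injective f := Submodule.injective_subtype _
  have hg : Function.Surjective g := Submodule.mkQ_surjective _
  have hfg : Function.Exact f g := LinearMap.exact_subtype_mkQ _
  refine LinearEquiv.ofBijective (map I (i + 1) g) ⟨?_, fun z => ?_⟩
  · rw [injective_iff_map_eq_zero]
    intro z hz
    obtain ⟨w, rfl⟩ := (exact_mid I (i + 1) hf hg hfg z).1 hz
    have := subsingleton_succ_of_isPowTorsion
      (fun y (hy : y ∈ I) => isPowTorsion_range_zeroι (M := M) I hy) i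
    rw [Subsingleton.elim w 0, map_zero]
  · have := subsingleton_succ_of_isPowTorsion
      (fun y (hy : y ∈ I) => isPowTorsion_range_zeroι (M := M) I hy) (i + 1)
    exact (exact_right I (i + 1) hf hg hfg z).1 (Subsingleton.elim _ _)

lemma eq_zero_of_quotient_range_zeroι [IsNoetherianRing R] (I : Ideal R)
    (x : M ⧸ LinearMap.range (zeroι I M)) (hx : ∀ a ∈ I, a • x = 0) : x = 0 := by
  obtain ⟨m, rfl⟩ := Submodule.mkQ_surjective _ x
  refine (Submodule.Quotient.mk_eq_zero _).2 (mem_range_zeroι_of_forall I fun a ha => ?_)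
  have h : a • m ∈ LinearMap.range (zeroι I M) := by
    rw [← Submodule.Quotient.mk_eq_zero]
    exact hx a ha
  obtain ⟨t, ht⟩ := isPowTorsion_range_zeroι I ha ⟨_, h⟩
  refine ⟨t + 1, ?_⟩
  rw [pow_succ, mul_smul]
  exact congrArg Subtype.val ht

lemma exact_smul_mkQ (r : R) (M : Type u) [AddCommGroup M] [Module R M] :
    Function.Exact (r • (LinearMap.id : M →ₗ[R] M)) (Submodule.mkQ (r • (⊤ : Submodule R M))) := by
  rw [LinearMap.exact_iff, Submodule.ker_mkQ]
  ext x
  rw [Submodule.mem_smul_pointwise_iff_exists]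
  simp

lemma injective_smul {r : R} (hr : IsSMulRegular M r) :
    Function.Injective (r • (LinearMap.id : M →ₗ[R] M)) := fun _ _ h => hr h

variable [IsNoetherianRing R] [IsLocalRing R]

/-- Local cohomology of finite modules with support in the maximal ideal is Artinian. -/
theorem isArtinian (n : ℕ) : ∀ (M : Type u) [AddCommGroup M] [Module R M] [Module.Finite R M],
    Module.supportDim R M < n → ∀ i, IsArtinian R (LocCoh (maximalIdeal R) i M) := by
  induction n with
  | zero =>
    intro M _ _ _ hM i
    have : Subsingleton M := by
      rw [← Module.supportDim_eq_bot_iff_subsingleton (R := R)]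
      by_contra h
      obtain ⟨e, he⟩ := WithBot.ne_bot_iff_exists.1 h
      rw [← he] at hM
      exact absurd hM (not_lt.2 (WithBot.coe_le_coe.2 zero_le))
    have := subsingleton_of_subsingleton M (maximalIdeal R) i
    infer_instance
  | succ n ih =>
    intro M _ _ _ hM i
    cases i with
    | zero =>
      have := isArtinian_of_isPowTorsion_maximalIdeal fun y (hy : y ∈ maximalIdeal R) =>
        isPowTorsion_range_zeroι (M := M) (maximalIdeal R) hy
      exact isArtinian_of_injective
        (LinearEquiv.ofInjective _ (zeroι_injective (maximalIdeal R) M)).toLinearMap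
        (LinearEquiv.injective _)
    | succ i =>
      let M' := M ⧸ LinearMap.range (zeroι (maximalIdeal R) M)
      suffices IsArtinian R (LocCoh (maximalIdeal R) (i + 1) M') from
        (quotientZeroEquiv M (maximalIdeal R) i).isArtinian_iff.2 this
      obtain ⟨r, hr, hreg, -⟩ := exists_isSMulRegular_notMem (N := M')
        (eq_zero_of_quotient_range_zeroι (maximalIdeal R)) (S := ∅) Set.finite_empty
        (by simp) (by simp)
      have hdim : Module.supportDim R (QuotSMulTop r M') < n := by
        have h1 := Module.supportDim_quotSMulTop_succ_eq_supportDim hreg hr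
        have h2 : Module.supportDim R M' < (n + 1 : ℕ) :=
          (Module.supportDim_le_of_surjective _ (Submodule.mkQ_surjective _)).trans_lt hM
        rw [← h1] at h2
        exact withBot_enat_lt_of_add_one_lt h2
      have := ih (QuotSMulTop r M') hdim i
      have hexact := exact_left (maximalIdeal R) i (injective_smul hreg)
        (Submodule.mkQ_surjective _) (exact_smul_mkQ r M')
      have hker : LinearMap.ker (r • (LinearMap.id :
          LocCoh (maximalIdeal R) (i + 1) M' →ₗ[R] _)) =
          LinearMap.range (delta (maximalIdeal R) i (injective_smul hreg)
            (Submodule.mkQ_surjective _) (exact_smul_mkQ r M')) := by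
        rw [← hexact.linearMap_ker_eq]
        congr 1
        ext z
        exact (map_smul_id _ _ _ r z).symm
      have : IsArtinian R (LinearMap.ker (r • (LinearMap.id :
          LocCoh (maximalIdeal R) (i + 1) M' →ₗ[R] _))) := by
        rw [hker]
        exact isArtinian_range _
      exact (isPowTorsion_of_mem M' (maximalIdeal R) hr (i + 1)).isArtinian

end LocCoh

namespace LocCoh

open IsLocalRing

open scoped Pointwise

variable {R : Type u} [CommRing R] [IsNoetherianRing R] [IsLocalRing R]
  {M : Type u} [AddCommGroup M] [Module R M] [Module.Finite R M]

/-- Top local cohomology is computed by a system of parameters. -/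
lemma exists_list_forall_equiv {J : Ideal R} {d : ℕ} (hd : ringKrullDim (R ⧸ J) = d) :
    ∃ xs : List R, xs.length = d ∧ (Ideal.ofList xs ⊔ J).radical = maximalIdeal R ∧
      ∀ (N : Type u) [AddCommGroup N] [Module R N], (∀ y ∈ J, IsPowTorsion y N) →
        Nonempty (LocCoh (maximalIdeal R) d N ≃ₗ[R] locQuotList xs (ModuleCat.of R N)) := by
  obtain ⟨xs, rfl, hrad⟩ := exists_list_radical_eq_maximalIdeal hd
  refine ⟨xs, rfl, hrad, fun N _ _ hN => ?_⟩
  obtain ⟨e⟩ := nonempty_equiv_of_radical_sup_eq (M := N)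
    (hrad.trans (Ideal.IsPrime.radical inferInstance).symm) hN xs.length
  exact (LocCoh.ofList N xs).2.map fun e' => e.trans e'

lemma map_surjective_of_supportDim_lt {N : Type u} [AddCommGroup N] [Module R N]
    {g : M →ₗ[R] N} (hg : Function.Surjective g) {i : ℕ}
    (hM : Module.supportDim R M < (i + 1 : ℕ)) :
    Function.Surjective (map (maximalIdeal R) i g) := by
  intro z
  have hf : Function.Injective (LinearMap.ker g).subtype := Submodule.injective_subtype _
  have := subsingleton_of_supportDim_lt (R := R) (LinearMap.ker g)
    ((Module.supportDim_le_of_injective _ hf).trans_lt hM)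
  exact (exact_right (maximalIdeal R) i hf hg (LinearMap.exact_subtype_ker_map g) z).1
    (Subsingleton.elim _ _)

lemma exists_smul_eq_of_subsingleton {r : R} {i : ℕ}
    (hM : Module.supportDim R M < (i + 1 : ℕ))
    (h : Subsingleton (LocCoh (maximalIdeal R) i (QuotSMulTop r M)))
    (z : LocCoh (maximalIdeal R) i M) : ∃ w, r • w = z := by
  let f : M →ₗ[R] M := r • LinearMap.id
  have hrange : LinearMap.range f = r • (⊤ : Submodule R M) := by
    rw [← (exact_smul_mkQ r M).linearMap_ker_eq, Submodule.ker_mkQ]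
  have h' : Subsingleton (LocCoh (maximalIdeal R) i (M ⧸ LinearMap.range f)) := by
    rw [hrange]
    exact h
  obtain ⟨y, rfl⟩ := (exact_mid (maximalIdeal R) i (LinearMap.range f).injective_subtype
    (LinearMap.range f).mkQ_surjective (LinearMap.exact_subtype_mkQ _) z).1 (Subsingleton.elim _ _)
  obtain ⟨w, rfl⟩ := map_surjective_of_supportDim_lt f.surjective_rangeRestrict hM y
  have hcomp : (LinearMap.range f).subtype ∘ₗ f.rangeRestrict = r • LinearMap.id := rfl
  exact ⟨w, by rw [map_map, hcomp, map_smul_id]⟩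

lemma supportDim_quotient_range_zeroι {n : ℕ}
    (hM : Module.supportDim R M = (n + 1 : ℕ)) :
    Module.supportDim R (M ⧸ LinearMap.range (zeroι (maximalIdeal R) M)) = (n + 1 : ℕ) := by
  let G := LinearMap.range (zeroι (maximalIdeal R) M)
  have hG : ∀ y ∈ maximalIdeal R, IsPowTorsion y G := fun y hy => isPowTorsion_range_zeroι _ hy
  have hsupp : Module.support R M = Module.support R G ∪ Module.support R (M ⧸ G) :=
    Module.support_of_exact (LinearMap.exact_subtype_mkQ G) G.injective_subtype G.mkQ_surjective
  have hdimG : Module.supportDim R G ≤ 0 := by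
    rcases subsingleton_or_nontrivial G with h | h
    · rw [Module.supportDim_eq_bot_of_subsingleton]
      exact bot_le
    · exact supportDim_le_zero_of_maximalIdeal_mem_minimalPrimes
        (maximalIdeal_mem_minimalPrimes_annihilator hG)
  rcases subsingleton_or_nontrivial (M ⧸ G) with h | h
  · rw [Module.support_eq_empty (M := M ⧸ G), Set.union_empty] at hsupp
    rw [Module.supportDim, ← hsupp] at hdimG
    change Module.supportDim R M ≤ 0 at hdimG
    rw [hM] at hdimG
    have : n + 1 ≤ 0 := by exact_mod_cast hdimG
    omega
  · have hm : closedPoint R ∈ Module.support R (M ⧸ G) := by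
      obtain ⟨p, hp⟩ := Module.nonempty_support_of_nontrivial (R := R) (M := M ⧸ G)
      exact Module.mem_support_mono (le_maximalIdeal p.2.ne_top) hp
    have hGm : Module.support R G ⊆ {closedPoint R} := by
      intro p hp
      have : Nontrivial G := Module.nonempty_support_iff.1 ⟨p, hp⟩
      refine PrimeSpectrum.ext (le_antisymm (le_maximalIdeal p.2.ne_top) ?_)
      exact (maximalIdeal_mem_minimalPrimes_annihilator hG).2
        ⟨p.2, Module.mem_support_iff_of_finite.1 hp⟩ (le_maximalIdeal p.2.ne_top)
    have : Module.support R (M ⧸ G) = Module.support R M := by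
      rw [hsupp, Set.union_eq_self_of_subset_left]
      exact hGm.trans (Set.singleton_subset_iff.2 hm)
    rw [Module.supportDim, this]
    exact hM

/-- Grothendieck non-vanishing for the maximal ideal. -/
theorem nontrivial_of_supportDim_eq (n : ℕ) :
    ∀ (M : Type u) [AddCommGroup M] [Module R M] [Module.Finite R M],
      Module.supportDim R M = n → Nontrivial (LocCoh (maximalIdeal R) n M) := by
  induction n with
  | zero =>
    intro M _ _ _ hM
    have hne : Nontrivial M := by
      rw [← Module.supportDim_ne_bot_iff_nontrivial R, hM]
      exact WithBot.coe_ne_bot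
    rw [Module.supportDim_eq_ringKrullDim_quotient_annihilator] at hM
    obtain ⟨xs, hlen, -, he⟩ := exists_list_forall_equiv hM
    obtain rfl := List.eq_nil_of_length_eq_zero hlen
    obtain ⟨e⟩ := he M fun y hy => isPowTorsion_of_mem_annihilator hy
    exact e.toEquiv.nontrivial_congr.2 hne
  | succ n ih =>
    suffices H : ∀ (M : Type u) [AddCommGroup M] [Module R M] [Module.Finite R M],
        Module.supportDim R M = (n + 1 : ℕ) →
        (∀ x : M, (∀ a ∈ maximalIdeal R, a • x = 0) → x = 0) →
        Nontrivial (LocCoh (maximalIdeal R) (n + 1) M) by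
      intro M _ _ _ hM
      exact (quotientZeroEquiv M (maximalIdeal R) n).toEquiv.nontrivial_congr.2
        (H _ (supportDim_quotient_range_zeroι hM) (eq_zero_of_quotient_range_zeroι _))
    intro M _ _ _ hM hsoc
    rw [← not_subsingleton_iff_nontrivial]
    intro hzero
    have hdim : ∀ r ∈ maximalIdeal R, IsSMulRegular M r →
        Module.supportDim R (QuotSMulTop r M) = n := fun r hr hreg =>
      withBot_enat_eq_of_add_one_eq
        ((Module.supportDim_quotSMulTop_succ_eq_supportDim hreg hr).trans hM)
    have hexact : ∀ (r : R) (z : LocCoh (maximalIdeal R) n M), IsSMulRegular M r →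
        map (maximalIdeal R) n (Submodule.mkQ (r • (⊤ : Submodule R M))) z = 0 →
        ∃ w, r • w = z := by
      intro r z hreg hz
      obtain ⟨w, hw⟩ := (exact_mid (maximalIdeal R) n (injective_smul hreg)
        (Submodule.mkQ_surjective _) (exact_smul_mkQ r M) z).1 hz
      exact ⟨w, by rw [← hw, map_smul_id]⟩
    have hne : ∀ r ∈ maximalIdeal R, IsSMulRegular M r →
        ∃ z : LocCoh (maximalIdeal R) n M, ∀ w, r • w ≠ z := by
      intro r hr hreg
      by_contra! hcon
      have hnt := ih (QuotSMulTop r M) (hdim r hr hreg)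
      refine not_subsingleton (LocCoh (maximalIdeal R) n (QuotSMulTop r M))
        (subsingleton_of_forall_eq 0 fun y => ?_)
      obtain ⟨z, rfl⟩ := (exact_right (maximalIdeal R) n (injective_smul hreg)
        (Submodule.mkQ_surjective _) (exact_smul_mkQ r M) y).1 (Subsingleton.elim _ _)
      obtain ⟨w, rfl⟩ := hcon z
      exact (exact_mid (maximalIdeal R) n (injective_smul hreg)
        (Submodule.mkQ_surjective _) (exact_smul_mkQ r M) _).2 ⟨w, map_smul_id _ _ _ r w⟩
    cases n with
    | zero =>
      obtain ⟨r, hr, hreg, -⟩ := exists_isSMulRegular_notMem hsoc (S := ∅) Set.finite_empty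
        (by simp) (by simp)
      obtain ⟨z, hz⟩ := hne r hr hreg
      have : ∀ z : LocCoh (maximalIdeal R) 0 M, z = 0 := by
        intro z
        obtain ⟨t, ht⟩ := (mem_range_zeroι (maximalIdeal R)).1 ⟨z, rfl⟩
        refine zeroι_injective (maximalIdeal R) M (hreg.pow t ?_)
        simpa using ht (r ^ t) (Ideal.pow_mem_pow hr t)
      exact hz 0 (by rw [this z, smul_zero])
    | succ k =>
      have hart : IsArtinian R (LocCoh (maximalIdeal R) (k + 1) M) :=
        isArtinian (k + 3) M (by rw [hM]; exact_mod_cast Nat.lt_succ_self _) _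
      let T : Set (Submodule R (LocCoh (maximalIdeal R) (k + 1) M)) :=
        {N | ∃ s ∈ maximalIdeal R, IsSMulRegular M s ∧
          N = LinearMap.range (s • (LinearMap.id : LocCoh (maximalIdeal R) (k + 1) M →ₗ[R] _))}
      obtain ⟨s₀, hs₀, hreg₀, -⟩ := exists_isSMulRegular_notMem hsoc (S := ∅) Set.finite_empty
        (by simp) (by simp)
      obtain ⟨_, ⟨s, hs, hsreg, rfl⟩, hmin⟩ := WellFounded.has_min
        (wellFounded_lt (α := Submodule R (LocCoh (maximalIdeal R) (k + 1) M))) T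
        ⟨_, s₀, hs₀, hreg₀, rfl⟩
      have hdims := hdim s hs hsreg
      obtain ⟨r, hr, hreg, hrp⟩ := exists_isSMulRegular_notMem hsoc
        (S := (Module.annihilator R (QuotSMulTop s M)).minimalPrimes)
        (Ideal.finite_minimalPrimes_of_isNoetherianRing R _) (fun p hp => hp.1.1) (fun hmem => by
          have := supportDim_le_zero_of_maximalIdeal_mem_minimalPrimes hmem
          rw [hdims] at this
          have : k + 1 ≤ 0 := by exact_mod_cast this
          omega)
      have hdimr : Module.supportDim R (QuotSMulTop r (QuotSMulTop s M)) < (k + 1 : ℕ) := by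
        have h := Module.supportDim_quotSMulTop_succ_le_of_notMem_minimalPrimes hrp
        rw [hdims] at h
        exact withBot_enat_lt_of_add_one_lt (h.trans_lt (by exact_mod_cast Nat.lt_succ_self _))
      have hvan := subsingleton_of_supportDim_lt (R := R) (QuotSMulTop r (QuotSMulTop s M)) hdimr
      obtain ⟨z, hz⟩ := hne r hr hreg
      obtain ⟨y, hy⟩ := exists_smul_eq_of_subsingleton
        (by rw [hdims]; exact_mod_cast Nat.lt_succ_self _) hvan
        (map (maximalIdeal R) (k + 1) (Submodule.mkQ (s • (⊤ : Submodule R M))) z)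
      obtain ⟨w, rfl⟩ := (exact_right (maximalIdeal R) (k + 1) (injective_smul hsreg)
        (Submodule.mkQ_surjective _) (exact_smul_mkQ s M) y).1 (Subsingleton.elim _ _)
      obtain ⟨b, hb⟩ := hexact s (z - r • w) hsreg (by rw [map_sub, map_smul, hy, sub_self])
      have hle : LinearMap.range ((s * r) • (LinearMap.id :
          LocCoh (maximalIdeal R) (k + 1) M →ₗ[R] _)) ≤ LinearMap.range (s • LinearMap.id) := by
        rintro _ ⟨c, rfl⟩
        exact ⟨r • c, (mul_smul s r c).symm⟩
      have heq := eq_of_le_of_not_lt hle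
        (hmin _ ⟨s * r, Ideal.mul_mem_left _ _ hr, hsreg.mul hreg, rfl⟩)
      obtain ⟨c, hc⟩ : s • b ∈ LinearMap.range ((s * r) • (LinearMap.id :
          LocCoh (maximalIdeal R) (k + 1) M →ₗ[R] _)) := by
        rw [heq]
        exact ⟨b, rfl⟩
      refine hz (w + s • c) ?_
      have hc' : (s * r) • c = s • b := hc
      rw [smul_add, smul_smul, mul_comm r s, hc', hb, add_sub_cancel]

end LocCoh

section Support

variable {R : Type u} [CommRing R] {N : Type u} [AddCommGroup N] [Module R N]

lemma IsPowTorsion.add {x y : R} (hx : IsPowTorsion x N) (hy : IsPowTorsion y N) :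
    IsPowTorsion (x + y) N := by
  intro n
  have hx' : x ∈ (Ideal.torsionOf R N n).radical := hx n
  have hy' : y ∈ (Ideal.torsionOf R N n).radical := hy n
  exact add_mem hx' hy'

lemma support_subset_zeroLocus_of_isPowTorsion {J : Ideal R} (h : ∀ y ∈ J, IsPowTorsion y N) :
    Module.support R N ⊆ PrimeSpectrum.zeroLocus (J : Set R) := by
  intro p hp y hy
  obtain ⟨m, hm⟩ := Module.mem_support_iff'.1 hp
  obtain ⟨k, hk⟩ := h y hy m
  by_contra hyp
  exact hm (y ^ k) (fun hmem => hyp (p.2.mem_of_pow_mem k hmem)) hk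

lemma supportDim_le_of_isPowTorsion {J : Ideal R} (h : ∀ y ∈ J, IsPowTorsion y N) :
    Module.supportDim R N ≤ ringKrullDim (R ⧸ J) := by
  rw [ringKrullDim_quotient]
  exact Order.krullDim_le_of_strictMono
    (Set.inclusion (support_subset_zeroLocus_of_isPowTorsion h)) fun _ _ hab => hab

lemma supportDim_quotient_smul_top [Module.Finite R N] (I : Ideal R) :
    Module.supportDim R (N ⧸ (I • (⊤ : Submodule R N))) =
      ringKrullDim (R ⧸ (I ⊔ Module.annihilator R N)) := by
  rw [Module.supportDim, Module.support_quotient, Module.support_eq_zeroLocus,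
    ringKrullDim_quotient, PrimeSpectrum.zeroLocus_sup, Set.inter_comm]

end Support

namespace LocCoh

open IsLocalRing

variable {R : Type u} [CommRing R] [IsNoetherianRing R]

lemma isPowTorsion_of_mem_sup_annihilator (I : Ideal R) (M : Type u) [AddCommGroup M] [Module R M]
    (i : ℕ) {y : R} (hy : y ∈ I ⊔ Module.annihilator R M) : IsPowTorsion y (LocCoh I i M) := by
  obtain ⟨a, ha, b, hb, rfl⟩ := Submodule.mem_sup.1 hy
  exact (isPowTorsion_of_mem M I ha i).add
    (isPowTorsion I (isPowTorsion_of_mem_annihilator hb) i)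

/-- If the support of `N` has dimension less than `d`, then the `d`-th local cohomology, as computed
by a system of parameters, vanishes; `N` need not be finitely generated. -/
lemma subsingleton_locQuotList [IsLocalRing R] {J : Ideal R} {d : ℕ} {xs : List R}
    (he : ∀ (N : Type u) [AddCommGroup N] [Module R N], (∀ y ∈ J, IsPowTorsion y N) →
      Nonempty (LocCoh (maximalIdeal R) d N ≃ₗ[R] locQuotList xs (ModuleCat.of R N)))
    (N : Type u) [AddCommGroup N] [Module R N] (hN : ∀ y ∈ J, IsPowTorsion y N)
    (hd : Module.supportDim R N < d) : Subsingleton (locQuotList xs (ModuleCat.of R N)) := by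
  refine subsingleton_of_forall_eq 0 fun z => ?_
  obtain ⟨n, w, rfl⟩ := exists_locQuotListMap_span_singleton (ModuleCat.of R N) xs z
  let C : Submodule R N := Submodule.span R {n}
  have hinj : Function.Injective C.subtype := C.injective_subtype
  obtain ⟨e⟩ := he C fun y hy => (hN y hy).of_injective hinj
  have := subsingleton_of_supportDim_lt (R := R) C
    ((Module.supportDim_le_of_injective _ hinj).trans_lt hd)
  have := e.symm.toEquiv.subsingleton
  have hw : w = 0 := Subsingleton.elim _ _
  rw [hw, map_zero]

lemma nonempty_equiv_and_supportDim_eq [IsLocalRing R] (M : Type u) [AddCommGroup M] [Module R M]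
    [Module.Finite R M] (I : Ideal R) (c d : ℕ) (hn : Module.supportDim R M = (c + d : ℕ))
    (hd : Module.supportDim R (M ⧸ (I • (⊤ : Submodule R M))) = d)
    (h : ∀ i, c < i → Subsingleton (LocCoh I i M)) :
    Nonempty (LocCoh (maximalIdeal R) d (LocCoh I c M) ≃ₗ[R]
      LocCoh (maximalIdeal R) (c + d) M) ∧ Module.supportDim R (LocCoh I c M) = d := by
  rw [supportDim_quotient_smul_top] at hd
  have htors := fun y => isPowTorsion_of_mem_sup_annihilator I M c (y := y)
  obtain ⟨xs, hlen, hrad, he⟩ := exists_list_forall_equiv hd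
  obtain ⟨e₁⟩ := he (LocCoh I c M) htors
  obtain ⟨-, ⟨e₂⟩⟩ := sup_ofList I M c h xs
  rw [hlen] at e₂
  obtain ⟨e₃⟩ := nonempty_equiv_of_radical_sup_eq (M := M) (I := I ⊔ Ideal.ofList xs)
    (J := Module.annihilator R M) (K := maximalIdeal R)
    (by rw [sup_comm I, sup_assoc, hrad, Ideal.IsPrime.radical inferInstance])
    (fun y hy => isPowTorsion_of_mem_annihilator hy) (c + d)
  have e := e₁.trans (e₂.symm.trans e₃.symm)
  refine ⟨⟨e⟩, le_antisymm ((supportDim_le_of_isPowTorsion htors).trans_eq hd) ?_⟩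
  by_contra! hlt
  have := subsingleton_locQuotList he _ htors hlt
  have := nontrivial_of_supportDim_eq _ M hn
  exact not_subsingleton (LocCoh (maximalIdeal R) (c + d) M) (e₃.trans e₂).toEquiv.subsingleton

end LocCoh

/-- over a Noetherian local ring, for a finitely generated module `M` of
Krull dimension `n` and an ideal `I` with `dim (M/IM) = d`, if `cd(I,M) = n - d` then
`H^d_m(H^{n-d}_I(M)) ≅ H^n_m(M)` and `dim Supp H^{n-d}_I(M) = d`. -/
theorem localCohomology_iso_and_dim_support_of_cohomologicalDimension_eq_sub
    (R : Type u) [CommRing R] [IsNoetherianRing R] [IsLocalRing R]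
    (M : ModuleCat.{u} R) [Module.Finite R M] (I : Ideal R) (n d : ℕ)
    (hn : Order.krullDim (Module.support R M) = (n : WithBot ℕ∞))
    (hd : Order.krullDim
      (Module.support R (M ⧸ (I • (⊤ : Submodule R M)))) = (d : WithBot ℕ∞))
    (hcd : cohomologicalDimension I M = ((n - d : ℕ) : ℕ∞)) :
    Nonempty ((localCohomology (IsLocalRing.maximalIdeal R) d).obj
        ((localCohomology I (n - d)).obj M) ≅
      (localCohomology (IsLocalRing.maximalIdeal R) n).obj M) ∧
    Order.krullDim (Module.support R ((localCohomology I (n - d)).obj M))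
      = (d : WithBot ℕ∞) := by
  have hdn : d ≤ n := by
    have h : Module.supportDim R (M ⧸ (I • (⊤ : Submodule R M))) ≤ Module.supportDim R M :=
      Module.supportDim_le_of_surjective _ (Submodule.mkQ_surjective _)
    rw [Module.supportDim, hd, Module.supportDim, hn] at h
    exact_mod_cast h
  obtain ⟨c, rfl⟩ := Nat.exists_eq_add_of_le' hdn
  rw [Nat.add_sub_cancel] at hcd ⊢
  have hvan : ∀ i, c < i → Subsingleton (LocCoh I i M) := by
    intro i hi
    rw [← not_nontrivial_iff_subsingleton]
    intro hnt
    have h : (i : ℕ∞) ≤ cohomologicalDimension I M := le_sSup ⟨i, rfl, hnt⟩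
    rw [hcd] at h
    have : i ≤ c := by exact_mod_cast h
    omega
  obtain ⟨⟨e⟩, hdim⟩ := LocCoh.nonempty_equiv_and_supportDim_eq M I c d hn hd hvan
  exact ⟨⟨LinearEquiv.toModuleIso (X₁ := (localCohomology (IsLocalRing.maximalIdeal R) d).obj
        ((localCohomology I c).obj M))
      (X₂ := (localCohomology (IsLocalRing.maximalIdeal R) (c + d)).obj M) e⟩, hdim⟩
end

section
/- Let (R, m) be a commutative Noetherian local ring of Krull dimension n and let I be an ideal of R such that cd(I) = ht(I), where cd(I) = cd(I,R) and ht(I) is the height of I. Then dim(R) = ht(I) + dim(R/I). -/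
universe u

open CategoryTheory

/-- The height of an ideal: the infimum of the heights of the prime ideals containing it. -/
noncomputable def idealHeight {R : Type u} [CommRing R] (I : Ideal R) : ℕ∞ :=
  ⨅ (p : PrimeSpectrum R) (_ : I ≤ p.asIdeal), Order.height p

namespace ExtColim

open CategoryTheory.Abelian

variable {R : Type u} [CommRing R]

/-- The quotient map `R ⧸ I ^ l → R ⧸ I ^ k` for `k ≤ l`. -/
def proj (I : Ideal R) {k l : ℕ} (h : k ≤ l) :
    ModuleCat.of R (R ⧸ I ^ l) ⟶ ModuleCat.of R (R ⧸ I ^ k) :=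
  ModuleCat.ofHom (Submodule.mapQ _ _ LinearMap.id (Ideal.pow_le_pow_right h))

lemma proj_refl (I : Ideal R) (k : ℕ) : proj I (le_refl k) = 𝟙 _ := by
  ext
  rfl

lemma proj_comp (I : Ideal R) {k l m : ℕ} (h : k ≤ l) (h' : l ≤ m) :
    proj I h' ≫ proj I h = proj I (h.trans h') := by
  ext
  rfl

/-- Restriction of `Ext` classes along `R ⧸ I ^ l → R ⧸ I ^ k`. -/
noncomputable def res (I : Ideal R) (i : ℕ) (M : Type u) [AddCommGroup M] [Module R M]
    (k l : ℕ) (h : k ≤ l) :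
    Ext (ModuleCat.of R (R ⧸ I ^ k)) (ModuleCat.of R M) i →ₗ[R]
      Ext (ModuleCat.of R (R ⧸ I ^ l)) (ModuleCat.of R M) i where
  toFun x := (Ext.mk₀ (proj I h)).comp x (zero_add i)
  map_add' := by simp
  map_smul' := by simp

instance (I : Ideal R) (i : ℕ) (M : Type u) [AddCommGroup M] [Module R M] :
    DirectedSystem (fun k : ℕ => Ext (ModuleCat.of R (R ⧸ I ^ k)) (ModuleCat.of R M) i)
      (fun k l h => res I i M k l h) where
  map_self k x := by simp [res, proj_refl]
  map_map k l m h h' x := by simp [res, proj_comp]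

end ExtColim

/-- The module `colim_k Ext^i(R/I^k, M)`. -/
abbrev ExtColim {R : Type u} [CommRing R] (I : Ideal R) (i : ℕ) (M : Type u) [AddCommGroup M]
    [Module R M] : Type u :=
  Module.DirectLimit (fun k : ℕ => Abelian.Ext (ModuleCat.of R (R ⧸ I ^ k)) (ModuleCat.of R M) i)
    (ExtColim.res I i M)

namespace ExtColim

open CategoryTheory.Abelian

variable {R : Type u} [CommRing R] {I : Ideal R} {i : ℕ}
  {M N L : Type u} [AddCommGroup M] [Module R M] [AddCommGroup N] [Module R N]
  [AddCommGroup L] [Module R L]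

/-- The class in the colimit of an element of `Ext^i(R/I^k, M)`. -/
noncomputable abbrev of (k : ℕ) (x : Ext (ModuleCat.of R (R ⧸ I ^ k)) (ModuleCat.of R M) i) :
    ExtColim I i M :=
  Module.DirectLimit.of R ℕ _ _ k x

lemma exists_of (z : ExtColim I i M) : ∃ k x, of k x = z := by
  obtain ⟨k, x, h⟩ := Module.DirectLimit.exists_of z
  exact ⟨k, x, h⟩

lemma of_eq_zero_iff {k : ℕ} (x : Ext (ModuleCat.of R (R ⧸ I ^ k)) (ModuleCat.of R M) i) :
    of k x = 0 ↔ ∃ (l : ℕ) (h : k ≤ l), (Ext.mk₀ (proj I h)).comp x (zero_add i) = 0 := by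
  constructor
  · exact fun h => Module.DirectLimit.of.zero_exact h
  · rintro ⟨l, h, hl⟩
    have : of l (res I i M k l h x) = of k x := Module.DirectLimit.of_f
    rw [← this]
    exact (congrArg (of l) hl).trans (map_zero _)

lemma of_res {k l : ℕ} (h : k ≤ l) (x : Ext (ModuleCat.of R (R ⧸ I ^ k)) (ModuleCat.of R M) i) :
    of l ((Ext.mk₀ (proj I h)).comp x (zero_add i)) = of k x :=
  Module.DirectLimit.of_f (f := res I i M)

variable (I i) in
/-- Functoriality of the colimit of `Ext` modules. -/
noncomputable def map (f : M →ₗ[R] N) : ExtColim I i M →ₗ[R] ExtColim I i N :=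
  Module.DirectLimit.map
    (fun _ => { toFun := fun x => x.comp (Ext.mk₀ (ModuleCat.ofHom f)) (add_zero i)
                map_add' := by simp
                map_smul' := by simp })
    (fun k l h => by ext x; simp [res])

@[simp] lemma map_of (f : M →ₗ[R] N) (k : ℕ)
    (x : Ext (ModuleCat.of R (R ⧸ I ^ k)) (ModuleCat.of R M) i) :
    map I i f (of k x) = of k (x.comp (Ext.mk₀ (ModuleCat.ofHom f)) (add_zero i)) :=
  Module.DirectLimit.map_apply_of ..

lemma map_comp (g : N →ₗ[R] L) (f : M →ₗ[R] N) : map I i (g ∘ₗ f) = map I i g ∘ₗ map I i f := by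
  refine LinearMap.ext fun z => ?_
  obtain ⟨k, x, rfl⟩ := exists_of z
  simp [ModuleCat.ofHom_comp]

lemma map_id : map I i (LinearMap.id : M →ₗ[R] M) = LinearMap.id := by
  refine LinearMap.ext fun z => ?_
  obtain ⟨k, x, rfl⟩ := exists_of z
  simp

lemma map_add (f g : M →ₗ[R] N) : map I i (f + g) = map I i f + map I i g := by
  refine LinearMap.ext fun z => ?_
  obtain ⟨k, x, rfl⟩ := exists_of z
  simp [ModuleCat.ofHom_add, Ext.mk₀_add]

lemma map_smul (r : R) (f : M →ₗ[R] N) : map I i (r • f) = r • map I i f := by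
  refine LinearMap.ext fun z => ?_
  obtain ⟨k, x, rfl⟩ := exists_of z
  have h : ModuleCat.ofHom (r • f) = r • ModuleCat.ofHom f := rfl
  simp [h, Ext.mk₀_smul]

lemma map_sum {ι : Type*} (s : Finset ι) (f : ι → M →ₗ[R] N) :
    map I i (∑ a ∈ s, f a) = ∑ a ∈ s, map I i (f a) :=
  _root_.map_sum (AddMonoidHom.mk' (map I i (M := M) (N := N)) map_add) f s

/-- The short complex of modules attached to an exact pair of linear maps. -/
abbrev shortComplex {f : M →ₗ[R] N} {g : N →ₗ[R] L} (h : Function.Exact f g) :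
    ShortComplex (ModuleCat.{u} R) :=
  ShortComplex.mk (ModuleCat.ofHom f) (ModuleCat.ofHom g) (by ext x; exact h.apply_apply_eq_zero x)

lemma shortComplex_shortExact {f : M →ₗ[R] N} {g : N →ₗ[R] L} (hf : Function.Injective f)
    (hg : Function.Surjective g) (h : Function.Exact f g) : (shortComplex h).ShortExact where
  exact := (ShortComplex.ShortExact.moduleCat_exact_iff_function_exact _).2 h
  mono_f := (ModuleCat.mono_iff_injective _).2 hf
  epi_g := (ModuleCat.epi_iff_surjective _).2 hg

section LongExactSequence

variable {f : M →ₗ[R] N} {g : N →ₗ[R] L} (hf : Function.Injective f)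
    (hg : Function.Surjective g) (h : Function.Exact f g)

variable (I i) in
/-- The connecting homomorphism. -/
noncomputable def δ : ExtColim I i L →ₗ[R] ExtColim I (i + 1) M :=
  Module.DirectLimit.map
    (fun _ => { toFun := fun x => x.comp (shortComplex_shortExact hf hg h).extClass rfl
                map_add' := by simp
                map_smul' := by simp })
    (fun k l hkl => by
      refine LinearMap.ext fun x => ?_
      simp only [res, LinearMap.comp_apply, LinearMap.coe_mk, AddHom.coe_mk]
      exact Ext.comp_assoc _ _ _ (zero_add i) rfl (by omega))

@[simp] lemma δ_of (k : ℕ) (x : Ext (ModuleCat.of R (R ⧸ I ^ k)) (ModuleCat.of R L) i) :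
    δ I i hf hg h (of k x) = of k (x.comp (shortComplex_shortExact hf hg h).extClass rfl) :=
  Module.DirectLimit.map_apply_of ..

include hf hg h in
lemma exact_map_map : Function.Exact (map I i f) (map I i g) := by
  intro z
  constructor
  · intro hz
    obtain ⟨k, x, rfl⟩ := exists_of z
    rw [map_of, of_eq_zero_iff] at hz
    obtain ⟨l, hl, hz⟩ := hz
    obtain ⟨y, hy⟩ := Ext.covariant_sequence_exact₂ _ (shortComplex_shortExact hf hg h)
      ((Ext.mk₀ (proj I hl)).comp x (zero_add i)) (by simpa using hz)
    exact ⟨of l y, by rw [map_of, ← of_res hl, ← hy]⟩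
  · rintro ⟨z, rfl⟩
    rw [← LinearMap.comp_apply, ← map_comp, h.linearMap_comp_eq_zero]
    obtain ⟨k, x, rfl⟩ := exists_of z
    simp

lemma exact_map_δ : Function.Exact (map I i g) (δ I i hf hg h) := by
  intro z
  constructor
  · intro hz
    obtain ⟨k, x, rfl⟩ := exists_of z
    rw [δ_of, of_eq_zero_iff] at hz
    obtain ⟨l, hl, hz⟩ := hz
    obtain ⟨y, hy⟩ := Ext.covariant_sequence_exact₃ _ (shortComplex_shortExact hf hg h)
      ((Ext.mk₀ (proj I hl)).comp x (zero_add i)) rfl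
      ((Ext.comp_assoc _ _ _ (zero_add i) rfl (by omega)).trans hz)
    exact ⟨of l y, by rw [map_of, ← of_res hl, ← hy]⟩
  · rintro ⟨z, rfl⟩
    obtain ⟨k, x, rfl⟩ := exists_of z
    have := Ext.comp_assoc x (Ext.mk₀ (ModuleCat.ofHom g))
      (shortComplex_shortExact hf hg h).extClass (add_zero i) (zero_add 1) rfl
    rw [map_of, δ_of, this, (shortComplex_shortExact hf hg h).comp_extClass, Ext.comp_zero]
    exact map_zero _

lemma exact_δ_map : Function.Exact (δ I i hf hg h) (map I (i + 1) f) := by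
  intro z
  constructor
  · intro hz
    obtain ⟨k, x, rfl⟩ := exists_of z
    rw [map_of, of_eq_zero_iff] at hz
    obtain ⟨l, hl, hz⟩ := hz
    obtain ⟨y, hy⟩ := Ext.covariant_sequence_exact₁ _ (shortComplex_shortExact hf hg h)
      ((Ext.mk₀ (proj I hl)).comp x (zero_add _)) (by simpa using hz) rfl
    exact ⟨of l y, by rw [δ_of, ← of_res hl, ← hy]⟩
  · rintro ⟨z, rfl⟩
    obtain ⟨k, x, rfl⟩ := exists_of z
    have := Ext.comp_assoc x (shortComplex_shortExact hf hg h).extClass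
      (Ext.mk₀ (ModuleCat.ofHom f)) rfl (add_zero 1) rfl
    rw [δ_of, map_of, this, (shortComplex_shortExact hf hg h).extClass_comp, Ext.comp_zero]
    exact map_zero _

end LongExactSequence

end ExtColim

/-- The submodule of elements annihilated by some power of the ideal `I`. -/
def powTorsion {R : Type*} [CommRing R] (I : Ideal R) (M : Type*) [AddCommGroup M] [Module R M] :
    Submodule R M where
  carrier := {x | ∃ k : ℕ, ∀ a ∈ I ^ k, a • x = 0}
  add_mem' := by
    rintro x y ⟨k, hk⟩ ⟨l, hl⟩
    refine ⟨k + l, fun a ha => ?_⟩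
    rw [smul_add, hk a (Ideal.pow_le_pow_right (by omega) ha),
      hl a (Ideal.pow_le_pow_right (by omega) ha), add_zero]
  zero_mem' := ⟨0, fun a _ => smul_zero a⟩
  smul_mem' := by
    rintro r x ⟨k, hk⟩
    exact ⟨k, fun a ha => by rw [smul_comm, hk a ha, smul_zero]⟩

lemma map_mem_powTorsion {R : Type*} [CommRing R] {I : Ideal R} {M N : Type*} [AddCommGroup M]
    [Module R M] [AddCommGroup N] [Module R N] (f : M →ₗ[R] N) {x : M}
    (hx : x ∈ powTorsion I M) : f x ∈ powTorsion I N := by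
  obtain ⟨k, hk⟩ := hx
  exact ⟨k, fun a ha => by rw [← f.map_smul, hk a ha, f.map_zero]⟩

lemma mem_powTorsion_of_map {R : Type*} [CommRing R] {I : Ideal R} {M N : Type*} [AddCommGroup M]
    [Module R M] [AddCommGroup N] [Module R N] {f : M →ₗ[R] N} (hf : Function.Injective f) {x : M}
    (hx : f x ∈ powTorsion I N) : x ∈ powTorsion I M := by
  obtain ⟨k, hk⟩ := hx
  exact ⟨k, fun a ha => hf (by rw [f.map_smul, hk a ha, f.map_zero])⟩

lemma exists_injective_embedding (R : Type u) [CommRing R] (M : Type u) [AddCommGroup M]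
    [Module R M] : ∃ (E : ModuleCat.{u} R) (_ : Module.Injective R E) (f : M →ₗ[R] E),
      Function.Injective f := by
  obtain ⟨E, hE, f, hf⟩ := EnoughInjectives.presentation (ModuleCat.of R M)
  exact ⟨E, (Module.injective_iff_injective_object R E).2 hE, f.hom,
    (ModuleCat.mono_iff_injective f).1 hf⟩

namespace ExtColim

open CategoryTheory.Abelian

variable {R : Type u} [CommRing R] {I : Ideal R} {i : ℕ}
  {M N L : Type u} [AddCommGroup M] [Module R M] [AddCommGroup N] [Module R N]
  [AddCommGroup L] [Module R L]

lemma mem_powTorsion (z : ExtColim I i M) : z ∈ powTorsion I (ExtColim I i M) := by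
  obtain ⟨k, x, rfl⟩ := exists_of z
  refine ⟨k, fun a ha => ?_⟩
  have h : a • 𝟙 (ModuleCat.of R (R ⧸ I ^ k)) = 0 := by
    ext
    exact Ideal.Quotient.eq_zero_iff_mem.2 (by simpa using ha)
  have : a • x = 0 := by
    rw [← Ext.mk₀_id_comp x, ← Ext.smul_comp, ← Ext.mk₀_smul, h, Ext.mk₀_zero, Ext.zero_comp]
  rw [of, ← LinearMap.map_smul, this]
  exact map_zero _

variable (I M) in
/-- Evaluation of a homomorphism `R ⧸ I ^ k → M` at `1`. -/
noncomputable def ev : ExtColim I 0 M →ₗ[R] M :=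
  Module.DirectLimit.lift R ℕ _ _
    (fun k =>
      { toFun := fun x => (Ext.linearEquiv₀ (R := R) x).hom (Submodule.Quotient.mk 1)
        map_add' := by simp
        map_smul' := by simp })
    (fun k l h x => by
      obtain ⟨x, rfl⟩ := (Ext.linearEquiv₀ (R := R)).symm.surjective x
      simp only [res, LinearMap.coe_mk, AddHom.coe_mk, LinearEquiv.apply_symm_apply]
      change (Ext.linearEquiv₀ (R := R) ((Ext.mk₀ (proj I h)).comp (Ext.mk₀ x) _)).hom _ = _
      rw [Ext.mk₀_comp_mk₀]
      change (Ext.linearEquiv₀ (R := R) ((Ext.linearEquiv₀ (R := R)).symm (proj I h ≫ x))).hom _ = _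
      rw [LinearEquiv.apply_symm_apply]
      rfl)

lemma ev_of_mk₀ (k : ℕ) (φ : ModuleCat.of R (R ⧸ I ^ k) ⟶ ModuleCat.of R M) :
    ev I M (of k (Ext.mk₀ φ)) = φ.hom (Submodule.Quotient.mk 1) := by
  refine (Module.DirectLimit.lift_of ..).trans ?_
  change (Ext.linearEquiv₀ (R := R) ((Ext.linearEquiv₀ (R := R)).symm φ)).hom _ = _
  rw [LinearEquiv.apply_symm_apply]

lemma exists_of_mk₀ (z : ExtColim I 0 M) :
    ∃ (k : ℕ) (φ : ModuleCat.of R (R ⧸ I ^ k) ⟶ ModuleCat.of R M), of k (Ext.mk₀ φ) = z := by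
  obtain ⟨k, x, rfl⟩ := exists_of z
  exact ⟨k, Ext.homEquiv₀ x, by rw [Ext.mk₀_homEquiv₀_apply]⟩

lemma ev_map (f : M →ₗ[R] N) (z : ExtColim I 0 M) : ev I N (map I 0 f z) = f (ev I M z) := by
  obtain ⟨k, φ, rfl⟩ := exists_of_mk₀ z
  rw [map_of, Ext.mk₀_comp_mk₀, ev_of_mk₀, ev_of_mk₀]
  rfl

lemma ev_injective : Function.Injective (ev I M) := by
  rw [injective_iff_map_eq_zero]
  intro z hz
  obtain ⟨k, φ, rfl⟩ := exists_of_mk₀ z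
  rw [ev_of_mk₀] at hz
  have : φ = 0 := by
    ext
    exact hz
  rw [this, Ext.mk₀_zero]
  exact map_zero _

lemma range_ev : LinearMap.range (ev I M) = powTorsion I M := by
  refine le_antisymm ?_ ?_
  · rintro _ ⟨z, rfl⟩
    exact map_mem_powTorsion _ (mem_powTorsion z)
  · rintro x ⟨k, hk⟩
    refine ⟨of k (Ext.mk₀ (ModuleCat.ofHom ((I ^ k).liftQ (LinearMap.toSpanSingleton R M x)
      (fun a ha => by simpa using hk a ha)))), ?_⟩
    rw [ev_of_mk₀]
    exact one_smul R x

lemma subsingleton_of_injective [Module.Injective R M] : Subsingleton (ExtColim I (i + 1) M) := by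
  have : Injective (ModuleCat.of R M) := Module.injective_object_of_injective_module R M
  refine subsingleton_of_forall_eq 0 fun z => ?_
  obtain ⟨k, x, rfl⟩ := exists_of z
  rw [Ext.eq_zero_of_injective x]
  exact map_zero _

variable {f : M →ₗ[R] N} {g : N →ₗ[R] L} (hf : Function.Injective f)
    (hg : Function.Surjective g) (h : Function.Exact f g)

include hf hg h

lemma subsingleton_right (h₁ : Subsingleton (ExtColim I i N))
    (h₂ : Subsingleton (ExtColim I (i + 1) M)) : Subsingleton (ExtColim I i L) := by
  refine subsingleton_of_forall_eq 0 fun z => ?_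
  obtain ⟨y, rfl⟩ := (exact_map_δ hf hg h z).1 (Subsingleton.elim _ _)
  rw [Subsingleton.elim y 0, map_zero]

lemma subsingleton_left (h₁ : Subsingleton (ExtColim I i L))
    (h₂ : Subsingleton (ExtColim I (i + 1) N)) : Subsingleton (ExtColim I (i + 1) M) := by
  refine subsingleton_of_forall_eq 0 fun z => ?_
  obtain ⟨y, rfl⟩ := (exact_δ_map hf hg h z).1 (Subsingleton.elim _ _)
  rw [Subsingleton.elim y 0, map_zero]

lemma subsingleton_succ_succ_iff [Module.Injective R N] :
    Subsingleton (ExtColim I (i + 2) M) ↔ Subsingleton (ExtColim I (i + 1) L) :=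
  ⟨fun h₁ => subsingleton_right hf hg h subsingleton_of_injective h₁,
    fun h₁ => subsingleton_left hf hg h h₁ subsingleton_of_injective⟩

lemma subsingleton_one_iff [Module.Injective R N] :
    Subsingleton (ExtColim I 1 M) ↔ ∀ z ∈ powTorsion I L, ∃ y ∈ powTorsion I N, g y = z := by
  constructor
  · intro h₁ z hz
    rw [← range_ev] at hz
    obtain ⟨w, rfl⟩ := hz
    obtain ⟨y, rfl⟩ := (exact_map_δ hf hg h w).1 (Subsingleton.elim _ _)
    exact ⟨ev I N y, range_ev (I := I) (M := N) ▸ LinearMap.mem_range_self _ _, (ev_map _ _).symm⟩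
  · intro h₁
    have := subsingleton_of_injective (I := I) (i := 0) (M := N)
    refine subsingleton_of_forall_eq 0 fun z => ?_
    obtain ⟨w, rfl⟩ := (exact_δ_map hf hg h z).1 (Subsingleton.elim _ _)
    obtain ⟨y, hy, hyw⟩ := h₁ (ev I L w) (range_ev (I := I) (M := L) ▸ LinearMap.mem_range_self _ _)
    rw [← range_ev] at hy
    obtain ⟨v, rfl⟩ := hy
    rw [← ev_map] at hyw
    exact (exact_map_δ hf hg h w).2 ⟨v, ev_injective hyw⟩

end ExtColim

section PowTorsion

variable {R : Type*} [CommRing R] {I J : Ideal R} {M : Type*} [AddCommGroup M] [Module R M]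

lemma powTorsion_le_of_pow_le {k : ℕ} (h : J ^ k ≤ I) : powTorsion I M ≤ powTorsion J M := by
  rintro x ⟨l, hl⟩
  exact ⟨k * l, fun a ha => hl a (Ideal.pow_right_mono h l (pow_mul J k l ▸ ha))⟩

lemma powTorsion_antitone (h : J ≤ I) : powTorsion I M ≤ powTorsion J M :=
  powTorsion_le_of_pow_le (k := 1) (by rwa [pow_one])

lemma mem_powTorsion_sup_span_singleton_iff {x : R} {y : M} :
    y ∈ powTorsion (I ⊔ Ideal.span {x}) M ↔ y ∈ powTorsion I M ∧ ∃ k : ℕ, x ^ k • y = 0 := by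
  constructor
  · intro hy
    refine ⟨powTorsion_antitone le_sup_left hy, ?_⟩
    obtain ⟨k, hk⟩ := hy
    exact ⟨k, hk _ (Ideal.pow_mem_pow (Ideal.mem_sup_right (Ideal.mem_span_singleton_self x)) k)⟩
  · rintro ⟨⟨k, hk⟩, l, hl⟩
    refine ⟨k + l, fun a ha => ?_⟩
    obtain ⟨b, hb, c, hc, rfl⟩ := Submodule.mem_sup.1 (Ideal.sup_pow_add_le_pow_sup_pow ha)
    rw [Ideal.span_singleton_pow] at hc
    obtain ⟨r, rfl⟩ := Ideal.mem_span_singleton'.1 hc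
    rw [add_smul, hk b hb, mul_smul, hl, smul_zero, add_zero]

end PowTorsion

/-- Approximate divisibility of power torsion elements of an injective module. -/
lemma exists_mem_powTorsion_of_injective {R : Type u} [CommRing R] [IsNoetherianRing R]
    {I : Ideal R} {E : Type u} [AddCommGroup E] [Module R E] [Module.Injective R E] (x : R)
    (k : ℕ) {y : E} (hy : y ∈ powTorsion I E) :
    ∃ y' ∈ powTorsion I E, ∃ l : ℕ, x ^ l • (y - x ^ k • y') = 0 := by
  obtain ⟨a, ha⟩ := hy
  obtain ⟨l, hl⟩ := monotone_stabilizes_iff_noetherian.2 (inferInstance : IsNoetherian R R)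
    (LinearMap.lsmul R R x).iterateKer
  have hl' (r : R) (hr : x ^ (k + l) * r = 0) : x ^ l * r = 0 := by
    have := hl (k + l) (by omega)
    have hpow (n : ℕ) (s : R) : ((LinearMap.lsmul R R x) ^ n) s = x ^ n * s := by
      induction n with
      | zero => simp
      | succ n ih => rw [pow_succ', Module.End.mul_apply, ih, pow_succ']; simp [mul_assoc]
    have h2 : r ∈ (LinearMap.lsmul R R x).iterateKer (k + l) :=
      LinearMap.mem_ker.2 ((hpow _ _).trans hr)
    rw [← this] at h2
    exact (hpow _ _).symm.trans (LinearMap.mem_ker.1 h2)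
  obtain ⟨m₀, hm₀⟩ := Ideal.exists_pow_inf_eq_pow_smul I (Ideal.span {x ^ (k + l)} : Submodule R R)
  let f : R →ₗ[R] R ⧸ I ^ (m₀ + a) :=
    (I ^ (m₀ + a)).mkQ ∘ₗ LinearMap.toSpanSingleton R R (x ^ (k + l))
  let g : R →ₗ[R] E := LinearMap.toSpanSingleton R E (x ^ l • y)
  have hfg : LinearMap.ker f ≤ LinearMap.ker g := by
    intro r hr
    have h1 : r * x ^ (k + l) ∈ I ^ (m₀ + a) := by
      simpa [f, Ideal.Quotient.eq_zero_iff_mem, ← map_pow, ← map_mul, smul_eq_mul] using hr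
    have h2 : r * x ^ (k + l) ∈ I ^ (m₀ + a) • ⊤ ⊓ (Ideal.span {x ^ (k + l)} : Submodule R R) :=
      ⟨by simpa using h1, Ideal.mem_span_singleton'.2 ⟨r, rfl⟩⟩
    rw [hm₀ _ (by omega), Nat.add_sub_cancel_left] at h2
    have h3 : r * x ^ (k + l) ∈ I ^ a • (Ideal.span {x ^ (k + l)} : Submodule R R) :=
      Submodule.smul_mono le_rfl inf_le_right h2
    obtain ⟨s, hs, hs'⟩ := Ideal.mem_mul_span_singleton.1 h3
    have h4 := hl' (r - s) (by rw [mul_sub, mul_comm _ r, mul_comm _ s, hs', sub_self])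
    have h5 : x ^ l * r = x ^ l * s := by rwa [mul_sub, sub_eq_zero] at h4
    simp only [g, LinearMap.mem_ker, LinearMap.toSpanSingleton_apply]
    rw [← mul_smul, mul_comm, h5, mul_smul, ha s hs, smul_zero]
  obtain ⟨h, hh⟩ := Module.Injective.extension_property R E _ _
    ((LinearMap.ker f).liftQ f le_rfl) (LinearMap.ker_eq_bot.1 (Submodule.ker_liftQ_eq_bot _ _ _ le_rfl))
    ((LinearMap.ker f).liftQ g hfg)
  refine ⟨h (Submodule.Quotient.mk 1), ⟨m₀ + a, fun b hb => ?_⟩, l, ?_⟩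
  · rw [← h.map_smul, ← Submodule.Quotient.mk_smul,
      (Submodule.Quotient.mk_eq_zero _).2 (by simpa using hb), h.map_zero]
  · have := LinearMap.congr_fun hh (Submodule.Quotient.mk 1)
    simp only [LinearMap.comp_apply, Submodule.liftQ_apply, f, g,
      LinearMap.toSpanSingleton_apply, one_smul] at this
    rw [smul_sub, ← this, ← mul_smul, ← h.map_smul, ← pow_add, sub_eq_zero]
    congr 1
    rw [add_comm l, ← Submodule.Quotient.mk_smul, smul_eq_mul, mul_one]
    rfl

/-- Vanishing of the modules `colim_k Ext^i(R/I^k, M)` for `i > c`. -/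
def ExtColim.VanishesAbove {R : Type u} [CommRing R] (I : Ideal R) (M : Type u) [AddCommGroup M]
    [Module R M] (c : ℕ) : Prop :=
  ∀ i, c < i → Subsingleton (ExtColim I i M)

namespace ExtColim

variable {R : Type u} [CommRing R] {I : Ideal R}
  {M : Type u} [AddCommGroup M] [Module R M]

lemma subsingleton_succ_iff_of_powTorsion_eq {J : Ideal R}
    (h : ∀ (N : Type u) [AddCommGroup N] [Module R N], powTorsion I N = powTorsion J N) (i : ℕ)
    (M : Type u) [AddCommGroup M] [Module R M] :
    Subsingleton (ExtColim I (i + 1) M) ↔ Subsingleton (ExtColim J (i + 1) M) := by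
  induction i generalizing M with
  | zero =>
    obtain ⟨E, _, f, hf⟩ := exists_injective_embedding R M
    have hg := Submodule.mkQ_surjective (LinearMap.range f)
    have he := LinearMap.exact_map_mkQ_range f
    rw [subsingleton_one_iff hf hg he, subsingleton_one_iff hf hg he, h, h]
  | succ i ih =>
    obtain ⟨E, _, f, hf⟩ := exists_injective_embedding R M
    have hg := Submodule.mkQ_surjective (LinearMap.range f)
    have he := LinearMap.exact_map_mkQ_range f
    rw [subsingleton_succ_succ_iff hf hg he, subsingleton_succ_succ_iff hf hg he]
    exact ih _

lemma vanishesAbove_iff_of_pow_le {J : Ideal R} {k l : ℕ} (h : I ^ k ≤ J) (h' : J ^ l ≤ I)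
    {c : ℕ} : VanishesAbove I M c ↔ VanishesAbove J M c := by
  refine forall_congr' fun i => imp_congr_right fun hi => ?_
  obtain ⟨i, rfl⟩ : ∃ i', i = i' + 1 := ⟨i - 1, by omega⟩
  exact subsingleton_succ_iff_of_powTorsion_eq
    (fun _ _ _ => le_antisymm (powTorsion_le_of_pow_le h') (powTorsion_le_of_pow_le h)) i M

lemma VanishesAbove.mono {c d : ℕ} (h : VanishesAbove I M c) (hcd : c ≤ d) :
    VanishesAbove I M d :=
  fun i hi => h i (by omega)

variable (M) in
lemma vanishesAbove_bot : VanishesAbove (⊥ : Ideal R) M 0 := by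
  intro i hi
  obtain ⟨i, rfl⟩ : ∃ i', i = i' + 1 := ⟨i - 1, by omega⟩
  clear hi
  have htop (N : Type u) [AddCommGroup N] [Module R N] (y : N) :
      y ∈ powTorsion (⊥ : Ideal R) N :=
    ⟨1, fun a ha => by rw [pow_one, Ideal.mem_bot] at ha; rw [ha, zero_smul]⟩
  induction i generalizing M with
  | zero =>
    obtain ⟨E, _, f, hf⟩ := exists_injective_embedding R M
    refine (subsingleton_one_iff hf (Submodule.mkQ_surjective (LinearMap.range f))
      (LinearMap.exact_map_mkQ_range f)).2 fun z _ => ?_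
    obtain ⟨y, rfl⟩ := Submodule.mkQ_surjective _ z
    exact ⟨y, htop _ y, rfl⟩
  | succ i ih =>
    obtain ⟨E, _, f, hf⟩ := exists_injective_embedding R M
    rw [subsingleton_succ_succ_iff hf (Submodule.mkQ_surjective (LinearMap.range f))
      (LinearMap.exact_map_mkQ_range f)]
    exact ih _

lemma vanishesAbove_succ_iff {E L : Type u} [AddCommGroup E] [Module R E] [AddCommGroup L]
    [Module R L] [Module.Injective R E] {f : M →ₗ[R] E} {g : E →ₗ[R] L}
    (hf : Function.Injective f) (hg : Function.Surjective g) (h : Function.Exact f g) {c : ℕ} :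
    VanishesAbove I M (c + 1) ↔ VanishesAbove I L c := by
  constructor
  · intro h₁ i hi
    obtain ⟨i, rfl⟩ : ∃ i', i = i' + 1 := ⟨i - 1, by omega⟩
    exact (subsingleton_succ_succ_iff hf hg h).1 (h₁ _ (by omega))
  · intro h₁ i hi
    obtain ⟨i, rfl⟩ : ∃ i', i = i' + 2 := ⟨i - 2, by omega⟩
    exact (subsingleton_succ_succ_iff hf hg h).2 (h₁ _ (by omega))

lemma VanishesAbove.sup_span_singleton_one [IsNoetherianRing R] (h : VanishesAbove I M 0)
    (x : R) : VanishesAbove (I ⊔ Ideal.span {x}) M 1 := by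
  intro i hi
  obtain ⟨i, rfl⟩ : ∃ i', i = i' + 2 := ⟨i - 2, by omega⟩
  clear hi
  induction i generalizing M with
  | zero =>
    obtain ⟨E, _, f, hf⟩ := exists_injective_embedding R M
    have hg := Submodule.mkQ_surjective (LinearMap.range f)
    have he := LinearMap.exact_map_mkQ_range f
    obtain ⟨E', _, f', hf'⟩ := exists_injective_embedding R (E ⧸ LinearMap.range f)
    have hg' := Submodule.mkQ_surjective (LinearMap.range f')
    have he' := LinearMap.exact_map_mkQ_range f'
    rw [subsingleton_succ_succ_iff hf hg he, subsingleton_one_iff hf' hg' he']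
    have h₁ := (subsingleton_one_iff hf hg he).1 (h 1 (by omega))
    have h₂ := (subsingleton_one_iff hf' hg' he').1
      ((subsingleton_succ_succ_iff hf hg he).1 (h 2 (by omega)))
    intro z hz
    rw [mem_powTorsion_sup_span_singleton_iff] at hz
    obtain ⟨hz, k, hk⟩ := hz
    obtain ⟨j, hj, rfl⟩ := h₂ z hz
    rw [← LinearMap.map_smul] at hk
    obtain ⟨n₀, hn₀⟩ := (he' _).1 hk
    obtain ⟨j₀, hj₀, rfl⟩ := h₁ n₀ (mem_powTorsion_of_map hf'
      (hn₀ ▸ Submodule.smul_mem _ _ hj))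
    obtain ⟨j₁, hj₁, l, hl⟩ := exists_mem_powTorsion_of_injective x k hj₀
    refine ⟨j - f' (Submodule.mkQ _ j₁), ?_, ?_⟩
    · rw [mem_powTorsion_sup_span_singleton_iff]
      refine ⟨Submodule.sub_mem _ hj (map_mem_powTorsion _ (map_mem_powTorsion _ hj₁)), l + k, ?_⟩
      rw [pow_add, mul_smul, smul_sub (x ^ k), ← hn₀, ← LinearMap.map_smul, ← LinearMap.map_smul,
        ← LinearMap.map_sub, ← LinearMap.map_sub, ← LinearMap.map_smul, ← LinearMap.map_smul, hl,
        LinearMap.map_zero, LinearMap.map_zero]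
    · rw [LinearMap.map_sub, he'.apply_apply_eq_zero, sub_zero]
  | succ i ih =>
    obtain ⟨E, _, f, hf⟩ := exists_injective_embedding R M
    have hg := Submodule.mkQ_surjective (LinearMap.range f)
    have he := LinearMap.exact_map_mkQ_range f
    rw [subsingleton_succ_succ_iff hf hg he]
    exact ih ((vanishesAbove_succ_iff hf hg he).1 (h.mono (Nat.zero_le 1)))

lemma VanishesAbove.sup_span_singleton [IsNoetherianRing R] {c : ℕ} (h : VanishesAbove I M c)
    (x : R) : VanishesAbove (I ⊔ Ideal.span {x}) M (c + 1) := by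
  induction c generalizing M with
  | zero => exact h.sup_span_singleton_one x
  | succ c ih =>
    obtain ⟨E, _, f, hf⟩ := exists_injective_embedding R M
    have hg := Submodule.mkQ_surjective (LinearMap.range f)
    have he := LinearMap.exact_map_mkQ_range f
    rw [vanishesAbove_succ_iff hf hg he] at h ⊢
    exact ih h

lemma VanishesAbove.sup_span_singleton_of_smul_eq_zero [IsNoetherianRing R]
    (h : VanishesAbove I M 0) {x : R} (hx : ∀ y : M, x • y = 0) :
    VanishesAbove (I ⊔ Ideal.span {x}) M 0 := by
  intro i hi
  obtain hi | rfl : 1 < i ∨ i = 1 := by omega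
  · exact h.sup_span_singleton_one x i hi
  obtain ⟨E, _, f, hf⟩ := exists_injective_embedding R M
  have hg := Submodule.mkQ_surjective (LinearMap.range f)
  have he := LinearMap.exact_map_mkQ_range f
  refine (subsingleton_one_iff hf hg he).2 fun z hz => ?_
  rw [mem_powTorsion_sup_span_singleton_iff] at hz
  obtain ⟨hz, k, hk⟩ := hz
  obtain ⟨j, hj, rfl⟩ := (subsingleton_one_iff hf hg he).1 (h 1 (by omega)) z hz
  rw [← LinearMap.map_smul] at hk
  obtain ⟨n, hn⟩ := (he _).1 hk
  refine ⟨j, mem_powTorsion_sup_span_singleton_iff.2 ⟨hj, k + 1, ?_⟩, rfl⟩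
  rw [pow_succ', mul_smul, ← hn, ← LinearMap.map_smul, hx, LinearMap.map_zero]

end ExtColim

namespace ExtColim

section Parameters

variable {R : Type u} [CommRing R] [IsNoetherianRing R] {I : Ideal R}
  {M : Type u} [AddCommGroup M] [Module R M]

lemma VanishesAbove.sup_span {c : ℕ} (h : VanishesAbove I M c) (s : Finset R) :
    VanishesAbove (I ⊔ Ideal.span s) M (c + s.card) := by
  classical
  induction s using Finset.induction with
  | empty => simpa using h
  | insert x s hx ih =>
    rw [Finset.card_insert_of_notMem hx, Finset.coe_insert, Ideal.span_insert,
      sup_comm (Ideal.span {x}), ← sup_assoc, ← add_assoc]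
    exact ih.sup_span_singleton x

lemma vanishesAbove_zero_of_smul_eq_zero (h : ∀ a ∈ I, ∀ y : M, a • y = 0) :
    VanishesAbove I M 0 := by
  classical
  obtain ⟨s, rfl⟩ := IsNoetherian.noetherian I
  replace h : ∀ a ∈ s, ∀ y : M, a • y = 0 := fun a ha => h a (Submodule.subset_span ha)
  induction s using Finset.induction with
  | empty => simpa using vanishesAbove_bot M
  | insert x s hx ih =>
    rw [Finset.coe_insert, Submodule.span_insert, sup_comm]
    exact (ih fun a ha => h a (Finset.mem_insert_of_mem ha)).sup_span_singleton_of_smul_eq_zero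
      (h x (Finset.mem_insert_self x s))

/-- Adding a system of parameters raises the degree bound by at most the dimension. -/
lemma VanishesAbove.maximalIdeal [IsLocalRing R] {c d : ℕ} (hI : I ≠ ⊤)
    (h : VanishesAbove I M c) (hd : ringKrullDim (R ⧸ I) ≤ d) :
    VanishesAbove (IsLocalRing.maximalIdeal R) M (c + d) := by
  classical
  have : Nontrivial (R ⧸ I) := Ideal.Quotient.nontrivial_iff.2 hI
  have : IsLocalRing (R ⧸ I) :=
    IsLocalRing.of_surjective' (Ideal.Quotient.mk I) Ideal.Quotient.mk_surjective
  obtain ⟨s, hs, hs'⟩ := Ideal.exists_finset_card_eq_height_of_isNoetherianRing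
    (IsLocalRing.maximalIdeal (R ⧸ I))
  have hcard : s.card ≤ d := by
    rw [← IsLocalRing.maximalIdeal_height_eq_ringKrullDim, ← hs'] at hd
    exact_mod_cast hd
  let t : Finset R := s.image (Function.surjInv Ideal.Quotient.mk_surjective)
  have ht : (Ideal.span (t : Set R)).map (Ideal.Quotient.mk I) = Ideal.span s := by
    rw [Ideal.map_span, Finset.coe_image, ← Set.image_comp,
      (Function.rightInverse_surjInv _).comp_eq_id, Set.image_id]
  have hrad : IsLocalRing.maximalIdeal (R ⧸ I) ≤ (Ideal.span (s : Set (R ⧸ I))).radical := by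
    rw [Ideal.radical_eq_sInf]
    exact le_sInf fun q hq => hs.2 ⟨hq.2, hq.1⟩ (IsLocalRing.le_maximalIdeal hq.2.ne_top)
  have hJ : IsLocalRing.maximalIdeal R ≤ (I ⊔ Ideal.span (t : Set R)).radical := by
    intro x hx
    have hx' : Ideal.Quotient.mk I x ∈ IsLocalRing.maximalIdeal (R ⧸ I) :=
      (IsLocalRing.mem_maximalIdeal _).2 fun hu =>
        have := IsLocalHom.of_surjective (Ideal.Quotient.mk I) Ideal.Quotient.mk_surjective
        hx (isUnit_of_map_unit (Ideal.Quotient.mk I) x hu)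
    obtain ⟨n, hn⟩ := hrad hx'
    refine ⟨n, ?_⟩
    rw [← ht, ← map_pow, ← Ideal.mem_comap, Ideal.comap_map_of_surjective _
      Ideal.Quotient.mk_surjective, ← RingHom.ker_eq_comap_bot, Ideal.mk_ker, sup_comm] at hn
    exact hn
  obtain ⟨k, hk⟩ := Ideal.exists_pow_le_of_le_radical_of_fg hJ (IsNoetherian.noetherian _)
  have hle : I ⊔ Ideal.span (t : Set R) ≤ IsLocalRing.maximalIdeal R := by
    refine IsLocalRing.le_maximalIdeal fun htop => ?_
    have := congrArg (Ideal.map (Ideal.Quotient.mk I)) htop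
    rw [Ideal.map_sup, Ideal.map_quotient_self, bot_sup_eq, ht, Ideal.map_top] at this
    exact hs.1.1.ne_top (top_le_iff.1 (this ▸ hs.1.2))
  refine ((vanishesAbove_iff_of_pow_le hk (l := 1) (by rwa [pow_one])).2
    (h.sup_span t)).mono ?_
  have : t.card ≤ s.card := Finset.card_image_le
  omega

variable (R) in
lemma exists_vanishesAbove [IsLocalRing R] :
    ∃ d : ℕ, ∀ (M : Type u) [AddCommGroup M] [Module R M],
      VanishesAbove (IsLocalRing.maximalIdeal R) M d := by
  obtain ⟨d, hd⟩ := ENat.ne_top_iff_exists.1 (Ideal.height_ne_top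
    (IsLocalRing.maximalIdeal.isMaximal R).ne_top)
  refine ⟨d, fun M _ _ => ?_⟩
  have := (vanishesAbove_bot (R := R) M).maximalIdeal (d := d) bot_ne_top (by
    rw [ringKrullDim_eq_of_ringEquiv (RingEquiv.quotientBot R),
      ← IsLocalRing.maximalIdeal_height_eq_ringKrullDim, ← hd]
    rfl)
  rwa [zero_add] at this

end Parameters

section FiniteModules

variable {R : Type u} [CommRing R] {I : Ideal R} {i : ℕ}
  {M N : Type u} [AddCommGroup M] [Module R M] [AddCommGroup N] [Module R N]

lemma subsingleton_of_linearEquiv (e : M ≃ₗ[R] N) [Subsingleton (ExtColim I i M)] :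
    Subsingleton (ExtColim I i N) := by
  refine subsingleton_of_forall_eq 0 fun z => ?_
  have : map I i (e.toLinearMap ∘ₗ e.symm.toLinearMap) z = z := by
    rw [LinearEquiv.comp_symm, map_id, LinearMap.id_apply]
  rw [← this, map_comp, LinearMap.comp_apply, Subsingleton.elim (map I i e.symm.toLinearMap z) 0,
    _root_.map_zero]

lemma smul_eq_zero_of_smul_eq_zero {a : R} (h : ∀ y : M, a • y = 0) (z : ExtColim I i M) :
    a • z = 0 := by
  have h1 : a • (LinearMap.id : M →ₗ[R] M) = (0 : R) • LinearMap.id := by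
    ext y
    simp [h]
  have h2 : map I i (a • (LinearMap.id : M →ₗ[R] M)) z = 0 := by
    rw [h1, map_smul, zero_smul, LinearMap.zero_apply]
  rwa [map_smul, map_id] at h2

lemma sum_map_proj {n : ℕ} (z : ExtColim I i (Fin n → M)) :
    ∑ a, map I i (LinearMap.single R (fun _ : Fin n => M) a) (map I i (LinearMap.proj a) z) = z := by
  have h1 : ∑ a, (LinearMap.single R (fun _ : Fin n => M) a) ∘ₗ LinearMap.proj a =
      (LinearMap.id : (Fin n → M) →ₗ[R] (Fin n → M)) := by
    refine LinearMap.ext fun y => ?_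
    simp only [LinearMap.sum_apply, LinearMap.comp_apply, LinearMap.proj_apply, LinearMap.id_apply]
    exact Finset.univ_sum_single y
  have h2 := congrArg (fun f => map I i f z) h1
  simpa [map_sum, map_comp, map_id] using h2

lemma subsingleton_pi {n : ℕ} [Subsingleton (ExtColim I i M)] :
    Subsingleton (ExtColim I i (Fin n → M)) := by
  refine subsingleton_of_forall_eq 0 fun z => ?_
  rw [← sum_map_proj z]
  exact Finset.sum_eq_zero fun a _ => by
    rw [Subsingleton.elim (map I i (LinearMap.proj a) z) 0, _root_.map_zero]

lemma _root_.exists_surjective_of_smul_eq_zero {b : Ideal R} [Module.Finite R M]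
    (h : ∀ a ∈ b, ∀ y : M, a • y = 0) :
    ∃ (n : ℕ) (f : (Fin n → R ⧸ b) →ₗ[R] M), Function.Surjective f := by
  obtain ⟨n, f, hf⟩ := Module.Finite.exists_fin' R M
  let v (a : Fin n) : R ⧸ b →ₗ[R] M := b.liftQ (f ∘ₗ LinearMap.single R (fun _ => R) a)
    fun r hr => by
      have : Pi.single (M := fun _ => R) a r = r • Pi.single a 1 := by
        rw [← Pi.single_smul, smul_eq_mul, mul_one]
      simp [this, h r hr]
  refine ⟨n, LinearMap.lsum R (fun _ : Fin n => R ⧸ b) R v, fun y => ?_⟩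
  obtain ⟨w, rfl⟩ := hf y
  refine ⟨fun a => Submodule.Quotient.mk (w a), ?_⟩
  simp only [LinearMap.lsum_apply, LinearMap.sum_apply, LinearMap.comp_apply,
    LinearMap.proj_apply, v, Submodule.liftQ_apply, LinearMap.single_apply]
  rw [← _root_.map_sum, Finset.univ_sum_single]

/-- The bound for `R ⧸ b` holds for all finite modules killed by `b`. -/
lemma VanishesAbove.of_quotient [IsNoetherianRing R] {d : ℕ}
    (hd : ∀ (M : Type u) [AddCommGroup M] [Module R M], VanishesAbove I M d) {b : Ideal R} {c : ℕ}
    (h : VanishesAbove I (R ⧸ b) c) [Module.Finite R M] (hM : ∀ a ∈ b, ∀ y : M, a • y = 0) :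
    VanishesAbove I M c := by
  suffices H : ∀ (t i : ℕ), c < i → d < i + t → ∀ (M : Type u) [AddCommGroup M] [Module R M]
      [Module.Finite R M], (∀ a ∈ b, ∀ y : M, a • y = 0) → Subsingleton (ExtColim I i M) from
    fun i hi => H (d + 1) i hi (by omega) M hM
  intro t
  induction t with
  | zero => exact fun i _ hi M _ _ _ _ => hd M i hi
  | succ t ih =>
    intro i hi hit M _ _ _ hM
    obtain ⟨n, f, hf⟩ := exists_surjective_of_smul_eq_zero hM
    have := h i hi
    refine subsingleton_right (Submodule.subtype_injective (LinearMap.ker f)) hf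
      (LinearMap.exact_subtype_ker_map f) subsingleton_pi ?_
    refine ih (i + 1) (by omega) (by omega) _ fun a ha y => ?_
    ext k
    obtain ⟨r, hr⟩ := Submodule.Quotient.mk_surjective _ (y.1 k)
    simp only [SetLike.val_smul, Pi.smul_apply, ZeroMemClass.coe_zero, Pi.zero_apply]
    rw [← hr, ← Submodule.Quotient.mk_smul, Submodule.Quotient.mk_eq_zero]
    exact Ideal.mul_mem_right _ _ ha

end FiniteModules

section TopDegree

variable {R : Type u} [CommRing R] [IsNoetherianRing R] {I : Ideal R} {c : ℕ} {p q : Ideal R}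
  (hpq : p ≤ q)
  (h : ∀ (M : Type u) [AddCommGroup M] [Module R M] [Module.Finite R M],
    (∀ a ∈ p, ∀ y : M, a • y = 0) → Subsingleton (ExtColim I (c + 1) M))

include hpq h

lemma subsingleton_of_smul_top_eq_top
    (hq : q • (⊤ : Submodule R (ExtColim I c (R ⧸ p))) = ⊤) :
    Subsingleton (ExtColim I c (R ⧸ q)) := by
  let f : R ⧸ p →ₗ[R] R ⧸ q := Submodule.factor hpq
  have hf : Function.Surjective f := Submodule.factor_surjective hpq
  have h1 := h (LinearMap.ker f) fun a ha y => by
    ext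
    obtain ⟨r, hr⟩ := Submodule.Quotient.mk_surjective _ y.1
    rw [SetLike.val_smul, ← hr, ← Submodule.Quotient.mk_smul, ZeroMemClass.coe_zero,
      Submodule.Quotient.mk_eq_zero]
    exact Ideal.mul_mem_right _ _ ha
  have h2 := exact_map_δ (I := I) (i := c) (Submodule.subtype_injective (LinearMap.ker f)) hf
    (LinearMap.exact_subtype_ker_map f)
  refine subsingleton_of_forall_eq 0 fun z => ?_
  obtain ⟨y, rfl⟩ := (h2 z).1 (Subsingleton.elim _ _)
  have hy : y ∈ q • (⊤ : Submodule R (ExtColim I c (R ⧸ p))) := by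
    rw [hq]
    exact Submodule.mem_top
  refine Submodule.smul_induction_on hy (fun a ha y _ => ?_) (fun y y' hy hy' => ?_)
  · rw [LinearMap.map_smul]
    refine smul_eq_zero_of_smul_eq_zero (fun w => ?_) _
    obtain ⟨r, rfl⟩ := Submodule.Quotient.mk_surjective _ w
    rw [← Submodule.Quotient.mk_smul, Submodule.Quotient.mk_eq_zero]
    exact Ideal.mul_mem_right _ _ ha
  · rw [LinearMap.map_add, hy, hy', add_zero]

lemma smul_top_eq_top_of_subsingleton (hq : Subsingleton (ExtColim I c (R ⧸ q))) :
    q • (⊤ : Submodule R (ExtColim I c (R ⧸ p))) = ⊤ := by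
  let f : R ⧸ p →ₗ[R] R ⧸ q := Submodule.factor hpq
  have hf : Function.Surjective f := Submodule.factor_surjective hpq
  have hp (a : R) (ha : a ∈ p) (y : R ⧸ p) : a • y = 0 := by
    obtain ⟨r, rfl⟩ := Submodule.Quotient.mk_surjective _ y
    rw [← Submodule.Quotient.mk_smul, Submodule.Quotient.mk_eq_zero]
    exact Ideal.mul_mem_right _ _ ha
  obtain ⟨n, g, hg⟩ := exists_surjective_of_smul_eq_zero (b := p) (M := LinearMap.ker f)
    fun a ha y => Subtype.ext (hp a ha _)
  have h1 := h (LinearMap.ker g) fun a ha y => by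
    ext k
    exact hp a ha _
  refine top_le_iff.1 fun z _ => ?_
  obtain ⟨w, rfl⟩ := (exact_map_map (I := I) (i := c)
    (Submodule.subtype_injective (LinearMap.ker f)) hf (LinearMap.exact_subtype_ker_map f) z).1
      (Subsingleton.elim _ _)
  obtain ⟨v, rfl⟩ := (exact_map_δ (I := I) (i := c)
    (Submodule.subtype_injective (LinearMap.ker g)) hg (LinearMap.exact_subtype_ker_map g) w).1
      (Subsingleton.elim _ _)
  rw [← sum_map_proj v, _root_.map_sum, _root_.map_sum]
  refine Submodule.sum_mem _ fun k _ => ?_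
  rw [← LinearMap.comp_apply, ← LinearMap.comp_apply, ← map_comp, ← LinearMap.comp_apply, ← map_comp]
  set φ := (LinearMap.ker f).subtype ∘ₗ g ∘ₗ LinearMap.single R (fun _ : Fin n => R ⧸ p) k
  obtain ⟨a, ha⟩ := Submodule.Quotient.mk_surjective p (φ (Submodule.Quotient.mk 1))
  have haq : a ∈ q := by
    have : f (φ (Submodule.Quotient.mk 1)) = 0 := (g _).2
    rw [← ha] at this
    exact (Submodule.Quotient.mk_eq_zero q).1 this
  have hφ : φ = a • LinearMap.id := by
    ext
    exact ha.symm.trans (congrArg Submodule.Quotient.mk (mul_one a).symm)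
  rw [LinearMap.comp_apply, LinearMap.comp_assoc]
  change map I c φ _ ∈ _
  rw [hφ, map_smul, map_id, LinearMap.smul_apply]
  exact Submodule.smul_mem_smul haq Submodule.mem_top

end TopDegree

end ExtColim

/-- **Melkersson's criterion** for a single element: if every element of `H` is killed by a power
of `x` and the `x`-torsion of `H` is Artinian, then `H` is Artinian. -/
lemma isArtinian_of_isArtinian_torsionBy {R H : Type*} [CommRing R] [AddCommGroup H] [Module R H]
    (x : R) (hx : ∀ y : H, ∃ k : ℕ, x ^ k • y = 0)
    [IsArtinian R (Submodule.torsionBy R H x)] : IsArtinian R H := by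
  set K := Submodule.torsionBy R H x
  let G (k : ℕ) (N : Submodule R H) : Submodule R K :=
    (N.map (LinearMap.lsmul R H (x ^ k))).comap K.subtype
  have mem_G {k : ℕ} {N : Submodule R H} {y : K} : y ∈ G k N ↔ ∃ z ∈ N, x ^ k • z = y := Iff.rfl
  have hGk {k l : ℕ} (h : k ≤ l) (N : Submodule R H) : G l N ≤ G k N := by
    rintro y ⟨z, hz, hzy⟩
    obtain ⟨t, rfl⟩ := Nat.exists_eq_add_of_le h
    refine mem_G.2 ⟨x ^ t • z, N.smul_mem _ hz, ?_⟩
    rw [← mul_smul, ← pow_add]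
    exact hzy
  have hGN (k : ℕ) {N N' : Submodule R H} (h : N ≤ N') : G k N ≤ G k N' := by
    rintro y ⟨z, hz, hzy⟩
    exact ⟨z, h hz, hzy⟩
  have key {N N' : Submodule R H} (hNN : N ≤ N') (hG : ∀ k, G k N' ≤ G k N) : N' ≤ N := by
    intro y hy
    obtain ⟨k, hk⟩ := hx y
    induction k generalizing y with
    | zero => rw [pow_zero, one_smul] at hk; rw [hk]; exact N.zero_mem
    | succ k ih =>
      have h1 : x ^ k • y ∈ K := by
        rw [Submodule.mem_torsionBy_iff, ← mul_smul, ← pow_succ']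
        exact hk
      obtain ⟨z, hz, hzy⟩ := mem_G.1 (hG k (mem_G.2 ⟨y, hy, rfl⟩ : (⟨_, h1⟩ : K) ∈ G k N'))
      have h2 := ih (N'.sub_mem hy (hNN hz)) (by rw [smul_sub, hzy, sub_self])
      have := N.add_mem h2 hz
      rwa [sub_add_cancel] at this
  refine monotone_stabilizes_iff_artinian.1 fun f => ?_
  have hf {a b : ℕ} (h : a ≤ b) : (f b).ofDual ≤ (f a).ofDual := f.monotone h
  obtain ⟨n₀, hn₀⟩ := IsArtinian.monotone_stabilizes (R := R) (M := K)
    ⟨fun k => OrderDual.toDual (G k (f k).ofDual), fun a b h =>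
      (hGk h _).trans (hGN a (hf h))⟩
  have hstab (k : ℕ) : ∃ n, ∀ m, n ≤ m → G k (f n).ofDual = G k (f m).ofDual :=
    IsArtinian.monotone_stabilizes (R := R) (M := K)
      ⟨fun n => OrderDual.toDual (G k (f n).ofDual), fun a b h => hGN k (hf h)⟩
  choose s hs using hstab
  refine ⟨n₀ + ∑ k ∈ Finset.range n₀, s k, fun m hm => ?_⟩
  refine le_antisymm (f.monotone hm) (key (hf hm) fun k => ?_)
  by_cases hk : k < n₀
  · have h1 : s k ≤ n₀ + ∑ k ∈ Finset.range n₀, s k :=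
      (Finset.single_le_sum (f := s) (fun _ _ => Nat.zero_le _) (Finset.mem_range.2 hk)).trans
        (Nat.le_add_left _ _)
    exact ((hs k _ h1).symm.trans (hs k _ (h1.trans hm))).le
  · have h1 : G (k + m) (f (k + m)).ofDual = G n₀ (f n₀).ofDual := (hn₀ (k + m) (by omega)).symm
    calc G k (f (n₀ + ∑ k ∈ Finset.range n₀, s k)).ofDual ≤ G n₀ (f n₀).ofDual :=
          (hGk (by omega) _).trans (hGN _ (hf (by omega)))
      _ = G (k + m) (f (k + m)).ofDual := h1.symm
      _ ≤ G k (f m).ofDual := (hGk (by omega) _).trans (hGN _ (hf (by omega)))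

namespace ExtColim

lemma subsingleton_of_subsingleton {R : Type u} [CommRing R] {I : Ideal R} {i : ℕ}
    {M : Type u} [AddCommGroup M] [Module R M] [Subsingleton M] :
    Subsingleton (ExtColim I i M) :=
  subsingleton_of_forall_eq 0 fun z => by
    rw [← one_smul R z]
    exact smul_eq_zero_of_smul_eq_zero (fun y => Subsingleton.elim _ _) z

lemma isArtinian_of_prime_quotient {R : Type u} [CommRing R] [IsNoetherianRing R] {I : Ideal R}
    {i : ℕ} (h : ∀ q : PrimeSpectrum R, IsArtinian R (ExtColim I i (R ⧸ q.asIdeal)))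
    (M : Type u) [AddCommGroup M] [Module R M] [hM : Module.Finite R M] :
    IsArtinian R (ExtColim I i M) := by
  induction hM using IsNoetherianRing.induction_on_isQuotientEquivQuotientPrime R with
  | subsingleton N =>
    have := subsingleton_of_subsingleton (I := I) (i := i) (M := N)
    infer_instance
  | quotient N q e =>
    have := h q
    refine isArtinian_of_surjective (ExtColim I i (R ⧸ q.asIdeal)) (map I i e.symm.toLinearMap)
      fun z => ⟨map I i e.toLinearMap z, ?_⟩
    rw [← LinearMap.comp_apply, ← map_comp, LinearEquiv.symm_comp, map_id, LinearMap.id_apply]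
  | exact N₁ N₂ N₃ f g hf hg hfg h₁ h₃ =>
    exact isArtinian_of_range_eq_ker (map I i f) (map I i g)
      (exact_map_map hf hg hfg).linearMap_ker_eq.symm

section LocalRing

variable {R : Type u} [CommRing R] [IsNoetherianRing R] [IsLocalRing R]

local notation "𝔪" => IsLocalRing.maximalIdeal R

omit [IsNoetherianRing R] in
lemma subsingleton_zero_of_ne {q : PrimeSpectrum R} (hq : q.asIdeal ≠ 𝔪) :
    Subsingleton (ExtColim 𝔪 0 (R ⧸ q.asIdeal)) := by
  obtain ⟨x, hx, hxq⟩ := SetLike.not_le_iff_exists.1 fun h =>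
    hq (le_antisymm (IsLocalRing.le_maximalIdeal q.2.ne_top) h)
  refine subsingleton_of_forall_eq 0 fun z => ?_
  obtain ⟨k, hk⟩ := mem_powTorsion z
  have h1 := hk _ (Ideal.pow_mem_pow hx k)
  refine ev_injective ?_
  have h2 : x ^ k • ev 𝔪 (R ⧸ q.asIdeal) z = 0 := by rw [← LinearMap.map_smul, h1, map_zero]
  obtain ⟨r, hr⟩ := Ideal.Quotient.mk_surjective (ev 𝔪 (R ⧸ q.asIdeal) z)
  rw [← hr] at h2 ⊢
  have h3 : x ^ k * r ∈ q.asIdeal := Ideal.Quotient.eq_zero_iff_mem.1 h2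
  rw [map_zero]
  exact Ideal.Quotient.eq_zero_iff_mem.2
    ((q.2.mem_or_mem h3).resolve_left fun h => hxq (q.2.mem_of_pow_mem k h))

lemma isArtinian_zero (M : Type u) [AddCommGroup M] [Module R M] [Module.Finite R M] :
    IsArtinian R (ExtColim 𝔪 0 M) := by
  refine isArtinian_of_prime_quotient (fun q => ?_) M
  by_cases hq : q.asIdeal = 𝔪
  · have : IsSimpleModule R (R ⧸ q.asIdeal) :=
      isSimpleModule_iff_isCoatom.2 (hq ▸ (IsLocalRing.maximalIdeal.isMaximal R).out)
    exact isArtinian_of_injective (ev 𝔪 (R ⧸ q.asIdeal)) ev_injective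
  · have := subsingleton_zero_of_ne hq
    infer_instance

/-- The modules `colim_k Ext^i(R/𝔪^k, M)` are Artinian for finite `M`. -/
lemma isArtinian (i : ℕ) (M : Type u) [AddCommGroup M] [Module R M] [Module.Finite R M] :
    IsArtinian R (ExtColim 𝔪 i M) := by
  induction i generalizing M with
  | zero => exact isArtinian_zero M
  | succ i ih =>
    refine isArtinian_of_prime_quotient (fun q => ?_) M
    by_cases hq : q.asIdeal = 𝔪
    · have : Subsingleton (ExtColim 𝔪 (i + 1) (R ⧸ q.asIdeal)) := by
        refine vanishesAbove_zero_of_smul_eq_zero (fun a ha y => ?_) (i + 1) (by omega)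
        obtain ⟨r, rfl⟩ := Submodule.Quotient.mk_surjective _ y
        rw [← Submodule.Quotient.mk_smul, Submodule.Quotient.mk_eq_zero]
        exact Ideal.mul_mem_right _ _ (hq ▸ ha)
      infer_instance
    · obtain ⟨x, hx, hxq⟩ := SetLike.not_le_iff_exists.1 fun h =>
        hq (le_antisymm (IsLocalRing.le_maximalIdeal q.2.ne_top) h)
      let f : R ⧸ q.asIdeal →ₗ[R] R ⧸ q.asIdeal := x • LinearMap.id
      have hf : Function.Injective f := by
        rw [injective_iff_map_eq_zero]
        intro y hy
        obtain ⟨r, rfl⟩ := Ideal.Quotient.mk_surjective y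
        have h3 : x * r ∈ q.asIdeal := Ideal.Quotient.eq_zero_iff_mem.1 hy
        exact Ideal.Quotient.eq_zero_iff_mem.2 ((q.2.mem_or_mem h3).resolve_left hxq)
      have := ih ((R ⧸ q.asIdeal) ⧸ LinearMap.range f)
      have hle : Submodule.torsionBy R (ExtColim 𝔪 (i + 1) (R ⧸ q.asIdeal)) x ≤
          LinearMap.range (δ 𝔪 i hf (Submodule.mkQ_surjective _)
            (LinearMap.exact_map_mkQ_range f)) := by
        intro z hz
        refine (exact_δ_map hf (Submodule.mkQ_surjective _) (LinearMap.exact_map_mkQ_range f) z).1 ?_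
        rw [map_smul, map_id]
        exact hz
      have := isArtinian_of_le hle
      refine isArtinian_of_isArtinian_torsionBy x fun z => ?_
      obtain ⟨k, hk⟩ := mem_powTorsion z
      exact ⟨k, hk _ (Ideal.pow_mem_pow hx k)⟩

end LocalRing

end ExtColim

lemma Ideal.smul_mk_eq_zero_of_le {R : Type*} [CommRing R] {p q : Ideal R} (h : p ≤ q) (a : R)
    (ha : a ∈ p) (y : R ⧸ q) : a • y = 0 := by
  obtain ⟨r, rfl⟩ := Submodule.Quotient.mk_surjective _ y
  rw [← Submodule.Quotient.mk_smul, Submodule.Quotient.mk_eq_zero]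
  exact Ideal.mul_mem_right _ _ (h ha)

lemma ringKrullDim_quotient_le_of_coheight_le {R : Type*} [CommRing R] {a : Ideal R} {j : ℕ}
    (h : ∀ q : PrimeSpectrum R, a ≤ q.asIdeal → Order.coheight q ≤ j) :
    ringKrullDim (R ⧸ a) ≤ j := by
  rw [ringKrullDim_quotient, Order.krullDim_eq_iSup_coheight]
  refine iSup_le fun q => ?_
  have h1 := Order.coheight_le_coheight_apply_of_strictMono
    (Subtype.val : PrimeSpectrum.zeroLocus (a : Set R) → PrimeSpectrum R)
    (fun _ _ h => h) q
  exact_mod_cast h1.trans (h q.1 q.2)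

lemma exists_lt_lt_of_le_coheight {α : Type*} [PartialOrder α] {x : α} {j : ℕ}
    (hx : (j + 2 : ℕ) ≤ Order.coheight x) : ∃ y z, x < y ∧ y < z ∧ j ≤ Order.coheight z := by
  obtain ⟨s, rfl, hs⟩ := Order.exists_series_of_le_coheight x hx
  refine ⟨s ⟨1, by omega⟩, s ⟨2, by omega⟩, s.strictMono (by simp [Fin.lt_def]),
    s.strictMono (by simp [Fin.lt_def]), ?_⟩
  have := Order.rev_index_le_coheight s ⟨2, by omega⟩
  simpa [Fin.rev, hs] using this

/-- If no prime strictly between `p` and `p₂` acts surjectively on an Artinian module `T`, then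
neither does the sum of some such prime and a product of finitely many other ones. -/
lemma PrimeSpectrum.exists_sup_smul_top_ne_top {R : Type*} [CommRing R] [IsNoetherianRing R]
    {T : Type*} [AddCommGroup T] [Module R T] [IsArtinian R T] {p p₁ p₂ : PrimeSpectrum R}
    (h01 : p < p₁) (h12 : p₁ < p₂)
    (hne : ∀ q : PrimeSpectrum R, p < q → q < p₂ → q.asIdeal • (⊤ : Submodule R T) ≠ ⊤) :
    ∃ (F : Finset (PrimeSpectrum R)) (q : PrimeSpectrum R), (∀ q ∈ F, p < q ∧ q < p₂) ∧
      p < q ∧ q < p₂ ∧ q ∉ F ∧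
      ((∏ q ∈ F, q.asIdeal) ⊔ q.asIdeal) • (⊤ : Submodule R T) ≠ ⊤ := by
  classical
  obtain ⟨_, ⟨F, hF, rfl⟩, hmin⟩ := IsArtinian.set_has_minimal (R := R) (M := T)
    {N | ∃ F : Finset (PrimeSpectrum R), (∀ q ∈ F, p < q ∧ q < p₂) ∧
      (∏ q ∈ F, q.asIdeal) • (⊤ : Submodule R T) = N} ⟨_, ∅, by simp, rfl⟩
  obtain ⟨y, hy, hyF⟩ : ∃ y ∈ p₂.asIdeal, ∀ q ∈ F, y ∉ q.asIdeal := by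
    by_contra! hcon
    obtain ⟨q, hq, hle⟩ := (Ideal.subset_union_prime (s := F) (f := PrimeSpectrum.asIdeal) p p
      (fun q _ _ _ => q.2) (I := p₂.asIdeal)).1 fun y hy => by
        obtain ⟨q, hq, hyq⟩ := hcon y hy
        exact Set.mem_iUnion₂.2 ⟨q, hq, hyq⟩
    exact (hF q hq).2.not_ge hle
  obtain ⟨q, hyq, hpq, hqp₂⟩ := PrimeSpectrum.exist_mem_one_of_mem_two h01 h12 hy
  have hqF : q ∉ F := fun h => hyF q h hyq
  refine ⟨F, q, hF, hpq, hqp₂, hqF, fun h => hne q hpq hqp₂ ?_⟩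
  have hJ : q.asIdeal • (∏ q ∈ F, q.asIdeal) • (⊤ : Submodule R T) = (∏ q ∈ F, q.asIdeal) • ⊤ := by
    refine eq_of_le_of_not_lt Submodule.smul_le_right (hmin _ ⟨insert q F, ?_, ?_⟩)
    · intro r hr
      rcases Finset.mem_insert.1 hr with rfl | hr
      exacts [⟨hpq, hqp₂⟩, hF r hr]
    · rw [Finset.prod_insert hqF, mul_smul]
  rw [Submodule.sup_smul, ← hJ] at h
  exact top_le_iff.1 (h.ge.trans (sup_le (Submodule.smul_mono le_rfl le_top) le_rfl))

namespace ExtColim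

section LocalRing

variable {R : Type u} [CommRing R] [IsNoetherianRing R] [IsLocalRing R]

local notation "𝔪" => IsLocalRing.maximalIdeal R

lemma vanishesAbove_quotient_of_le {p q : Ideal R} {c : ℕ} (hpq : p ≤ q)
    (h : VanishesAbove 𝔪 (R ⧸ p) c) : VanishesAbove 𝔪 (R ⧸ q) c := by
  obtain ⟨d, hd⟩ := exists_vanishesAbove R
  exact h.of_quotient hd (Ideal.smul_mk_eq_zero_of_le hpq)

lemma vanishesAbove_quotient_of_coheight_le {a : Ideal R} {j : ℕ}
    (h : ∀ q : PrimeSpectrum R, a ≤ q.asIdeal → Order.coheight q ≤ j) :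
    VanishesAbove 𝔪 (R ⧸ a) j := by
  by_cases ha : a = ⊤
  · subst ha
    have : Subsingleton (R ⧸ (⊤ : Ideal R)) := Ideal.Quotient.subsingleton_iff.2 rfl
    exact fun i _ => subsingleton_of_subsingleton
  · have := (vanishesAbove_zero_of_smul_eq_zero
      (Ideal.smul_mk_eq_zero_of_le (le_refl a))).maximalIdeal ha
      (ringKrullDim_quotient_le_of_coheight_le h)
    rwa [zero_add] at this

lemma not_vanishesAbove_zero {p : PrimeSpectrum R} (hp : p.asIdeal ≠ 𝔪) :
    ¬ VanishesAbove 𝔪 (R ⧸ p.asIdeal) 0 := by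
  intro h
  obtain ⟨d, hd⟩ := exists_vanishesAbove R
  have h0 := subsingleton_zero_of_ne hp
  have h1 : Subsingleton (ExtColim 𝔪 0 (R ⧸ 𝔪)) :=
    subsingleton_of_smul_top_eq_top (p := p.asIdeal) (IsLocalRing.le_maximalIdeal p.2.ne_top)
      (fun M _ _ _ hM => h.of_quotient hd hM 1 one_pos) (Subsingleton.elim _ _)
  have h2 : (1 : R ⧸ 𝔪) ∈ powTorsion 𝔪 (R ⧸ 𝔪) :=
    ⟨1, fun a ha => Ideal.smul_mk_eq_zero_of_le (le_refl 𝔪) a (by rwa [pow_one] at ha) 1⟩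
  rw [← range_ev] at h2
  obtain ⟨z, hz⟩ := h2
  rw [Subsingleton.elim z 0, map_zero] at hz
  exact zero_ne_one hz

lemma not_vanishesAbove_succ {j : ℕ}
    (ih : ∀ p : PrimeSpectrum R, (j + 1 : ℕ) ≤ Order.coheight p →
      ¬ VanishesAbove 𝔪 (R ⧸ p.asIdeal) j)
    {p : PrimeSpectrum R} (hp : (j + 2 : ℕ) ≤ Order.coheight p)
    (hmax : ∀ q > p, Order.coheight q ≤ (j + 1 : ℕ)) :
    ¬ VanishesAbove 𝔪 (R ⧸ p.asIdeal) (j + 1) := by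
  intro hv
  obtain ⟨d, hd⟩ := exists_vanishesAbove R
  have htop (M : Type u) [AddCommGroup M] [Module R M] [Module.Finite R M]
      (hM : ∀ a ∈ p.asIdeal, ∀ y : M, a • y = 0) : Subsingleton (ExtColim 𝔪 (j + 1 + 1) M) :=
    hv.of_quotient hd hM _ (by omega)
  obtain ⟨p₁, p₂, h01, h12, hp₂⟩ := exists_lt_lt_of_le_coheight hp
  have hcoh (q : PrimeSpectrum R) (hq : q < p₂) : (j + 1 : ℕ) ≤ Order.coheight q := by
    push_cast
    exact (add_le_add_left hp₂ 1).trans (Order.coheight_add_one_le hq)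
  have := isArtinian (R := R) (j + 1) (R ⧸ p.asIdeal)
  obtain ⟨F, q, hF, hpq, hqp₂, hqF, hne⟩ := PrimeSpectrum.exists_sup_smul_top_ne_top
    (T := ExtColim 𝔪 (j + 1) (R ⧸ p.asIdeal)) h01 h12 fun q hpq hq h => by
      have h1 := subsingleton_of_smul_top_eq_top (q := q.asIdeal) hpq.le htop h
      refine ih q (hcoh q hq) fun i hi => ?_
      rcases Nat.lt_or_eq_of_le (Nat.succ_le_of_lt hi) with h2 | h2
      · exact vanishesAbove_quotient_of_le hpq.le hv i h2
      · exact h2 ▸ h1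
  refine hne (smul_top_eq_top_of_subsingleton ((show p.asIdeal ≤ q.asIdeal from hpq.le).trans le_sup_right)
    htop ?_)
  refine vanishesAbove_quotient_of_coheight_le (j := j) (fun P hP => ?_) (j + 1) (by omega)
  obtain ⟨r, hrF, hrP⟩ := (Ideal.IsPrime.prod_le P.2).1 (le_sup_left.trans hP)
  have hqP : q < P := by
    refine lt_of_le_of_ne (le_sup_right.trans hP : q.asIdeal ≤ P.asIdeal) ?_
    rintro rfl
    have h1 : r < q := lt_of_le_of_ne hrP (by rintro rfl; exact hqF hrF)
    have h2 := (add_le_add_left (hcoh q hqp₂) 1).trans (Order.coheight_add_one_le h1)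
    have h3 := h2.trans (hmax r (hF r hrF).1)
    norm_cast at h3
    omega
  have h2 := (Order.coheight_add_one_le hqP).trans (hmax q hpq)
  push_cast at h2
  exact (ENat.add_le_add_iff_right ENat.one_ne_top).1 h2

lemma not_vanishesAbove (j : ℕ) (p : PrimeSpectrum R) (hp : (j + 1 : ℕ) ≤ Order.coheight p) :
    ¬ VanishesAbove 𝔪 (R ⧸ p.asIdeal) j := by
  induction j generalizing p with
  | zero =>
    refine not_vanishesAbove_zero fun h => ?_
    obtain ⟨q, hq⟩ := not_isMax_iff.1 (Order.coheight_pos.1 (lt_of_lt_of_le (by simp) hp))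
    exact (h ▸ IsLocalRing.le_maximalIdeal q.2.ne_top : q.asIdeal ≤ p.asIdeal).not_gt hq
  | succ j ih =>
    intro hv
    obtain ⟨q, ⟨hpq, hq⟩, hmax⟩ := WellFounded.has_min
      (InvImage.wf PrimeSpectrum.asIdeal (wellFounded_gt (α := Ideal R)))
      {q | p ≤ q ∧ (j + 2 : ℕ) ≤ Order.coheight q} ⟨p, le_rfl, hp⟩
    refine not_vanishesAbove_succ ih hq (fun r hr => ?_) (vanishesAbove_quotient_of_le hpq hv)
    by_contra! hlt
    refine hmax r ⟨hpq.trans hr.le, ?_⟩ hr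
    have := Order.add_one_le_of_lt hlt
    exact_mod_cast this

/-- **Grothendieck's non-vanishing**, in the form of a bound on the dimension. -/
lemma VanishesAbove.ringKrullDim_le {c : ℕ} (h : VanishesAbove 𝔪 R c) : ringKrullDim R ≤ c := by
  refine iSup_le fun s => ?_
  by_contra! hlt
  have hs : c + 1 ≤ s.length := by exact_mod_cast hlt
  have h2 : VanishesAbove 𝔪 (R ⧸ (⊥ : Ideal R)) c := fun i hi => by
    have := h i hi
    exact subsingleton_of_linearEquiv (Submodule.quotEquivOfEqBot (⊥ : Ideal R) rfl).symm
  exact not_vanishesAbove c s.head ((Nat.cast_le.2 hs).trans Order.length_le_coheight_head)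
    (vanishesAbove_quotient_of_le bot_le h2)

end LocalRing

end ExtColim

section Homology

open Limits HomologicalComplex

variable {D : Type*} [Category* D] [Abelian D]

lemma ChainComplex.exists_d_comp_eq_of_homologyι_comp_eq_zero (K : ChainComplex D ℕ) {n : ℕ}
    {J : D} [Injective J] (e : K.opcycles (n + 1) ⟶ J) (he : K.homologyι (n + 1) ≫ e = 0) :
    ∃ h : K.X n ⟶ J, K.d (n + 1) n ≫ h = K.pOpcycles (n + 1) ≫ e := by
  have hS : (ShortComplex.mk _ _ (K.homologyι_comp_fromOpcycles (n + 1) n)).Exact :=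
    ShortComplex.exact_of_f_is_kernel _ (K.homologyIsKernel (n + 1) n (by simp))
  refine ⟨hS.descToInjective e he, ?_⟩
  rw [← K.p_fromOpcycles (n + 1) n, Category.assoc]
  exact congrArg _ (hS.comp_descToInjective e he)

variable {C : Type*} [Category* C] [Abelian C] [EnoughProjectives C]

/-- A cocycle with values in an injective object gives a map out of the left derived functor, and
the vanishing of its restrictions is detected by coboundaries. -/
lemma CategoryTheory.ProjectiveResolution.exists_leftDerived_obj_hom (F : C ⥤ D) [F.Additive]
    {X : C} (P : ProjectiveResolution X) {n : ℕ} {J : D} [Injective J]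
    (f : F.obj (P.complex.X (n + 1)) ⟶ J) (hf : F.map (P.complex.d (n + 2) (n + 1)) ≫ f = 0) :
    ∃ w : (F.leftDerived (n + 1)).obj X ⟶ J, ∀ {X' : C} (P' : ProjectiveResolution X')
      (g : X' ⟶ X) (φ : P'.complex ⟶ P.complex) (_ : φ.f 0 ≫ P.π.f 0 = P'.π.f 0 ≫ g),
      (F.leftDerived (n + 1)).map g ≫ w = 0 →
        ∃ h : F.obj (P'.complex.X n) ⟶ J,
          F.map (P'.complex.d (n + 1) n) ≫ h = F.map (φ.f (n + 1)) ≫ f := by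
  let K := (F.mapHomologicalComplex (ComplexShape.down ℕ)).obj P.complex
  refine ⟨(P.isoLeftDerivedObj F (n + 1)).hom ≫ K.homologyι (n + 1) ≫
    K.descOpcycles f (n + 2) (by simp) hf, fun {X'} P' g φ hφ h0 => ?_⟩
  let K' := (F.mapHomologicalComplex (ComplexShape.down ℕ)).obj P'.complex
  let ψ : K' ⟶ K := (F.mapHomologicalComplex (ComplexShape.down ℕ)).map φ
  have h1 : (P'.isoLeftDerivedObj F (n + 1)).hom ≫ homologyMap ψ (n + 1) ≫ K.homologyι (n + 1) ≫
      K.descOpcycles f (n + 2) (by simp) hf = 0 := by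
    rw [← h0]
    exact (ProjectiveResolution.isoLeftDerivedObj_hom_naturality_assoc g P' P φ hφ F (n + 1) _).symm
  have h2 := (Preadditive.IsIso.comp_left_eq_zero _ _).1 h1
  obtain ⟨h, hh⟩ := ChainComplex.exists_d_comp_eq_of_homologyι_comp_eq_zero K' _
    ((homologyι_naturality_assoc ψ (n + 1) _).symm.trans h2)
  refine ⟨h, hh.trans ?_⟩
  rw [p_opcyclesMap_assoc]
  exact congrArg (ψ.f (n + 1) ≫ ·) (p_descOpcycles ..)

end Homology

section

open Opposite Limits

variable {R : Type u} [CommRing R]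

/-- A class in `Abelian.Ext` is represented in the derived functor `Ext` compatibly with
restriction, as far as vanishing is concerned. -/
lemma exists_ext_restriction_eq_zero {X Y : ModuleCat.{u} R} {n : ℕ}
    (z : Abelian.Ext X Y (n + 1)) :
    ∃ w : ((Ext R (ModuleCat.{u} R) (n + 1)).obj (op X)).obj Y,
      ∀ {X' : ModuleCat.{u} R} (g : X' ⟶ X),
        ((Ext R (ModuleCat.{u} R) (n + 1)).map g.op).app Y w = 0 →
          (Abelian.Ext.mk₀ g).comp z (zero_add (n + 1)) = 0 := by
  let P := projectiveResolution X
  obtain ⟨f, hf, rfl⟩ := P.extMk_surjective z (n + 2) rfl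
  let F := ((linearYoneda R (ModuleCat.{u} R)).obj Y).rightOp
  let rep {A : ModuleCat.{u} R} (a : A ⟶ Y) : F.obj A ⟶ op (ModuleCat.of R R) :=
    (ModuleCat.ofHom (LinearMap.toSpanSingleton R (A ⟶ Y) a)).op
  have : Projective (ModuleCat.of R R) := ModuleCat.projective_of_free (Module.Basis.singleton Unit R)
  obtain ⟨w, hw⟩ := P.exists_leftDerived_obj_hom F (rep f) (Quiver.Hom.unop_inj (by
    ext
    change P.complex.d (n + 2) (n + 1) ≫ ((1 : R) • f) = 0
    rw [one_smul, hf]))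
  refine ⟨w.unop.hom (1 : R), fun {X'} g hg => ?_⟩
  let P' := projectiveResolution X'
  let φ : ProjectiveResolution.Hom P' P g :=
    ⟨ProjectiveResolution.lift g P' P, ProjectiveResolution.lift_commutes_zero g P' P⟩
  obtain ⟨h, hh⟩ := hw P' g φ.hom φ.hom_f_zero_comp_π_f_zero (Quiver.Hom.unop_inj (by
    ext
    exact hg))
  rw [ProjectiveResolution.mk₀_comp_extMk _ _ _ _ φ,
    ProjectiveResolution.extMk_eq_zero_iff _ _ _ _ _ n rfl]
  refine ⟨h.unop.hom (1 : R), ?_⟩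
  have := congrArg (fun t => t.unop.hom (1 : R)) hh
  refine this.trans (one_smul R (φ.hom.f (n + 1) ≫ f))

/-- The forgetful functor preserves colimits along the powers of an ideal. -/
instance ModuleCat.preservesColimitsOfShape_forget_nat :
    PreservesColimitsOfShape ℕᵒᵖᵒᵖ (forget (ModuleCat.{u} R)) :=
  have : PreservesFilteredColimitsOfSize.{0, 0} (forget (ModuleCat.{u} R)) :=
    preservesFilteredColimitsOfSize_shrink.{0, u, 0, u} _
  PreservesFilteredColimitsOfSize.preserves_filtered_colimits _

lemma localCohomology.subsingleton_of_forall_subsingleton {I : Ideal R} {i : ℕ}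
    {Y : ModuleCat.{u} R}
    (h : ∀ k : ℕ, Subsingleton
      (((Ext R (ModuleCat.{u} R) i).obj (op (ModuleCat.of R (R ⧸ I ^ k)))).obj Y)) :
    Subsingleton ((localCohomology I i).obj Y) := by
  have := hasColimitDiagram.{u, 0} (idealPowersDiagram I) i
  have hc := isColimitOfPreserves ((evaluation _ _).obj Y)
    (colimit.isColimit (diagram (idealPowersDiagram I) i))
  refine subsingleton_of_forall_eq 0 fun z => ?_
  obtain ⟨j, y, rfl⟩ := Concrete.isColimit_exists_rep _ hc z
  have := h j.unop.unop
  have hy : y = 0 := Subsingleton.elim (α := ((Ext R (ModuleCat.{u} R) i).obj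
    (op (ModuleCat.of R (R ⧸ I ^ j.unop.unop)))).obj Y) _ _
  rw [hy]
  exact map_zero _

lemma ExtColim.subsingleton_of_localCohomology {I : Ideal R} {n : ℕ} {M : Type u}
    [AddCommGroup M] [Module R M]
    (h : Subsingleton ((localCohomology I (n + 1)).obj (ModuleCat.of R M))) :
    Subsingleton (ExtColim I (n + 1) M) := by
  have := localCohomology.hasColimitDiagram.{u, 0} (localCohomology.idealPowersDiagram I) (n + 1)
  have hc := isColimitOfPreserves ((evaluation _ _).obj (ModuleCat.of R M))
    (colimit.isColimit (localCohomology.diagram (localCohomology.idealPowersDiagram I) (n + 1)))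
  refine subsingleton_of_forall_eq 0 fun z => ?_
  obtain ⟨k, x, rfl⟩ := exists_of z
  obtain ⟨w, hw⟩ := exists_ext_restriction_eq_zero x
  obtain ⟨l, f, g, hfg⟩ := Concrete.isColimit_exists_of_rep_eq _ hc (i := op (op k)) (j := op (op k))
    w (0 : ((Ext R (ModuleCat.{u} R) (n + 1)).obj (op (ModuleCat.of R (R ⧸ I ^ k)))).obj _)
    (h.elim _ _)
  refine (of_eq_zero_iff x).2 ⟨l.unop.unop, leOfHom f.unop.unop, hw _ ?_⟩
  exact hfg.trans (map_zero _)

lemma localCohomology.subsingleton_top_succ (n : ℕ) (Y : ModuleCat.{u} R) :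
    Subsingleton ((localCohomology (⊤ : Ideal R) (n + 1)).obj Y) := by
  refine subsingleton_of_forall_subsingleton fun k => ?_
  have : Subsingleton (R ⧸ (⊤ : Ideal R) ^ k) :=
    Ideal.Quotient.subsingleton_iff.2 (Ideal.top_pow R k)
  have : Projective (ModuleCat.of R (R ⧸ (⊤ : Ideal R) ^ k)) :=
    (ModuleCat.isZero_of_subsingleton _).projective
  exact ModuleCat.subsingleton_of_isZero (isZero_Ext_succ_of_projective _ _ n)

end

section

variable {R : Type u} [CommRing R]

lemma idealHeight_le {I : Ideal R} {p : PrimeSpectrum R} (hp : I ≤ p.asIdeal) :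
    idealHeight I ≤ Order.height p :=
  iInf₂_le p hp

lemma idealHeight_top : idealHeight (⊤ : Ideal R) = ⊤ :=
  iInf₂_eq_top.2 fun p hp => (p.2.ne_top (top_le_iff.1 hp)).elim

lemma idealHeight_add_ringKrullDim_quotient_le {I : Ideal R} (hI : I ≠ ⊤) :
    (idealHeight I : WithBot ℕ∞) + ringKrullDim (R ⧸ I) ≤ ringKrullDim R := by
  have : Nontrivial (R ⧸ I) := Ideal.Quotient.nontrivial_iff.2 hI
  have : Nontrivial R := (Ideal.Quotient.mk I).domain_nontrivial
  have hne : Nonempty (PrimeSpectrum.zeroLocus (R := R) I) := by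
    obtain ⟨m, hm, hle⟩ := Ideal.exists_le_maximal I hI
    exact ⟨⟨⟨m, hm.isPrime⟩, hle⟩⟩
  rw [ringKrullDim_quotient, Order.krullDim_eq_iSup_coheight_of_nonempty, ringKrullDim,
    Order.krullDim_eq_iSup_height_add_coheight_of_nonempty, ← WithBot.coe_add, WithBot.coe_le_coe,
    ENat.add_iSup]
  refine iSup_le fun p => le_iSup_of_le p.1 (add_le_add (idealHeight_le p.2) ?_)
  exact Order.coheight_le_coheight_apply_of_strictMono _ (Subtype.strictMono_coe _) p

lemma cohomologicalDimension_top (M : ModuleCat.{u} R) :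
    cohomologicalDimension (⊤ : Ideal R) M = 0 := by
  refine le_antisymm (sSup_le ?_) zero_le
  rintro _ ⟨i, rfl, hi⟩
  cases i with
  | zero => simp
  | succ i =>
    have := localCohomology.subsingleton_top_succ i M
    exact (not_nontrivial _ hi).elim

lemma subsingleton_localCohomology_of_cohomologicalDimension_lt {I : Ideal R}
    {M : ModuleCat.{u} R} {i : ℕ} (h : cohomologicalDimension I M < i) :
    Subsingleton ((localCohomology I i).obj M) :=
  not_nontrivial_iff_subsingleton.1 fun hi => h.not_ge (le_sSup ⟨i, rfl, hi⟩)

lemma vanishesAbove_of_cohomologicalDimension_le {I : Ideal R} {M : Type u} [AddCommGroup M]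
    [Module R M] {c : ℕ} (h : cohomologicalDimension I (ModuleCat.of R M) ≤ c) :
    ExtColim.VanishesAbove I M c := by
  intro i hi
  obtain ⟨j, rfl⟩ := Nat.exists_eq_succ_of_ne_zero (Nat.ne_zero_of_lt hi)
  exact ExtColim.subsingleton_of_localCohomology
    (subsingleton_localCohomology_of_cohomologicalDimension_lt
      (h.trans_lt (by exact_mod_cast hi)))

end

/-- over a Noetherian local ring `R` of Krull dimension `n`, if
`cd(I) = ht(I)` then `dim R = ht(I) + dim (R/I)`. -/
theorem ringKrullDim_eq_height_add_ringKrullDim_quotient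
    (R : Type u) [CommRing R] [IsNoetherianRing R] [IsLocalRing R] (n : ℕ)
    (hn : ringKrullDim R = (n : WithBot ℕ∞)) (I : Ideal R)
    (hI : cohomologicalDimension I (ModuleCat.of R R) = idealHeight I) :
    Order.krullDim (PrimeSpectrum R) =
      (idealHeight I : WithBot ℕ∞) + Order.krullDim (PrimeSpectrum (R ⧸ I)) := by
  have htop : I ≠ ⊤ := by
    rintro rfl
    simp [cohomologicalDimension_top, idealHeight_top] at hI
  have : Nontrivial (R ⧸ I) := Ideal.Quotient.nontrivial_iff.2 htop
  have hle := idealHeight_add_ringKrullDim_quotient_le htop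
  refine le_antisymm ?_ hle
  change ringKrullDim R ≤ (idealHeight I : WithBot ℕ∞) + ringKrullDim (R ⧸ I)
  obtain ⟨e, he⟩ : ∃ e : ℕ∞, (e : WithBot ℕ∞) = ringKrullDim (R ⧸ I) :=
    WithBot.ne_bot_iff_exists.1 (Order.krullDim_ne_bot_iff.2 inferInstance)
  rw [hn, ← he, ← WithBot.coe_add] at hle
  have hle' : idealHeight I + e ≤ n := WithBot.coe_le_coe.1 hle
  obtain ⟨c, hc⟩ := ENat.ne_top_iff_exists.1
    (ne_top_of_le_ne_top (ENat.natCast_ne_top n) (le_self_add.trans hle'))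
  obtain ⟨d, rfl⟩ := ENat.ne_top_iff_exists.1
    (ne_top_of_le_ne_top (ENat.natCast_ne_top n) (le_add_self.trans hle'))
  have hv := vanishesAbove_of_cohomologicalDimension_le (hI.trans hc.symm).le
  rw [← hc, ← he]
  exact_mod_cast (hv.maximalIdeal htop he.ge).ringKrullDim_le
end
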